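/- arXiv:2402.18939 — 5 statements merged into one kernel-verified Lean document; each statement's English description precedes it below -/
import Mathlib

section
/- Let Q_1(x_1,…,x_5) = x_1² − (x_2² + x_3² + x_4² + x_5²)/4. For all integers y_1, …, y_5, the quantity 16·Q_1(y_1 + 1/2, y_2 + 1/2, y_3 + 1/2, y_4 + 1/2, y_5 + 1/2) is an integer divisible by 8; consequently, there are no integers y_1, …, y_5 with 0 < Q_1(y_1 + 1/2, …, y_5 + 1/2) < 1/2. (This shows that equality is required in Theorem 1 for the critical form Q_1 at c = (1/2,1/2,1/2,1/2,1/2), so Γ_{1,4} ≥ 8.) -/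
/-!
Since `(y + 1/2)² = y(y + 1) + 1/4` and `y(y + 1)` is even, a diagonal form with integer weights `w`
takes at the points of `ℤⁿ + (1/2, …, 1/2)` only values congruent to `(∑ wᵢ)/4` modulo `2`. The
weights of `4Q₁` sum to `0`, so `4Q₁` takes only even integer values there.
-/

open QuadraticMap (weightedSumSquares weightedSumSquares_apply)

section HalfIntegers

variable {ι K : Type*} [Fintype ι] [Field K]

theorem exists_intCast_add_half_sq_eq [CharZero K] (y : ℤ) :
    ∃ k : ℤ, ((y : K) + 1 / 2) ^ 2 = 2 * k + 1 / 4 := by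
  obtain ⟨k, hk⟩ := (Int.even_mul_succ_self y).two_dvd
  have hk_cast : (y : K) * (y + 1) = 2 * k := mod_cast congrArg (Int.cast : ℤ → K) hk
  exact ⟨k, by linear_combination hk_cast⟩

theorem exists_weightedSumSquares_add_half_eq [CharZero K] (w y : ι → ℤ) :
    ∃ n : ℤ, weightedSumSquares K w (fun i ↦ (y i : K) + 1 / 2) =
      2 * n + ((∑ i, w i : ℤ) : K) / 4 := by
  choose k hk using fun i ↦ exists_intCast_add_half_sq_eq (K := K) (y i)
  refine ⟨∑ i, w i * k i, ?_⟩
  calc weightedSumSquares K w (fun i ↦ (y i : K) + 1 / 2)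
      = ∑ i, (w i : K) * (2 * k i + 1 / 4) := by
        simp only [weightedSumSquares_apply, zsmul_eq_mul, ← pow_two, hk]
    _ = ∑ i, (2 * ((w i : K) * k i) + (w i : K) / 4) :=
        Finset.sum_congr rfl fun i _ ↦ by ring
    _ = 2 * ((∑ i, w i * k i : ℤ) : K) + ((∑ i, w i : ℤ) : K) / 4 := by
        push_cast
        rw [Finset.sum_add_distrib, Finset.mul_sum, Finset.sum_div]

theorem exists_weightedSumSquares_add_half_eq_two_mul [CharZero K] {w : ι → ℤ}
    (hw : 8 ∣ ∑ i, w i) (y : ι → ℤ) :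
    ∃ n : ℤ, weightedSumSquares K w (fun i ↦ (y i : K) + 1 / 2) = 2 * n := by
  obtain ⟨n, hn⟩ := exists_weightedSumSquares_add_half_eq (K := K) w y
  obtain ⟨m, hm⟩ := hw
  refine ⟨n + m, ?_⟩
  rw [hn, hm]
  push_cast
  ring

theorem two_le_weightedSumSquares_add_half [LinearOrder K] [IsStrictOrderedRing K] {w : ι → ℤ}
    (hw : 8 ∣ ∑ i, w i) {y : ι → ℤ}
    (hpos : 0 < weightedSumSquares K w (fun i ↦ (y i : K) + 1 / 2)) :
    2 ≤ weightedSumSquares K w (fun i ↦ (y i : K) + 1 / 2) := by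
  obtain ⟨n, hn⟩ := exists_weightedSumSquares_add_half_eq_two_mul (K := K) hw y
  rw [hn] at hpos ⊢
  have n_pos : (0 : K) < n := pos_of_mul_pos_right hpos zero_le_two
  have one_le_n : (1 : K) ≤ n := mod_cast n_pos
  linarith

end HalfIntegers

/-- The coefficients of the diagonal form `4Q₁`, where the factor `4` clears the denominators of the
critical form `Q₁`. -/
def criticalWeights : Fin 5 → ℤ := ![4, -1, -1, -1, -1]

theorem sum_criticalWeights : ∑ i, criticalWeights i = 0 := by
  decide

theorem weightedSumSquares_criticalWeights {R : Type*} [CommRing R] (x : Fin 5 → R) :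
    weightedSumSquares R criticalWeights x =
      4 * x 0 ^ 2 - (x 1 ^ 2 + x 2 ^ 2 + x 3 ^ 2 + x 4 ^ 2) := by
  rw [weightedSumSquares_apply, Fin.sum_univ_five]
  simp only [criticalWeights, Matrix.cons_val, zsmul_eq_mul]
  push_cast
  ring

/-- For the critical form `Q₁(x) = x₁² − (x₂²+x₃²+x₄²+x₅²)/4`, the quantity
`16·Q₁(y+1/2)` is an integer divisible by `8` for all integers `y`, and hence there
are no integers with `0 < Q₁(y+1/2) < 1/2`. -/
theorem critical_form_Q1 :
    (∀ y₁ y₂ y₃ y₄ y₅ : ℤ, ∃ n : ℤ,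
      16 * (((y₁ : ℝ) + 1/2)^2 -
        (((y₂ : ℝ) + 1/2)^2 + ((y₃ : ℝ) + 1/2)^2 + ((y₄ : ℝ) + 1/2)^2 + ((y₅ : ℝ) + 1/2)^2) / 4)
        = 8 * (n : ℝ)) ∧
    ¬ ∃ y₁ y₂ y₃ y₄ y₅ : ℤ,
      0 < ((y₁ : ℝ) + 1/2)^2 -
        (((y₂ : ℝ) + 1/2)^2 + ((y₃ : ℝ) + 1/2)^2 + ((y₄ : ℝ) + 1/2)^2 + ((y₅ : ℝ) + 1/2)^2) / 4 ∧
      ((y₁ : ℝ) + 1/2)^2 -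
        (((y₂ : ℝ) + 1/2)^2 + ((y₃ : ℝ) + 1/2)^2 + ((y₄ : ℝ) + 1/2)^2 + ((y₅ : ℝ) + 1/2)^2) / 4
        < 1/2 := by
  have eight_dvd_sum : 8 ∣ ∑ i, criticalWeights i := sum_criticalWeights ▸ dvd_zero 8
  have value_eq (y₁ y₂ y₃ y₄ y₅ : ℤ) :
      weightedSumSquares ℝ criticalWeights (fun i ↦ (![y₁, y₂, y₃, y₄, y₅] i : ℝ) + 1 / 2) =
        4 * ((y₁ : ℝ) + 1 / 2) ^ 2 - (((y₂ : ℝ) + 1 / 2) ^ 2 + ((y₃ : ℝ) + 1 / 2) ^ 2 +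
          ((y₄ : ℝ) + 1 / 2) ^ 2 + ((y₅ : ℝ) + 1 / 2) ^ 2) :=
    weightedSumSquares_criticalWeights _
  constructor
  · intro y₁ y₂ y₃ y₄ y₅
    obtain ⟨n, hn⟩ := exists_weightedSumSquares_add_half_eq_two_mul (K := ℝ) eight_dvd_sum
      ![y₁, y₂, y₃, y₄, y₅]
    exact ⟨n, by linear_combination 4 * hn - 4 * value_eq y₁ y₂ y₃ y₄ y₅⟩
  · rintro ⟨y₁, y₂, y₃, y₄, y₅, hpos, hlt⟩
    have value_eq_y := value_eq y₁ y₂ y₃ y₄ y₅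
    have two_le := two_le_weightedSumSquares_add_half (K := ℝ) eight_dvd_sum
      (y := ![y₁, y₂, y₃, y₄, y₅]) (by linarith)
    linarith
end

section
/- Theorem 3 (solubility part): Let Q(x_1,…,x_5) = (x_1 + a_2x_2 + a_3x_3 + a_4x_4 + a_5x_5)·x_2 − (1/2)x_3² − A(x_4 + λx_5)² − t·x_5², where A, t > 0, 0 ≤ λ ≤ 1/2, A ≤ t + Aλ², −1/2 < a_i ≤ 1/2, the minimum of φ(x_3,x_4,x_5) = (1/2)x_3² + A(x_4 + λx_5)² + t·x_5² over nonzero integer triples equals 1/2, and d := (A·t)^{1/5} satisfies d ≤ 1. Suppose the real numbers c_1, …, c_5 satisfy c_2 ∈ ℤ and either (a_3 = 0 and c_3 − 1/2 ∈ ℤ) or (a_3 = 1/2 and c_3 ∈ ℤ). Then there exist x_1, …, x_5 with x_i − c_i ∈ ℤ for every i such that 0 < Q(x_1,…,x_5) ≤ d. -/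
/-!
Suppose the inequality is insoluble. On the slice `x₂ = k` the values of `Q` form a union of
progressions modulo `k`, all of which miss `(0, d]`. For `k = ±1` this confines the fractional parts
of a quadratic sequence to a short interval; their second difference is then constant and bounded,
hence zero, which forces `2 φ` to have integral coefficients, `2 a₄` and `2 a₅` to be integers and
leaves finitely many classes for `c₄, c₅`. Moreover `d < 1`, so reduction theory leaves only the
diagonal forms `x₃² + x₄² + r x₅²` with `r ≤ 3` and the form `x₃² + 2 (x₄² + x₄ x₅ + x₅²)`.
For `k = 2` the values modulo `1 / 2` are all missed only if one class modulo `4` is omitted by an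
explicit quadratic polynomial, and this makes the `aᵢ` integral, with one exception. In the
surviving cases the slice `x₂ = k` is a single class modulo `1`; the classes for `k = ±1, ±2, 3, 4`
satisfy linear relations which their fractional parts, all below `1 - d`, cannot fulfil.
-/

/-- The progression `w + mℤ` avoids the interval `(0, d]`. -/
def AvoidsIoc (d m w : ℝ) : Prop :=
  ∀ n : ℤ, w + n * m ∉ Set.Ioc 0 d

theorem not_avoidsIoc_of_le {d m : ℝ} (hm : 0 < m) (hmd : m ≤ d) (w : ℝ) : ¬AvoidsIoc d m w := by
  obtain ⟨n, ⟨hpos, hle⟩, -⟩ := existsUnique_add_zsmul_mem_Ioc hm w 0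
  rw [zsmul_eq_mul] at hpos hle
  exact fun h => h n ⟨hpos, by linarith⟩

theorem AvoidsIoc.fract_neg_lt {d w : ℝ} (h : AvoidsIoc d 1 w) : Int.fract (-w) < 1 - d := by
  by_contra! hge
  have hfract := Int.floor_add_fract (-w)
  refine h (⌊-w⌋ + 1) ⟨?_, ?_⟩ <;> push_cast
  · linarith [Int.fract_lt_one (-w)]
  · linarith

theorem eq_zero_of_abs_le_of_succ_eq_add {s : ℕ → ℝ} {δ B : ℝ} (hs : ∀ n, s (n + 1) = s n + δ)
    (hB : ∀ n, |s n| ≤ B) : δ = 0 := by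
  have hlin (n : ℕ) : n * δ = s n - s 0 := by
    induction n with
    | zero => simp
    | succ n ih => rw [hs]; push_cast; linarith
  by_contra hδ
  obtain ⟨n, hn⟩ := exists_nat_gt (2 * B / |δ|)
  rw [div_lt_iff₀ (abs_pos.mpr hδ)] at hn
  have hle : n * |δ| ≤ |s n| + |s 0| := by
    rw [← Nat.abs_cast n, ← abs_mul, hlin]
    exact abs_sub _ _
  linarith [hB n, hB 0]

theorem eq_zero_and_eq_of_abs_le_of_second_difference {e : ℕ → ℝ} {κ B : ℝ}
    (he : ∀ n, e (n + 2) - 2 * e (n + 1) + e n = κ) (hB : ∀ n, |e n| ≤ B) :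
    κ = 0 ∧ e 1 = e 0 := by
  have hκ : κ = 0 :=
    eq_zero_of_abs_le_of_succ_eq_add (s := fun n => e (n + 1) - e n) (B := B + B)
      (fun n => by linarith [he n])
      (fun n => (abs_sub _ _).trans (add_le_add (hB _) (hB _)))
  have hstep (n : ℕ) : e (n + 1) = e n + (e 1 - e 0) := by
    induction n with
    | zero => simp
    | succ n ih => linarith [he n]
  exact ⟨hκ, sub_eq_zero.mp (eq_zero_of_abs_le_of_succ_eq_add hstep hB)⟩

-- The closeness of `m` to `z` leaves only one possible value for the second difference of the
-- integer parts, so the fractional parts have a constant second difference.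
theorem eq_int_of_avoidsIoc_quadratic {d m b w : ℝ} {z : ℤ} (hz : |m - z| ≤ 2 * d - 1)
    (h : ∀ n : ℕ, AvoidsIoc d 1 (w + b * n + m / 2 * n ^ 2)) :
    m = z ∧ ∃ j : ℤ, b + m / 2 = j := by
  set y : ℕ → ℝ := fun n => w + b * n + m / 2 * n ^ 2 with hy
  set e : ℕ → ℝ := fun n => Int.fract (-y n) with he
  have hy_eq (n : ℕ) : y n = -⌊-y n⌋ - e n := by linarith [Int.floor_add_fract (-y n)]
  have he_nonneg (n : ℕ) : 0 ≤ e n := Int.fract_nonneg _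
  have he_lt (n : ℕ) : e n < 1 - d := (h n).fract_neg_lt
  have hy_second (n : ℕ) : y (n + 2) - 2 * y (n + 1) + y n = m := by
    simp only [hy]; push_cast; ring
  have hfloor (n : ℕ) : -⌊-y (n + 2)⌋ + 2 * ⌊-y (n + 1)⌋ - ⌊-y n⌋ = z := by
    rw [← sub_eq_zero, ← Int.abs_lt_one_iff, ← Int.cast_lt (R := ℝ), Int.cast_abs]
    push_cast
    rw [abs_le] at hz
    rw [abs_lt]
    constructor <;>
      linarith [hy_second n, hy_eq n, hy_eq (n + 1), hy_eq (n + 2), he_nonneg n,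
        he_nonneg (n + 1), he_nonneg (n + 2), he_lt n, he_lt (n + 1), he_lt (n + 2)]
  have he_second (n : ℕ) : e (n + 2) - 2 * e (n + 1) + e n = z - m := by
    rw [← hfloor n]
    push_cast
    linarith [hy_second n, hy_eq n, hy_eq (n + 1), hy_eq (n + 2)]
  obtain ⟨hzm, he_const⟩ := eq_zero_and_eq_of_abs_le_of_second_difference he_second (B := 1 - d)
    (fun n => by rw [abs_of_nonneg (he_nonneg n)]; exact (he_lt n).le)
  refine ⟨by linarith, -⌊-y 1⌋ + ⌊-y 0⌋, ?_⟩
  have hy_first : y 1 - y 0 = b + m / 2 := by simp only [hy]; push_cast; ring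
  push_cast
  linarith [hy_eq 0, hy_eq 1]

/-! ### Slices -/

/-- On the slice `x₂ = k` the form takes, over the admissible `x₁`, the values
`k² u + k (C + α v) - φ v + kℤ`, where `v` indexes the admissible `(x₃, x₄, x₅)`. This predicate
says that none of these values lies in `(0, d]`. -/
def AvoidsSlices {ι : Type*} (d u C : ℝ) (α φ : ι → ℝ) : Prop :=
  ∀ (k : ℤ) (v : ι), AvoidsIoc d k (k ^ 2 * u + k * (C + α v) - φ v)

/-- The residue class modulo one of the slice `x₂ = k`, when the quadratic part has class `q`
and the linear part is integral. -/
def sliceLevel (u C q : ℝ) (k : ℤ) : ℝ :=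
  k ^ 2 * u + k * C - q

namespace AvoidsSlices

variable {ι : Type*} {d u C : ℝ} {α φ : ι → ℝ}

theorem avoidsIoc (h : AvoidsSlices d u C α φ) (k : ℤ) {m s : ℝ}
    (hv : ∀ i : ℤ, ∃ v, ∃ j : ℤ, k * α v - φ v + j * k = s + i * m) :
    AvoidsIoc d m (k ^ 2 * u + k * C + s) := by
  intro i
  obtain ⟨v, j, hij⟩ := hv i
  rw [show k ^ 2 * u + k * C + s + i * m = k ^ 2 * u + k * (C + α v) - φ v + j * k by
    linear_combination -hij]
  exact h k v j

theorem avoidsIoc_sliceLevel (h : AvoidsSlices d u C α φ) (k : ℤ) {q : ℝ}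
    (hv : ∀ i : ℤ, ∃ v, ∃ j : ℤ, k * α v - φ v + j * k = -q + i) :
    AvoidsIoc d 1 (sliceLevel u C q k) := by
  rw [sliceLevel, sub_eq_add_neg]
  exact h.avoidsIoc k (by simpa only [mul_one] using hv)

theorem avoidsIoc_sliceLevel_of_isUnit (h : AvoidsSlices d u C α φ) {k : ℤ} (hk : IsUnit k)
    (v : ι) : AvoidsIoc d 1 (sliceLevel u C (φ v - k * α v) k) := by
  refine h.avoidsIoc_sliceLevel k fun i => ⟨v, i * k, ?_⟩
  have hkk : (k : ℝ) * k = 1 := mod_cast Int.isUnit_mul_self hk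
  push_cast
  linear_combination (i : ℝ) * hkk

theorem lt_one [Nonempty ι] (h : AvoidsSlices d u C α φ) : d < 1 := by
  by_contra! hd
  exact not_avoidsIoc_of_le one_pos hd _
    (h.avoidsIoc_sliceLevel_of_isUnit isUnit_one (Classical.arbitrary ι))

theorem congr_int {α' : ι → ℝ} (h : AvoidsSlices d u C α φ)
    (hα : ∀ v, ∃ j : ℤ, α v = α' v + j) : AvoidsSlices d u C α' φ := by
  intro k v n
  obtain ⟨j, hj⟩ := hα v
  have hnj := h k v (n - j)
  rw [hj] at hnj
  convert hnj using 2
  push_cast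
  ring

theorem integral_of_line (h : AvoidsSlices d u C α φ) (v : ℕ → ι) {a b m : ℝ} {z : ℤ}
    (hα : ∀ n, α (v n) = α (v 0) + a * n)
    (hφ : ∀ n, φ (v n) = φ (v 0) + b * n + m / 2 * n ^ 2) (hz : |m - z| ≤ 2 * d - 1) :
    m = z ∧ (∃ j : ℤ, a - b - m / 2 = j) ∧ ∃ j : ℤ, 2 * a = j := by
  have hz' : |-m - ((-z : ℤ) : ℝ)| ≤ 2 * d - 1 := by
    rwa [Int.cast_neg, neg_sub_neg, abs_sub_comm]
  have hline {k : ℤ} (hk : IsUnit k) : -m = ((-z : ℤ) : ℝ) ∧ ∃ j : ℤ, k * a - b + -m / 2 = j := by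
    refine eq_int_of_avoidsIoc_quadratic
      (w := k ^ 2 * u + k * C + k * α (v 0) - φ (v 0)) hz' fun n => ?_
    have hn := h.avoidsIoc_sliceLevel_of_isUnit hk (v n)
    rw [sliceLevel, hα n, hφ n] at hn
    convert hn using 1
    linarith
  obtain ⟨hm, j, hj⟩ := hline isUnit_one
  obtain ⟨-, j', hj'⟩ := hline isUnit_one.neg
  push_cast at hm hj hj'
  exact ⟨by linarith, ⟨j, by linarith⟩, j - j', by push_cast; linarith⟩

-- For `k = 2` the values are spaced by `1 / 2`, and all four classes modulo `2` cannot be missed.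
theorem exists_residue_ne (h : AvoidsSlices d u C α φ) (hd : 1 / 2 ≤ d) {s : ℝ} {G : ι → ℤ}
    (hG : ∀ v, 2 * (2 * α v - φ v) = s + G v) : ∃ i : ZMod 4, ∀ v, (G v : ZMod 4) ≠ i := by
  by_contra! hsurj
  refine not_avoidsIoc_of_le one_half_pos hd _
    (h.avoidsIoc 2 (m := 1 / 2) (s := s / 2) fun i => ?_)
  obtain ⟨v, hv⟩ := hsurj i
  obtain ⟨j, hj⟩ := (ZMod.intCast_eq_intCast_iff_dvd_sub _ _ 4).mp hv
  refine ⟨v, j, ?_⟩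
  have hj' : (i : ℝ) - G v = 4 * j := mod_cast hj
  push_cast
  linear_combination hG v / 2 - hj' / 2

end AvoidsSlices

theorem exists_triangular_eq_add_four_mul (i : ℤ) : ∃ n j : ℤ, n * (n + 1) = 2 * (i + 4 * j) := by
  obtain ⟨j, hj⟩ : ∃ j, i = 4 * j ∨ i = 4 * j + 1 ∨ i = 4 * j + 2 ∨ i = 4 * j + 3 :=
    ⟨i / 4, by omega⟩
  rcases hj with rfl | rfl | rfl | rfl
  exacts [⟨0, -j, by ring⟩, ⟨1, -j, by ring⟩, ⟨3, 1 - j, by ring⟩, ⟨2, -j, by ring⟩]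

theorem exists_triangular_add_triangular_eq_add_three_mul (i : ℤ) :
    ∃ n m j : ℤ, n * (n + 1) + m * (m + 1) = 2 * (i + 3 * j) := by
  obtain ⟨j, hj⟩ : ∃ j, i = 3 * j ∨ i = 3 * j + 1 ∨ i = 3 * j + 2 := ⟨i / 3, by omega⟩
  rcases hj with rfl | rfl | rfl
  exacts [⟨0, 0, -j, by ring⟩, ⟨1, 0, -j, by ring⟩, ⟨1, 1, -j, by ring⟩]

-- Triangular numbers represent every residue class modulo `4`.
theorem AvoidsSlices.avoidsIoc_sliceLevel_of_triangular {ι : Type*} {d u C q : ℝ} {φ : ι → ℝ}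
    (h : AvoidsSlices d u C 0 φ) {v : ℤ → ι} (hv : ∀ n : ℤ, φ (v n) = q + n * (n + 1) / 2)
    {k : ℤ} (hk : k ∣ 4) : AvoidsIoc d 1 (sliceLevel u C q k) := by
  refine h.avoidsIoc_sliceLevel k fun i => ?_
  obtain ⟨t, ht⟩ := hk
  obtain ⟨n, j, hn⟩ := exists_triangular_eq_add_four_mul (-i)
  refine ⟨v n, t * j, ?_⟩
  have hn' : (n : ℝ) * (n + 1) = 2 * (-i + 4 * j) := mod_cast hn
  have ht' : (4 : ℝ) = k * t := mod_cast ht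
  rw [hv, Pi.zero_apply]
  push_cast
  linear_combination -hn' / 2 - j * ht'

/-! ### Fractional parts on different slices -/

theorem sliceLevel_eq (u C q : ℝ) (k : ℤ) :
    sliceLevel u C q k = k * (k + 1) / 2 * sliceLevel u C q 1 +
      k * (k - 1) / 2 * sliceLevel u C q (-1) + (k ^ 2 - 1) * q := by
  simp only [sliceLevel]
  push_cast
  ring

theorem exists_int_fract_sliceLevel (u C q : ℝ) (k : ℤ) :
    ∃ Z : ℤ, k * (k + 1) / 2 * Int.fract (-sliceLevel u C q 1) +
      k * (k - 1) / 2 * Int.fract (-sliceLevel u C q (-1)) - Int.fract (-sliceLevel u C q k) =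
      (k ^ 2 - 1) * q - Z := by
  obtain ⟨i, hi⟩ := Int.even_mul_succ_self k
  have hi' : (k : ℝ) * (k + 1) = i + i := mod_cast hi
  refine ⟨i * ⌊-sliceLevel u C q 1⌋ + (i - k) * ⌊-sliceLevel u C q (-1)⌋ -
    ⌊-sliceLevel u C q k⌋, ?_⟩
  push_cast
  linear_combination sliceLevel_eq u C q k +
    k * (k + 1) / 2 * Int.floor_add_fract (-sliceLevel u C q 1) +
    k * (k - 1) / 2 * Int.floor_add_fract (-sliceLevel u C q (-1)) -
    Int.floor_add_fract (-sliceLevel u C q k) -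
    (⌊-sliceLevel u C q 1⌋ + ⌊-sliceLevel u C q (-1)⌋ : ℝ) / 2 * hi'

theorem not_forall_avoidsIoc_of_three_mul_mem_Icc {d u C q : ℝ} (M : ℤ)
    (hM : 3 * q ∈ Set.Icc (M + 4 * (1 - d)) (M + d)) :
    ¬∀ k ∈ ({1, -1, 2} : Set ℤ), AvoidsIoc d 1 (sliceLevel u C q k) := by
  intro h
  have h₁ := (h 1 (by simp)).fract_neg_lt
  have h_neg_one := (h (-1) (by simp)).fract_neg_lt
  have h₂ := (h 2 (by simp)).fract_neg_lt
  have hpos (k : ℤ) := Int.fract_nonneg (-sliceLevel u C q k)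
  obtain ⟨Z, hZ⟩ := exists_int_fract_sliceLevel u C q 2
  norm_num at hZ
  have hMZ : M < Z := by
    rify
    linarith [hM.1, hpos 2]
  have hZM : Z < M + 1 := by
    rify
    linarith [hM.2, hpos 1, hpos (-1)]
  omega

-- The lower bounds on `d` are rounded values of `(1 / 4) ^ (1 / 5)` here and of `(1 / 2) ^ (1 / 5)`
-- in the next lemma.
theorem not_forall_avoidsIoc_three_eighths {d u C : ℝ} (hd : 0.757 < d) :
    ¬∀ k ∈ ({1, -1, 2, 3} : Set ℤ), AvoidsIoc d 1 (sliceLevel u C (3 / 8) k) := by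
  intro h
  have h₁ := (h 1 (by simp)).fract_neg_lt
  have h_neg_one := (h (-1) (by simp)).fract_neg_lt
  have h₂ := (h 2 (by simp)).fract_neg_lt
  have h₃ := (h 3 (by simp)).fract_neg_lt
  have hpos (k : ℤ) := Int.fract_nonneg (-sliceLevel u C (3 / 8) k)
  obtain ⟨Z, hZ⟩ := exists_int_fract_sliceLevel u C (3 / 8) 2
  obtain ⟨Z', hZ'⟩ := exists_int_fract_sliceLevel u C (3 / 8) 3
  norm_num at hZ hZ'
  have hZ_eq : Z = 1 := by
    have hZ_lt : Z < 2 := by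
      rify
      linarith [hpos 1, hpos (-1)]
    have hZ_pos : 0 < Z := by
      rify
      linarith [hpos 2]
    omega
  subst hZ_eq
  have hZ'_lt : Z' < 3 := by
    rify
    push_cast at hZ
    linarith [hpos 2, hpos (-1)]
  have hZ'_gt : 2 < Z' := by
    rify
    push_cast at hZ
    linarith [hpos 3]
  omega

theorem not_forall_avoidsIoc_one_half {d u C : ℝ} (hd : 0.87 < d) :
    ¬∀ k ∈ ({1, -1, 2, -2, 4} : Set ℤ), AvoidsIoc d 1 (sliceLevel u C (1 / 2) k) := by
  intro h
  have h₁ := (h 1 (by simp)).fract_neg_lt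
  have h_neg_one := (h (-1) (by simp)).fract_neg_lt
  have h₂ := (h 2 (by simp)).fract_neg_lt
  have h_neg_two := (h (-2) (by simp)).fract_neg_lt
  have h₄ := (h 4 (by simp)).fract_neg_lt
  have hpos (k : ℤ) := Int.fract_nonneg (-sliceLevel u C (1 / 2) k)
  obtain ⟨Z, hZ⟩ := exists_int_fract_sliceLevel u C (1 / 2) 2
  obtain ⟨Z', hZ'⟩ := exists_int_fract_sliceLevel u C (1 / 2) (-2)
  obtain ⟨Z'', hZ''⟩ := exists_int_fract_sliceLevel u C (1 / 2) 4
  norm_num at hZ hZ' hZ''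
  have hZ_eq : Z = 1 := by
    have hZ_lt : Z < 2 := by
      rify
      linarith [hpos 1, hpos (-1)]
    have hZ_pos : 0 < Z := by
      rify
      linarith [hpos 2]
    omega
  have hZ'_eq : Z' = 1 := by
    have hZ'_lt : Z' < 2 := by
      rify
      linarith [hpos 1, hpos (-1)]
    have hZ'_pos : 0 < Z' := by
      rify
      linarith [hpos (-2)]
    omega
  subst hZ_eq hZ'_eq
  push_cast at hZ hZ'
  have hZ''_lt : Z'' < 6 := by
    rify
    linarith [hpos 2, hpos (-2)]
  have hZ''_gt : 5 < Z'' := by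
    rify
    linarith [hpos 4]
  omega

/-- The contribution `(b + m) n - m n²` of one coordinate to `2 (2 α - φ)`, which is read modulo `4`
on the slice `x₂ = 2`. The ring is arbitrary because both `ℤ` and `ZMod 4` are needed. -/
def lineResidue {R : Type*} [CommRing R] (m b n : R) : R :=
  b * n + m * (n - n ^ 2)

-- For odd `m`, an odd `b` contributes the residues `0, b` and an even `b` the residues `0, 2`.
theorem diagonal_of_lineResidue_ne : ∀ m b₃ b₄ b₅ i : ZMod 4,
    (∀ n₃ n₄ n₅, lineResidue 1 b₃ n₃ + lineResidue 1 b₄ n₄ + lineResidue m b₅ n₅ ≠ i) →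
      2 * b₃ = 0 ∧ 2 * b₄ = 0 ∧ 2 * b₅ = 0 ∨ 2 * b₃ = 2 ∧ 2 * b₄ = 2 ∧ 2 * m = 0 ∧ b₅ = 0 := by
  unfold lineResidue
  decide +kernel

theorem hexagonal_of_lineResidue_ne : ∀ b₃ b₄ b₅ i : ZMod 4,
    (∀ n₃ n₄ n₅, lineResidue 1 b₃ n₃ + lineResidue 2 b₄ n₄ + lineResidue 2 b₅ n₅ -
      2 * n₄ * n₅ ≠ i) → 2 * b₃ = 0 ∧ 2 * b₄ = 0 ∧ 2 * b₅ = 0 := by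
  unfold lineResidue
  decide +kernel

/-! ### Shifted ternary forms -/

/-- The linear part `a₃ n₃ + a₄ n₄ + a₅ n₅` of the coefficient of `x₂`. -/
def linearPart (a₃ a₄ a₅ : ℝ) (n : ℤ × ℤ × ℤ) : ℝ :=
  a₃ * n.1 + a₄ * n.2.1 + a₅ * n.2.2

/-- The values of `(x₃² + p x₄² + 2 l x₄ x₅ + r x₅²) / 2` on the coset `(c₃, c₄, c₅) + ℤ³`. -/
noncomputable def shiftedForm (p l r c₃ c₄ c₅ : ℝ) (n : ℤ × ℤ × ℤ) : ℝ :=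
  ((c₃ + n.1) ^ 2 + p * (c₄ + n.2.1) ^ 2 + 2 * l * (c₄ + n.2.1) * (c₅ + n.2.2) +
    r * (c₅ + n.2.2) ^ 2) / 2

/-- The binary form `p x² + 2 l x y + r y²` is reduced in the sense of Gauss, with nonnegative
middle coefficient and minimum `p` at least `1`. -/
structure IsGaussReduced {R : Type*} [CommRing R] [LinearOrder R] (p l r : R) : Prop where
  one_le : 1 ≤ p
  le : p ≤ r
  nonneg : 0 ≤ l
  two_mul_le : 2 * l ≤ p

namespace IsGaussReduced

theorem sub_one_quarter_le {p l r : ℝ} (h : IsGaussReduced p l r) : r - 1 / 4 ≤ p * r - l ^ 2 := by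
  obtain ⟨hp, hpr, hl, hlp⟩ := h
  nlinarith [mul_nonneg (sub_nonneg.mpr hp) (by linarith : 0 ≤ 4 * r - p - 1)]

theorem eq_of_mul_sub_sq_lt_four {p l r : ℤ} (h : IsGaussReduced p l r) (hlt : p * r - l ^ 2 < 4) :
    p = 1 ∧ l = 0 ∧ 1 ≤ r ∧ r ≤ 3 ∨ p = 2 ∧ l = 1 ∧ r = 2 := by
  obtain ⟨hp, hpr, hl, hlp⟩ := h
  have hp2 : p ≤ 2 := by nlinarith
  interval_cases p
  · obtain rfl : l = 0 := by omega
    omega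
  · have hl1 : l ≤ 1 := by omega
    interval_cases l <;> omega

end IsGaussReduced

theorem exists_int_abs_sub_le {d x : ℝ} (hd : 1 / 2 ≤ d) (hx : 1 ≤ x)
    (hxd : x - 1 / 4 ≤ 4 * d ^ 5) :
    ∃ z : ℤ, |x - z| ≤ 2 * d - 1 := by
  rcases le_total (3 / 4) d with hd' | hd'
  · exact ⟨round x, (abs_sub_round x).trans (by linarith)⟩
  · have hpow : d ^ 4 ≤ (3 / 4) ^ 4 := pow_le_pow_left₀ (by linarith) hd' 4
    have hd_lower : 2 / 3 < d := (by decide : Odd 5).pow_lt_pow.mp (by linarith)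
    refine ⟨1, ?_⟩
    rw [Int.cast_one, abs_of_nonneg (by linarith)]
    nlinarith [mul_le_mul_of_nonneg_left hpow (by linarith : 0 ≤ d)]

namespace AvoidsSlices

variable {d u C a₃ a₄ a₅ p l r c₃ c₄ c₅ : ℝ}

theorem exists_avoidsSlices_of_congr {a₃' a₄' a₅' c₃' c₄' c₅' : ℝ}
    (h : AvoidsSlices d u C (linearPart a₃ a₄ a₅) (shiftedForm p l r c₃ c₄ c₅))
    (ha₃ : ∃ g : ℤ, a₃ = a₃' + g) (ha₄ : ∃ g : ℤ, a₄ = a₄' + g) (ha₅ : ∃ g : ℤ, a₅ = a₅' + g)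
    (hc₃ : ∃ m : ℤ, c₃ = c₃' + m) (hc₄ : ∃ m : ℤ, c₄ = c₄' + m) (hc₅ : ∃ m : ℤ, c₅ = c₅' + m) :
    ∃ C', AvoidsSlices d u C' (linearPart a₃' a₄' a₅') (shiftedForm p l r c₃' c₄' c₅') := by
  obtain ⟨⟨g₃, rfl⟩, ⟨g₄, rfl⟩, ⟨g₅, rfl⟩⟩ := ha₃, ha₄, ha₅
  obtain ⟨⟨m₃, rfl⟩, ⟨m₄, rfl⟩, ⟨m₅, rfl⟩⟩ := hc₃, hc₄, hc₅
  refine ⟨C - (a₃' * m₃ + a₄' * m₄ + a₅' * m₅), fun k n j => ?_⟩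
  have hn := h k (n.1 - m₃, n.2.1 - m₄, n.2.2 - m₅)
    (j - (g₃ * (n.1 - m₃) + g₄ * (n.2.1 - m₄) + g₅ * (n.2.2 - m₅)))
  simp only [linearPart, shiftedForm] at hn ⊢
  push_cast at hn
  convert hn using 2
  ring

theorem exists_int_coefficients
    (h : AvoidsSlices d u C (linearPart a₃ a₄ a₅) (shiftedForm p l r c₃ c₄ c₅)) {z z' : ℤ}
    (hz : |p - z| ≤ 2 * d - 1) (hz' : |r - z'| ≤ 2 * d - 1) :
    p = z ∧ r = z' ∧ (∃ j : ℤ, l = j) ∧ (∃ j : ℤ, 2 * a₄ = j) ∧ (∃ j : ℤ, 2 * a₅ = j) ∧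
      (∃ j : ℤ, a₄ - (p * c₄ + l * c₅) - p / 2 = j) ∧
      ∃ j : ℤ, a₅ - (l * c₄ + r * c₅) - r / 2 = j := by
  obtain ⟨hp, ⟨j₀, hj₀⟩, ha₄⟩ := h.integral_of_line (fun n : ℕ => (0, (n : ℤ), 0)) (a := a₄)
    (b := p * c₄ + l * c₅) (by simp [linearPart])
    (fun n => by simp only [shiftedForm]; push_cast; ring) hz
  obtain ⟨-, ⟨j₁, hj₁⟩, -⟩ := h.integral_of_line (fun n : ℕ => (0, (n : ℤ), 1)) (a := a₄)
    (b := p * c₄ + l * (c₅ + 1)) (fun n => by simp only [linearPart]; push_cast; ring)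
    (fun n => by simp only [shiftedForm]; push_cast; ring) hz
  obtain ⟨hr, hj₂, ha₅⟩ := h.integral_of_line (fun n : ℕ => (0, 0, (n : ℤ))) (a := a₅)
    (b := l * c₄ + r * c₅) (by simp [linearPart])
    (fun n => by simp only [shiftedForm]; push_cast; ring) hz'
  exact ⟨hp, hr, ⟨j₀ - j₁, by push_cast; linarith⟩, ha₄, ha₅, ⟨j₀, hj₀⟩, hj₂⟩

theorem exists_lineResidue_ne {p l r h₃ h₄ h₅ z₄ z₅ : ℤ}
    (h : AvoidsSlices d u C (linearPart (h₃ / 2) (h₄ / 2) (h₅ / 2))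
      (shiftedForm p l r ((h₃ - 1) / 2) c₄ c₅)) (hd : 1 / 2 ≤ d)
    (hc₄ : p * c₄ + l * c₅ = (h₄ - p) / 2 + z₄) (hc₅ : l * c₄ + r * c₅ = (h₅ - r) / 2 + z₅) :
    ∃ i : ZMod 4, ∀ n₃ n₄ n₅, lineResidue 1 (h₃ : ZMod 4) n₃ +
      lineResidue (p : ZMod 4) ((h₄ - 2 * z₄ : ℤ) : ZMod 4) n₄ +
      lineResidue (r : ZMod 4) ((h₅ - 2 * z₅ : ℤ) : ZMod 4) n₅ - 2 * l * n₄ * n₅ ≠ i := by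
  obtain ⟨i, hi⟩ := h.exists_residue_ne hd
    (s := -2 * shiftedForm p l r ((h₃ - 1) / 2) c₄ c₅ 0)
    (G := fun n => lineResidue 1 h₃ n.1 + lineResidue p (h₄ - 2 * z₄) n.2.1 +
      lineResidue r (h₅ - 2 * z₅) n.2.2 - 2 * l * n.2.1 * n.2.2) fun n => by
    simp only [linearPart, shiftedForm, lineResidue, Prod.fst_zero, Prod.snd_zero]
    push_cast
    linear_combination -2 * n.2.1 * hc₄ - 2 * n.2.2 * hc₅
  refine ⟨i, fun n₃ n₄ n₅ => ?_⟩
  obtain ⟨m₃, rfl⟩ := ZMod.intCast_surjective n₃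
  obtain ⟨m₄, rfl⟩ := ZMod.intCast_surjective n₄
  obtain ⟨m₅, rfl⟩ := ZMod.intCast_surjective n₅
  have hm := hi (m₃, m₄, m₅)
  simp only [lineResidue] at hm ⊢
  push_cast at hm ⊢
  exact hm

end AvoidsSlices

/-! ### The remaining forms -/

theorem linearPart_zero : linearPart 0 0 0 = 0 := by
  ext n
  simp [linearPart]

namespace AvoidsSlices

variable {d u C p l r c₄ c₅ : ℝ}

theorem avoidsIoc_sliceLevel_shiftedForm
    (h : AvoidsSlices d u C (linearPart 0 0 0) (shiftedForm p l r (1 / 2) c₄ c₅)) {k : ℤ}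
    (hk : k ∣ 4) : AvoidsIoc d 1 (sliceLevel u C (shiftedForm p l r (1 / 2) c₄ c₅ 0) k) := by
  rw [linearPart_zero] at h
  refine h.avoidsIoc_sliceLevel_of_triangular (v := fun n => (n, 0, 0)) (fun n => ?_) hk
  simp only [shiftedForm, Prod.fst_zero, Prod.snd_zero]
  push_cast
  ring

theorem three_mul_notMem_Icc {q : ℝ}
    (h : AvoidsSlices d u C (linearPart 0 0 0) (shiftedForm p l r (1 / 2) c₄ c₅))
    (hq : shiftedForm p l r (1 / 2) c₄ c₅ 0 = q) (M : ℤ) :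
    3 * q ∉ Set.Icc (M + 4 * (1 - d)) (M + d) := by
  subst hq
  intro hM
  refine not_forall_avoidsIoc_of_three_mul_mem_Icc (u := u) (C := C) M hM ?_
  rintro k (rfl | rfl | rfl) <;> exact h.avoidsIoc_sliceLevel_shiftedForm (by norm_num)

theorem avoidsIoc_sliceLevel_three
    (h : AvoidsSlices d u C (linearPart 0 0 0) (shiftedForm 1 0 r (1 / 2) (1 / 2) c₅)) :
    AvoidsIoc d 1 (sliceLevel u C (shiftedForm 1 0 r (1 / 2) (1 / 2) c₅ 0) 3) := by
  refine h.avoidsIoc_sliceLevel 3 fun i => ?_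
  obtain ⟨n, m, j, hnm⟩ := exists_triangular_add_triangular_eq_add_three_mul (-i)
  refine ⟨(n, m, 0), j, ?_⟩
  have hnm' : (n : ℝ) * (n + 1) + m * (m + 1) = 2 * (-i + 3 * j) := mod_cast hnm
  rw [linearPart_zero]
  simp only [shiftedForm, Pi.zero_apply, Prod.fst_zero, Prod.snd_zero]
  push_cast
  linear_combination -hnm' / 2

end AvoidsSlices

section

variable {d u C : ℝ}

theorem not_avoidsSlices_diagonal_one (hd : 4 * d ^ 5 = 1) :
    ¬AvoidsSlices d u C (linearPart 0 0 0) (shiftedForm 1 0 1 (1 / 2) (1 / 2) (1 / 2)) := by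
  intro h
  have hd_lower : 0.757 < d := (by decide : Odd 5).pow_lt_pow.mp (by linarith)
  have hq : shiftedForm 1 0 1 (1 / 2) (1 / 2) (1 / 2) 0 = 3 / 8 := by norm_num [shiftedForm]
  refine not_forall_avoidsIoc_three_eighths (u := u) (C := C) hd_lower ?_
  rw [← hq]
  rintro k (rfl | rfl | rfl | rfl)
  exacts [h.avoidsIoc_sliceLevel_shiftedForm (by norm_num),
    h.avoidsIoc_sliceLevel_shiftedForm (by norm_num),
    h.avoidsIoc_sliceLevel_shiftedForm (by norm_num), h.avoidsIoc_sliceLevel_three]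

theorem not_avoidsSlices_diagonal_two (hd : 4 * d ^ 5 = 2) {c₅ : ℝ} (hc₅ : c₅ = 1 / 2 ∨ c₅ = 0) :
    ¬AvoidsSlices d u C (linearPart 0 0 0) (shiftedForm 1 0 2 (1 / 2) (1 / 2) c₅) := by
  intro h
  have hd_lower : 0.87 < d := (by decide : Odd 5).pow_lt_pow.mp (by linarith)
  rcases hc₅ with rfl | rfl
  · have hq : shiftedForm 1 0 2 (1 / 2) (1 / 2) (1 / 2) 0 = 1 / 2 := by norm_num [shiftedForm]
    refine not_forall_avoidsIoc_one_half (u := u) (C := C) hd_lower ?_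
    rw [← hq]
    rintro k (rfl | rfl | rfl | rfl | rfl) <;>
      exact h.avoidsIoc_sliceLevel_shiftedForm (by norm_num)
  · have hq : shiftedForm 1 0 2 (1 / 2) (1 / 2) 0 0 = 1 / 4 := by norm_num [shiftedForm]
    exact h.three_mul_notMem_Icc hq 0 ⟨by linarith, by linarith⟩

theorem not_avoidsSlices_diagonal_three (hd : 4 * d ^ 5 = 3) {c₅ : ℝ}
    (hc₅ : c₅ = 1 / 2 ∨ c₅ = 1 / 6 ∨ c₅ = -1 / 6) :
    ¬AvoidsSlices d u C (linearPart 0 0 0) (shiftedForm 1 0 3 (1 / 2) (1 / 2) c₅) := by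
  intro h
  have hd_lower : 0.94 < d := (by decide : Odd 5).pow_lt_pow.mp (by linarith)
  have hq : shiftedForm 1 0 3 (1 / 2) (1 / 2) c₅ 0 = 1 / 4 + 3 / 2 * c₅ ^ 2 := by
    simp only [shiftedForm, Prod.fst_zero, Prod.snd_zero]
    push_cast
    ring
  rcases hc₅ with rfl | rfl | rfl
  · exact h.three_mul_notMem_Icc hq 1 ⟨by linarith, by linarith⟩
  · exact h.three_mul_notMem_Icc hq 0 ⟨by linarith, by linarith⟩
  · exact h.three_mul_notMem_Icc hq 0 ⟨by linarith, by linarith⟩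

theorem not_avoidsSlices_hexagonal_zero (hd : 4 * d ^ 5 = 3) {c : ℝ}
    (hc : c = 0 ∨ c = 1 / 3 ∨ c = -1 / 3) :
    ¬AvoidsSlices d u C (linearPart 0 0 0) (shiftedForm 2 1 2 (1 / 2) c c) := by
  intro h
  have hd_lower : 0.94 < d := (by decide : Odd 5).pow_lt_pow.mp (by linarith)
  have hq : shiftedForm 2 1 2 (1 / 2) c c 0 = 1 / 8 + 3 * c ^ 2 := by
    simp only [shiftedForm, Prod.fst_zero, Prod.snd_zero]
    push_cast
    ring
  rcases hc with rfl | rfl | rfl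
  · exact h.three_mul_notMem_Icc hq 0 ⟨by linarith, by linarith⟩
  · exact h.three_mul_notMem_Icc hq 1 ⟨by linarith, by linarith⟩
  · exact h.three_mul_notMem_Icc hq 1 ⟨by linarith, by linarith⟩

-- Triangular numbers are not available here: the residues on the slice `x₂ = 2` come from
-- `(0, 0, 0)` and `(1, 1, 0)`.
theorem not_avoidsSlices_diagonal_two_of_one_half (hd : 4 * d ^ 5 = 2) :
    ¬AvoidsSlices d u C (linearPart (1 / 2) (1 / 2) 0) (shiftedForm 1 0 2 0 0 (1 / 2)) := by
  intro h
  have hd_lower : 0.87 < d := (by decide : Odd 5).pow_lt_pow.mp (by linarith)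
  have hunit {k : ℤ} (hk : IsUnit k) : AvoidsIoc d 1 (sliceLevel u C (1 / 4) k) := by
    have hq : shiftedForm 1 0 2 0 0 (1 / 2) 0 - k * linearPart (1 / 2) (1 / 2) 0 0 = 1 / 4 := by
      norm_num [shiftedForm, linearPart]
    exact hq ▸ h.avoidsIoc_sliceLevel_of_isUnit hk 0
  refine not_forall_avoidsIoc_of_three_mul_mem_Icc (d := d) (u := u) (C := C) (q := 1 / 4) 0
    ⟨by linarith, by linarith⟩ ?_
  rintro k (rfl | rfl | rfl)
  · exact hunit isUnit_one
  · exact hunit isUnit_one.neg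
  · refine h.avoidsIoc_sliceLevel 2 fun i => ?_
    obtain ⟨j, rfl | rfl⟩ := i.even_or_odd'
    · exact ⟨(0, 0, 0), j, by simp only [linearPart, shiftedForm]; push_cast; ring⟩
    · exact ⟨(1, 1, 0), j, by simp only [linearPart, shiftedForm]; push_cast; ring⟩

theorem not_avoidsSlices_diagonal_zero {r z : ℤ} {c₅ : ℝ} (hr : 1 ≤ r) (hr' : r ≤ 3)
    (hd : 4 * d ^ 5 = r) (hc₅ : r * c₅ = -r / 2 + z) :
    ¬AvoidsSlices d u C (linearPart 0 0 0) (shiftedForm 1 0 r (1 / 2) (1 / 2) c₅) := by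
  intro h
  have hcongr {c : ℝ} (hc : ∃ m : ℤ, c₅ = c + m) :
      ∃ C', AvoidsSlices d u C' (linearPart 0 0 0) (shiftedForm 1 0 r (1 / 2) (1 / 2) c) :=
    h.exists_avoidsSlices_of_congr ⟨0, by simp⟩ ⟨0, by simp⟩ ⟨0, by simp⟩ ⟨0, by simp⟩
      ⟨0, by simp⟩ hc
  interval_cases r <;> push_cast at hd hc₅ hcongr
  · obtain ⟨C', h'⟩ := hcongr (c := 1 / 2) ⟨z - 1, by push_cast; linarith⟩
    exact not_avoidsSlices_diagonal_one hd h'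
  · obtain ⟨c, hc, hm⟩ : ∃ c : ℝ, (c = 1 / 2 ∨ c = 0) ∧ ∃ m : ℤ, c₅ = c + m := by
      obtain ⟨j, rfl | rfl⟩ := z.even_or_odd'
      exacts [⟨1 / 2, .inl rfl, j - 1, by push_cast at hc₅ ⊢; linarith⟩,
        ⟨0, .inr rfl, j, by push_cast at hc₅; linarith⟩]
    obtain ⟨C', h'⟩ := hcongr hm
    exact not_avoidsSlices_diagonal_two hd hc h'
  · obtain ⟨c, hc, hm⟩ :
        ∃ c : ℝ, (c = 1 / 2 ∨ c = 1 / 6 ∨ c = -1 / 6) ∧ ∃ m : ℤ, c₅ = c + m := by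
      obtain ⟨j, rfl | rfl | rfl⟩ : ∃ j, z = 3 * j ∨ z = 3 * j + 2 ∨ z = 3 * j + 1 :=
        ⟨z / 3, by omega⟩
      exacts [⟨1 / 2, .inl rfl, j - 1, by push_cast at hc₅ ⊢; linarith⟩,
        ⟨1 / 6, .inr (.inl rfl), j, by push_cast at hc₅; linarith⟩,
        ⟨-1 / 6, .inr (.inr rfl), j, by push_cast at hc₅; linarith⟩]
    obtain ⟨C', h'⟩ := hcongr hm
    exact not_avoidsSlices_diagonal_three hd hc h'

end

theorem two_mul_intCast_eq_zero_iff {x : ℤ} : 2 * (x : ZMod 4) = 0 ↔ Even x := by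
  have h := ZMod.intCast_zmod_eq_zero_iff_dvd (2 * x) 4
  push_cast at h
  rw [h, even_iff_two_dvd]
  omega

theorem two_mul_intCast_eq_two_iff {x : ℤ} : 2 * (x : ZMod 4) = 2 ↔ Odd x := by
  have h := ZMod.intCast_eq_intCast_iff_dvd_sub 2 (2 * x) 4
  push_cast at h
  rw [eq_comm, h, Int.odd_iff]
  omega

section

variable {d u C c₄ c₅ : ℝ} {r h₃ h₄ h₅ z₄ z₅ : ℤ}

theorem AvoidsSlices.parity_of_diagonal
    (h : AvoidsSlices d u C (linearPart (h₃ / 2) (h₄ / 2) (h₅ / 2))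
      (shiftedForm 1 0 r ((h₃ - 1) / 2) c₄ c₅)) (hd : 1 / 2 ≤ d)
    (hc₄ : c₄ = (h₄ - 1) / 2 + z₄) (hc₅ : r * c₅ = (h₅ - r) / 2 + z₅) :
    Even h₃ ∧ Even h₄ ∧ Even h₅ ∨ Odd h₃ ∧ Odd h₄ ∧ Even r ∧ 4 ∣ h₅ - 2 * z₅ := by
  obtain ⟨i, hi⟩ := AvoidsSlices.exists_lineResidue_ne (p := 1) (l := 0) (z₄ := z₄) (z₅ := z₅)
    (by push_cast; exact h) hd (by push_cast; linarith) (by push_cast; linarith)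
  have hparity := diagonal_of_lineResidue_ne r h₃ ((h₄ - 2 * z₄ : ℤ) : ZMod 4)
    ((h₅ - 2 * z₅ : ℤ) : ZMod 4) i
    (by simpa only [Int.cast_one, Int.cast_zero, mul_zero, zero_mul, sub_zero] using hi)
  simpa only [two_mul_intCast_eq_zero_iff, two_mul_intCast_eq_two_iff,
    ZMod.intCast_zmod_eq_zero_iff_dvd, Int.even_sub, Int.odd_sub, even_two_mul, iff_true,
    Nat.cast_ofNat, Int.not_even_iff_odd] using hparity

theorem AvoidsSlices.even_of_hexagonal
    (h : AvoidsSlices d u C (linearPart (h₃ / 2) (h₄ / 2) (h₅ / 2))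
      (shiftedForm 2 1 2 ((h₃ - 1) / 2) c₄ c₅)) (hd : 1 / 2 ≤ d)
    (hc₄ : 2 * c₄ + c₅ = (h₄ - 2) / 2 + z₄) (hc₅ : c₄ + 2 * c₅ = (h₅ - 2) / 2 + z₅) :
    Even h₃ ∧ Even h₄ ∧ Even h₅ := by
  obtain ⟨i, hi⟩ := AvoidsSlices.exists_lineResidue_ne (p := 2) (l := 1) (r := 2) (z₄ := z₄)
    (z₅ := z₅) (by push_cast; exact h) hd (by push_cast; linarith) (by push_cast; linarith)
  have hparity := hexagonal_of_lineResidue_ne h₃ ((h₄ - 2 * z₄ : ℤ) : ZMod 4)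
    ((h₅ - 2 * z₅ : ℤ) : ZMod 4) i
    (by simpa only [Int.cast_one, Int.cast_ofNat, mul_one] using hi)
  simpa only [two_mul_intCast_eq_zero_iff, Int.even_sub, even_two_mul, iff_true] using hparity

theorem not_avoidsSlices_diagonal (hr : 1 ≤ r) (hr' : r ≤ 3) (hd : 4 * d ^ 5 = r)
    (hc₄ : c₄ = (h₄ - 1) / 2 + z₄) (hc₅ : r * c₅ = (h₅ - r) / 2 + z₅) :
    ¬AvoidsSlices d u C (linearPart (h₃ / 2) (h₄ / 2) (h₅ / 2))
      (shiftedForm 1 0 r ((h₃ - 1) / 2) c₄ c₅) := by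
  intro h
  have hr_cast : (1 : ℝ) ≤ r := mod_cast hr
  have hd_half : 1 / 2 ≤ d := ((by decide : Odd 5).pow_lt_pow.mp (by linarith)).le
  rcases h.parity_of_diagonal hd_half hc₄ hc₅ with
    ⟨h₃_even, h₄_even, h₅_even⟩ | ⟨h₃_odd, h₄_odd, hr_even, hdvd⟩
  · obtain ⟨⟨g₃, rfl⟩, ⟨g₄, rfl⟩, ⟨g₅, rfl⟩⟩ := h₃_even, h₄_even, h₅_even
    push_cast at hc₄ hc₅ h
    obtain ⟨C', h'⟩ := h.exists_avoidsSlices_of_congr (a₃' := 0) (a₄' := 0) (a₅' := 0)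
      (c₃' := 1 / 2) (c₄' := 1 / 2) (c₅' := c₅) ⟨g₃, by ring⟩ ⟨g₄, by ring⟩ ⟨g₅, by ring⟩
      ⟨g₃ - 1, by push_cast; ring⟩ ⟨g₄ + z₄ - 1, by push_cast; linarith⟩ ⟨0, by simp⟩
    exact not_avoidsSlices_diagonal_zero (z := g₅ + z₅) hr hr' hd (by push_cast; linarith) h'
  · obtain rfl : r = 2 := by
      obtain ⟨s, rfl⟩ := hr_even
      omega
    obtain ⟨⟨g₃, rfl⟩, ⟨g₄, rfl⟩, ⟨g₅, hg₅⟩⟩ := h₃_odd, h₄_odd, hdvd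
    obtain rfl : h₅ = 2 * (2 * g₅ + z₅) := by linarith
    push_cast at hc₄ hc₅ h hd
    obtain ⟨C', h'⟩ := h.exists_avoidsSlices_of_congr (a₃' := 1 / 2) (a₄' := 1 / 2) (a₅' := 0)
      (c₃' := 0) (c₄' := 0) (c₅' := 1 / 2) ⟨g₃, by ring⟩ ⟨g₄, by ring⟩
      ⟨2 * g₅ + z₅, by push_cast; ring⟩ ⟨g₃, by ring⟩ ⟨g₄ + z₄, by push_cast; linarith⟩
      ⟨g₅ + z₅ - 1, by push_cast; linarith⟩
    exact not_avoidsSlices_diagonal_two_of_one_half hd h'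

theorem not_avoidsSlices_hexagonal (hd : 4 * d ^ 5 = 3)
    (hc₄ : 2 * c₄ + c₅ = (h₄ - 2) / 2 + z₄) (hc₅ : c₄ + 2 * c₅ = (h₅ - 2) / 2 + z₅) :
    ¬AvoidsSlices d u C (linearPart (h₃ / 2) (h₄ / 2) (h₅ / 2))
      (shiftedForm 2 1 2 ((h₃ - 1) / 2) c₄ c₅) := by
  intro h
  have hd_half : 1 / 2 ≤ d := ((by decide : Odd 5).pow_lt_pow.mp (by linarith)).le
  obtain ⟨⟨g₃, rfl⟩, ⟨g₄, rfl⟩, ⟨g₅, rfl⟩⟩ := h.even_of_hexagonal hd_half hc₄ hc₅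
  push_cast at hc₄ hc₅ h
  obtain ⟨c, hc, j, hj⟩ : ∃ c : ℝ, (c = 0 ∨ c = 1 / 3 ∨ c = -1 / 3) ∧ ∃ j : ℤ, c₄ = c + j := by
    obtain ⟨j, hj⟩ : ∃ j, 2 * (g₄ + z₄) - (g₅ + z₅) = 3 * j + 1 ∨
        2 * (g₄ + z₄) - (g₅ + z₅) = 3 * j + 2 ∨ 2 * (g₄ + z₄) - (g₅ + z₅) = 3 * j :=
      ⟨(2 * (g₄ + z₄) - (g₅ + z₅)) / 3, by omega⟩
    rify at hj
    rcases hj with hj | hj | hj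
    exacts [⟨0, .inl rfl, j, by linarith⟩, ⟨1 / 3, .inr (.inl rfl), j, by linarith⟩,
      ⟨-1 / 3, .inr (.inr rfl), j, by linarith⟩]
  obtain ⟨C', h'⟩ := h.exists_avoidsSlices_of_congr (a₃' := 0) (a₄' := 0) (a₅' := 0)
    (c₃' := 1 / 2) (c₄' := c) (c₅' := c) ⟨g₃, by ring⟩ ⟨g₄, by ring⟩ ⟨g₅, by ring⟩
    ⟨g₃ - 1, by push_cast; ring⟩ ⟨j, hj⟩ ⟨j + (g₅ + z₅) - (g₄ + z₄), by push_cast; linarith⟩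
  exact not_avoidsSlices_hexagonal_zero hd hc h'

end

theorem IsGaussReduced.not_avoidsSlices {d u C c₄ c₅ p l r a₄ a₅ : ℝ} (hred : IsGaussReduced p l r)
    (hd : 4 * d ^ 5 = p * r - l ^ 2) (h₃ : ℤ) :
    ¬AvoidsSlices d u C (linearPart (h₃ / 2) a₄ a₅) (shiftedForm p l r ((h₃ - 1) / 2) c₄ c₅) := by
  intro h
  have hr_le := hred.sub_one_quarter_le
  have hd_half : 1 / 2 ≤ d :=
    ((by decide : Odd 5).pow_lt_pow.mp (by linarith [hred.one_le, hred.le])).le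
  obtain ⟨z, hz⟩ := exists_int_abs_sub_le hd_half hred.one_le (by linarith [hred.le])
  obtain ⟨z', hz'⟩ := exists_int_abs_sub_le hd_half (hred.one_le.trans hred.le) (by linarith)
  obtain ⟨rfl, rfl, ⟨l, rfl⟩, ⟨h₄, hh₄⟩, ⟨h₅, hh₅⟩, ⟨z₄, hz₄⟩, ⟨z₅, hz₅⟩⟩ :=
    h.exists_int_coefficients hz hz'
  obtain rfl : a₄ = h₄ / 2 := by linarith
  obtain rfl : a₅ = h₅ / 2 := by linarith
  have hred_int : IsGaussReduced z l z' :=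
    ⟨mod_cast hred.one_le, mod_cast hred.le, mod_cast hred.nonneg, mod_cast hred.two_mul_le⟩
  have hdet : z * z' - l ^ 2 < 4 := by
    rify
    linarith [pow_lt_one₀ (by linarith : 0 ≤ d) h.lt_one (by norm_num : 5 ≠ 0)]
  rcases hred_int.eq_of_mul_sub_sq_lt_four hdet with ⟨rfl, rfl, hr, hr'⟩ | ⟨rfl, rfl, rfl⟩
  · push_cast at h hz₄ hz₅ hd
    exact not_avoidsSlices_diagonal (z₄ := -z₄) (z₅ := -z₅) hr hr' (by linarith)
      (by push_cast; linarith) (by push_cast; linarith) h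
  · push_cast at h hz₄ hz₅ hd
    exact not_avoidsSlices_hexagonal (z₄ := -z₄) (z₅ := -z₅) (by linarith)
      (by push_cast; linarith) (by push_cast; linarith) h

theorem thm3_solubility_general (A t lam a₂ a₃ a₄ a₅ : ℝ) (hA : 1 / 2 ≤ A)
    (hlam : 0 ≤ lam ∧ lam ≤ 1 / 2) (hAC : A ≤ t + A * lam ^ 2)
    (c₁ c₂ c₃ c₄ c₅ : ℝ) (hc₂ : ∃ n : ℤ, (n : ℝ) = c₂)
    (hc₃ : (a₃ = 0 ∧ ∃ n : ℤ, c₃ - 1 / 2 = n) ∨ (a₃ = 1 / 2 ∧ ∃ n : ℤ, (n : ℝ) = c₃)) :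
    ∃ x₁ x₂ x₃ x₄ x₅ : ℝ,
      (∃ k : ℤ, x₁ - c₁ = k) ∧ (∃ k : ℤ, x₂ - c₂ = k) ∧ (∃ k : ℤ, x₃ - c₃ = k) ∧
      (∃ k : ℤ, x₄ - c₄ = k) ∧ (∃ k : ℤ, x₅ - c₅ = k) ∧
      0 < (x₁ + a₂ * x₂ + a₃ * x₃ + a₄ * x₄ + a₅ * x₅) * x₂
            - (1 / 2) * x₃ ^ 2 - A * (x₄ + lam * x₅) ^ 2 - t * x₅ ^ 2 ∧
      (x₁ + a₂ * x₂ + a₃ * x₃ + a₄ * x₄ + a₅ * x₅) * x₂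
            - (1 / 2) * x₃ ^ 2 - A * (x₄ + lam * x₅) ^ 2 - t * x₅ ^ 2 ≤
        (A * t) ^ ((1 : ℝ) / 5) := by
  have hlam_sq : A * lam ^ 2 ≤ A * (1 / 2) ^ 2 := by gcongr; exacts [hlam.1, hlam.2]
  have hAt : 0 ≤ A * t := mul_nonneg (by linarith) (by linarith)
  have hd : 4 * ((A * t) ^ ((1 : ℝ) / 5)) ^ 5 =
      2 * A * (2 * (t + A * lam ^ 2)) - (2 * A * lam) ^ 2 := by
    rw [← Real.rpow_natCast, ← Real.rpow_mul hAt]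
    norm_num
    ring
  have hred : IsGaussReduced (2 * A) (2 * A * lam) (2 * (t + A * lam ^ 2)) :=
    ⟨by linarith, by linarith, mul_nonneg (by linarith) hlam.1, by nlinarith [hlam.2]⟩
  obtain ⟨h₃, z, rfl, hz⟩ : ∃ h₃ z : ℤ, a₃ = h₃ / 2 ∧ ((h₃ : ℝ) - 1) / 2 - c₃ = z := by
    rcases hc₃ with ⟨rfl, n, hn⟩ | ⟨rfl, n, rfl⟩
    · exact ⟨0, -n - 1, by simp, by push_cast; linarith⟩
    · exact ⟨1, -n, by simp, by push_cast; ring⟩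
  have h := hred.not_avoidsSlices (u := a₂)
    (C := c₁ + h₃ / 2 * ((h₃ - 1) / 2) + a₄ * c₄ + a₅ * c₅) (c₄ := c₄) (c₅ := c₅) (a₄ := a₄)
    (a₅ := a₅) hd h₃
  simp only [AvoidsSlices, AvoidsIoc, not_forall, not_not] at h
  obtain ⟨k, n, j, hval⟩ := h
  obtain ⟨m, rfl⟩ := hc₂
  refine ⟨c₁ + j, k, (h₃ - 1) / 2 + n.1, c₄ + n.2.1, c₅ + n.2.2, ⟨j, by ring⟩,
    ⟨k - m, by push_cast; ring⟩, ⟨z + n.1, by push_cast; linarith⟩, ⟨n.2.1, by ring⟩,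
    ⟨n.2.2, by ring⟩, ?_⟩
  rw [← Set.mem_Ioc]
  convert hval using 1
  simp only [linearPart, shiftedForm]
  ring

/-- Theorem 3 (solubility part): for the reduced form
`Q(x) = (x₁ + a₂x₂ + a₃x₃ + a₄x₄ + a₅x₅)x₂ − (1/2)x₃² − A(x₄+λx₅)² − t·x₅²` with
`A,t > 0`, `0 ≤ λ ≤ 1/2`, `A ≤ t + Aλ²`, minimum of `φ` on nonzero integer triples
equal to `1/2`, and `d = (A·t)^{1/5} ≤ 1`, and reals `c₁,…,c₅` with `c₂ ∈ ℤ` and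
either `(a₃ = 0 ∧ c₃ ≡ 1/2)` or `(a₃ = 1/2 ∧ c₃ ≡ 0)`, the inequality `0 < Q ≤ d` is
soluble with `xᵢ ≡ cᵢ (mod 1)`. -/
theorem thm3_solubility
    (A t lam a₂ a₃ a₄ a₅ : ℝ)
    (hA : 0 < A) (ht : 0 < t)
    (hlam : 0 ≤ lam ∧ lam ≤ 1/2)
    (hAC : A ≤ t + A * lam^2)
    (ha₂ : -1/2 < a₂ ∧ a₂ ≤ 1/2) (ha₃ : -1/2 < a₃ ∧ a₃ ≤ 1/2)
    (ha₄ : -1/2 < a₄ ∧ a₄ ≤ 1/2) (ha₅ : -1/2 < a₅ ∧ a₅ ≤ 1/2)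
    (hmin_le : ∀ u v w : ℤ, ¬(u = 0 ∧ v = 0 ∧ w = 0) →
      1/2 ≤ (1/2) * (u : ℝ)^2 + A * ((v : ℝ) + lam * (w : ℝ))^2 + t * (w : ℝ)^2)
    (hmin_eq : ∃ u v w : ℤ, ¬(u = 0 ∧ v = 0 ∧ w = 0) ∧
      (1/2) * (u : ℝ)^2 + A * ((v : ℝ) + lam * (w : ℝ))^2 + t * (w : ℝ)^2 = 1/2)
    (hd : (A * t) ^ ((1 : ℝ)/5) ≤ 1)
    (c₁ c₂ c₃ c₄ c₅ : ℝ) (hc₂ : ∃ n : ℤ, (n : ℝ) = c₂)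
    (hc₃ : (a₃ = 0 ∧ ∃ n : ℤ, c₃ - 1/2 = n) ∨ (a₃ = 1/2 ∧ ∃ n : ℤ, (n : ℝ) = c₃)) :
    ∃ x₁ x₂ x₃ x₄ x₅ : ℝ,
      (∃ k : ℤ, x₁ - c₁ = k) ∧ (∃ k : ℤ, x₂ - c₂ = k) ∧ (∃ k : ℤ, x₃ - c₃ = k) ∧
      (∃ k : ℤ, x₄ - c₄ = k) ∧ (∃ k : ℤ, x₅ - c₅ = k) ∧
      0 < (x₁ + a₂*x₂ + a₃*x₃ + a₄*x₄ + a₅*x₅) * x₂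
            - (1/2) * x₃^2 - A * (x₄ + lam * x₅)^2 - t * x₅^2 ∧
      (x₁ + a₂*x₂ + a₃*x₃ + a₄*x₄ + a₅*x₅) * x₂
            - (1/2) * x₃^2 - A * (x₄ + lam * x₅)^2 - t * x₅^2 ≤ (A * t) ^ ((1 : ℝ)/5) :=
  thm3_solubility_general A t lam a₂ a₃ a₄ a₅ (by simpa using hmin_le 0 1 0 (by simp)) hlam hAC
    c₁ c₂ c₃ c₄ c₅ hc₂ hc₃
end

section
/- Let Q_5(x_1,…,x_5) = (x_1 + x_2/2 + x_3/2 + x_4/2)·x_2 − x_3²/2 − x_4²/2 − 2x_5². There are no integers x_1, …, x_5 with 0 < Q_5(x_1 + 1/2, x_2, x_3, x_4, x_5) < 1. (This shows that equality is required in Theorem 3 for the critical form Q_5 at c = (1/2,0,0,0,0).) -/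
/-!
At `(x₁ + 1/2, x₂, x₃, x₄, x₅)` twice the form is an integer congruent modulo `4` to
`x₂ (2x₁ + 1 + x₂ + x₃ + x₄) − x₃² − x₄²`. This is odd only if `x₂` is even and `x₃ + x₄` is odd;
both factors of the product are then even, while `x₃² + x₄² ≡ 1`, so an odd value is always
`≡ 3`. A value of the form strictly between `2k` and `2k + 1` would have to be `2k + 1/2`, whose
double is `4k + 1`.
-/

theorem sq_add_sq_modEq_one_of_odd_add {b c : ℤ} (h : Odd (b + c)) :
    b ^ 2 + c ^ 2 ≡ 1 [ZMOD 4] := by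
  have h_sq : (b + c) ^ 2 ≡ 1 [ZMOD 4] := Int.sq_mod_four_eq_one_of_odd h
  have h_even : Even (b * c) := by grind
  obtain ⟨t, ht⟩ := h_even
  calc b ^ 2 + c ^ 2 = (b + c) ^ 2 + 4 * -t := by linear_combination -2 * ht
    _ ≡ (b + c) ^ 2 [ZMOD 4] := Int.modEq_add_fac_self
    _ ≡ 1 [ZMOD 4] := h_sq

section OddShift

variable {m a b c : ℤ}

theorem odd_mul_sub_sq_sub_sq_iff (hm : Odd m) :
    Odd (a * (m + a + b + c) - b ^ 2 - c ^ 2) ↔ Even a ∧ Odd (b + c) := by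
  rw [← Int.not_even_iff_odd] at hm
  simp only [← Int.not_even_iff_odd, parity_simps]
  tauto

theorem mul_sub_sq_sub_sq_modEq_three_of_odd (hm : Odd m)
    (h : Odd (a * (m + a + b + c) - b ^ 2 - c ^ 2)) :
    a * (m + a + b + c) - b ^ 2 - c ^ 2 ≡ 3 [ZMOD 4] := by
  obtain ⟨ha, hbc⟩ := (odd_mul_sub_sq_sub_sq_iff hm).mp h
  have h_factor : Even (m + a + b + c) := by
    simpa only [add_assoc] using hm.add_odd (ha.add_odd hbc)
  have h_prod : a * (m + a + b + c) ≡ 0 [ZMOD 4] :=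
    Int.modEq_zero_iff_dvd.mpr (mul_dvd_mul ha.two_dvd h_factor.two_dvd)
  calc a * (m + a + b + c) - b ^ 2 - c ^ 2
      = a * (m + a + b + c) - (b ^ 2 + c ^ 2) := sub_sub _ _ _
    _ ≡ 0 - 1 [ZMOD 4] := h_prod.sub (sq_add_sq_modEq_one_of_odd_add hbc)
    _ ≡ 3 [ZMOD 4] := by decide

end OddShift

section CriticalForm

variable {K : Type*} [Field K]

/-- The critical quinary form `Q₅`, as a function of its five coordinates. -/
def criticalForm (x₁ x₂ x₃ x₄ x₅ : K) : K :=
  (x₁ + x₂ / 2 + x₃ / 2 + x₄ / 2) * x₂ - x₃ ^ 2 / 2 - x₄ ^ 2 / 2 - 2 * x₅ ^ 2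

theorem two_mul_criticalForm_add_half [NeZero (2 : K)] (x₁ x₂ x₃ x₄ x₅ : K) :
    2 * criticalForm (x₁ + 1 / 2) x₂ x₃ x₄ x₅ =
      x₂ * (2 * x₁ + 1 + x₂ + x₃ + x₄) - x₃ ^ 2 - x₄ ^ 2 - 4 * x₅ ^ 2 := by
  unfold criticalForm
  field_simp
  ring

theorem exists_two_mul_criticalForm_eq_intCast [NeZero (2 : K)] (x₁ x₂ x₃ x₄ x₅ : ℤ) :
    ∃ n : ℤ, 2 * criticalForm ((x₁ : K) + 1 / 2) x₂ x₃ x₄ x₅ = n ∧ (Odd n → n ≡ 3 [ZMOD 4]) := by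
  set r := x₂ * (2 * x₁ + 1 + x₂ + x₃ + x₄) - x₃ ^ 2 - x₄ ^ 2 with hr
  refine ⟨r - 4 * x₅ ^ 2, by rw [two_mul_criticalForm_add_half, hr]; push_cast; rfl, fun h ↦ ?_⟩
  have h_odd : Odd r := by grind
  have h_three : r ≡ 3 [ZMOD 4] :=
    mul_sub_sq_sub_sq_modEq_three_of_odd (odd_two_mul_add_one x₁) h_odd
  calc r - 4 * x₅ ^ 2 = r + 4 * -x₅ ^ 2 := by ring
    _ ≡ r [ZMOD 4] := Int.modEq_add_fac_self
    _ ≡ 3 [ZMOD 4] := h_three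

theorem critical_form_Q5_general [LinearOrder K] [IsStrictOrderedRing K]
    (k x₁ x₂ x₃ x₄ x₅ : ℤ) :
    criticalForm ((x₁ : K) + 1 / 2) x₂ x₃ x₄ x₅ ∉ Set.Ioo (2 * k : K) (2 * k + 1) := by
  rintro ⟨h_lower, h_upper⟩
  obtain ⟨n, hn, h_mod⟩ := exists_two_mul_criticalForm_eq_intCast (K := K) x₁ x₂ x₃ x₄ x₅
  have h_gt : 4 * k < n := by
    have : (4 * k : K) < n := by linarith
    exact_mod_cast this
  have h_lt : n < 4 * k + 2 := by
    have : (n : K) < 4 * k + 2 := by linarith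
    exact_mod_cast this
  have h_eq : n = 4 * k + 1 := by lia
  have h_three : n % 4 = 3 := h_mod ⟨2 * k, by lia⟩
  lia

end CriticalForm

/-- For the critical form `Q₅(x) = (x₁ + x₂/2 + x₃/2 + x₄/2)x₂ − x₃²/2 − x₄²/2 − 2x₅²`,
there are no integers `x₁,…,x₅` with `0 < Q₅(x₁+1/2, x₂, x₃, x₄, x₅) < 1`. -/
theorem critical_form_Q5 :
    ¬ ∃ x₁ x₂ x₃ x₄ x₅ : ℤ,
      0 < (((x₁ : ℝ) + 1/2) + (x₂ : ℝ)/2 + (x₃ : ℝ)/2 + (x₄ : ℝ)/2) * (x₂ : ℝ)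
            - (x₃ : ℝ)^2/2 - (x₄ : ℝ)^2/2 - 2*(x₅ : ℝ)^2 ∧
      (((x₁ : ℝ) + 1/2) + (x₂ : ℝ)/2 + (x₃ : ℝ)/2 + (x₄ : ℝ)/2) * (x₂ : ℝ)
            - (x₃ : ℝ)^2/2 - (x₄ : ℝ)^2/2 - 2*(x₅ : ℝ)^2 < 1 := by
  rintro ⟨x₁, x₂, x₃, x₄, x₅, h_pos, h_lt_one⟩
  exact critical_form_Q5_general (K := ℝ) 0 x₁ x₂ x₃ x₄ x₅
    (by simpa [criticalForm] using And.intro h_pos h_lt_one)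
end

section
/- Theorem 4: With the reduced form Q, parameters d = (8|D|)^{1/5}, m, K as in the context, suppose the reals c_1, …, c_5 satisfy c_2 ∈ ℤ, and suppose a < 1/2, d ≤ 1, a + d ≤ 1, and (m, K) ∈ {(4,1), (3,2), (3,1)}. Then there exist x_1, …, x_5 with x_i − c_i ∈ ℤ for every i such that 0 < Q(x_1,…,x_5) < d. -/
/-- The positive definite ternary form of the Birch reduction. -/
noncomputable def redPhi (a A t lam h₄ h₅ : ℝ) (u v w : ℝ) : ℝ :=
  a * (u + h₄*v + h₅*w)^2 + A * (v + lam*w)^2 + t * w^2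

/-- The Birch-reduced indefinite quadratic form of type (1,4). -/
noncomputable def redQ (a A t lam h₄ h₅ a₂ a₃ a₄ a₅ : ℝ) (x₁ x₂ x₃ x₄ x₅ : ℝ) : ℝ :=
  (x₁ + a₂*x₂ + a₃*x₃ + a₄*x₄ + a₅*x₅) * x₂ - redPhi a A t lam h₄ h₅ x₃ x₄ x₅

/-!
Suppose that no value of `Q` on the layers `x₂ = 1` and `x₂ = -1` lies in `(0, d)`. Completing the
square, this says that on two translates of `ℤ³` the values of `φ`, up to a constant, leave a gap of
length `d` modulo one. Along a line parallel to the `x₃`-axis consecutive values advance in steps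
shorter than the gap, as long as one stays near the vertex of the parabola; as they cannot jump over
the gap, a line turns into a single point of the `(x₄, x₅)`-plane with the larger gap
`d + (m² - 1) a / 4`, and planes turn in the same way into points of the `x₅`-axis.

A progression of quadratics `s + b (y + i)²` that leaves a gap longer than `1 / 2` modulo one is
rigid: the second differences of the fractional parts are too small to change the integer part, so
`2 b k²` can only be near an integer if it is equal to it. Together with `d⁵ = 2 a A t` this pins
down the coefficients, and the only form that survives is `φ = (x₃² + 3 x₄² + 3 x₅²) / 6`, centred
at half-integral points. For it, the layer `x₂ = 2` supplies a value in `(0, d)`.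
-/

/-- The values of `i ↦ s + b (y + i)²` on the integers leave a gap modulo one: all their fractional
parts lie in `[0, 1 - d]`. -/
def LineGap (d s b y : ℝ) : Prop := ∀ i : ℤ, Int.fract (s + b * (y + i) ^ 2) ≤ 1 - d

lemma fract_le_one_sub_iff {s d : ℝ} :
    Int.fract s ≤ 1 - d ↔ ∀ k : ℤ, s < k → s + d ≤ k := by
  rw [← Int.self_sub_floor]
  refine ⟨fun h k hk => ?_, fun h => ?_⟩
  · have hfloor : (⌊s⌋ : ℝ) + 1 ≤ k := by exact_mod_cast Int.floor_lt.2 hk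
    linarith
  · have := h (⌊s⌋ + 1) (by push_cast; exact Int.lt_floor_add_one s)
    push_cast at this
    linarith

lemma exists_int_add_mem_Ioc (x : ℝ) : ∃ k : ℤ, x < k ∧ k ≤ x + 1 :=
  ⟨⌊x⌋ + 1, by push_cast; exact Int.lt_floor_add_one x,
    by push_cast; linarith [Int.floor_le x]⟩

lemma exists_sq_add_int_mem_Icc (y : ℝ) (m : ℕ) :
    ∃ i : ℤ, (m : ℝ) ^ 2 / 4 ≤ (y + i) ^ 2 ∧ (y + i) ^ 2 ≤ ((m : ℝ) + 1) ^ 2 / 4 := by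
  have : (0 : ℝ) ≤ m := m.cast_nonneg
  obtain ⟨k, hk, hk'⟩ := exists_int_add_mem_Ioc ((m - 1) / 2 - y)
  rcases le_total ((m : ℝ) / 2) (y + k) with h | h
  · exact ⟨k, by nlinarith, by nlinarith⟩
  · refine ⟨k - m, ?_, ?_⟩ <;> push_cast <;> nlinarith

lemma eq_zero_of_abs_le_half {x : ℝ} {N : ℤ} (hx : |x| ≤ 1 / 2) (hN : x = N) : x = 0 := by
  have : |N| < 1 := by
    have : |(N : ℝ)| < 1 := by rw [← hN]; linarith
    exact_mod_cast this
  rw [hN, Int.abs_lt_one_iff.1 this, Int.cast_zero]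

lemma fract_eq_half_of_add_half {x : ℝ} {N : ℤ} (hN : x + 1 / 2 = N) : Int.fract x = 1 / 2 :=
  Int.fract_eq_iff.2 ⟨by norm_num, by norm_num, N - 1, by push_cast; linarith⟩

namespace LineGap

variable {d s b y : ℝ}

lemma le_one (h : LineGap d s b y) : d ≤ 1 := by
  linarith [Int.fract_nonneg (s + b * (y + (0 : ℤ)) ^ 2), h 0]

lemma add_int (h : LineGap d s b y) (n : ℤ) : LineGap d s b (y + n) := fun i => by
  simpa only [Int.cast_add, ← add_assoc] using h (n + i)

lemma neg (h : LineGap d s b y) : LineGap d s b (-y) := fun i => by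
  convert h (-i) using 2
  push_cast
  ring

lemma dist_round (h : LineGap d s b y) : LineGap d s b |y - round y| := by
  have hr : LineGap d s b (y - round y) := by
    simpa only [Int.cast_neg, ← sub_eq_add_neg] using h.add_int (-round y)
  rcases abs_choice (y - round y) with habs | habs <;> rw [habs]
  exacts [hr, hr.neg]

lemma int_add_step (h : LineGap d s b y) (i : ℤ) {k : ℤ} (hk : s + b * (i + y) ^ 2 < k) :
    s + b * (i + y) ^ 2 + d ≤ k := by
  rw [add_comm (i : ℝ)] at hk ⊢
  exact fract_le_one_sub_iff.1 (h i) k hk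

lemma int_sub_step (h : LineGap d s b y) (i : ℤ) {k : ℤ} (hk : s + b * (i - y) ^ 2 < k) :
    s + b * (i - y) ^ 2 + d ≤ k :=
  h.neg.int_add_step i hk

/-! ### Climbing along a line -/

lemma climb_one_add (h : LineGap d s b y) (hb : 0 < b) (hbd : 2 * b < d) (hy₀ : 0 ≤ y)
    (hy : y ≤ 1 / 2) {k : ℤ} (hk : s + b * y ^ 2 < k) : s + b * (1 + y) ^ 2 + d ≤ k := by
  have hby : 0 ≤ b * y := by positivity
  have hby' : b * y ≤ b / 2 := by nlinarith
  have h₀ := h.int_add_step 0 (k := k) (by push_cast; linarith)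
  have h₁ := h.int_sub_step 1 (k := k) (by push_cast at h₀ ⊢; linarith)
  have h₂ := h.int_add_step 1 (k := k) (by push_cast at h₁ ⊢; linarith)
  exact_mod_cast h₂

lemma climb_two_sub (h : LineGap d s b y) (hb : 0 < b) (hbd : 2 * b < d) (hy₀ : 0 ≤ y)
    (hy : y ≤ 1 / 2) (hstep : 3 * (1 - 2 * y) * b < d) {k : ℤ} (hk : s + b * y ^ 2 < k) :
    s + b * (2 - y) ^ 2 + d ≤ k := by
  have h₁ := h.climb_one_add hb hbd hy₀ hy hk
  exact_mod_cast h.int_sub_step 2 (k := k) (by push_cast; linarith)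

/-- Some `(y + i)²` lies in each window `[n² / 4, (n + 1)² / 4]`, and two consecutive windows span
the length `n + 1` from `n² / 4` to `(n + 2)² / 4`: for `n < m` the corresponding step is shorter
than the gap, so the values cannot jump over it. -/
lemma fract_add_quarter_le (h : LineGap d s b y) (hb : 0 < b) (m : ℕ) (hm : m * b < d) :
    Int.fract (s + b / 4) ≤ 1 - (d + ((m : ℝ) ^ 2 - 1) * b / 4) := by
  rw [fract_le_one_sub_iff]
  intro k hk
  suffices s + d + m ^ 2 * b / 4 ≤ k by linarith
  induction m with
  | zero =>
    obtain ⟨i, -, hi⟩ := exists_sq_add_int_mem_Icc y 0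
    have := fract_le_one_sub_iff.1 (h i) k (by push_cast at hi; nlinarith)
    push_cast
    nlinarith [sq_nonneg (y + i)]
  | succ m ih =>
    push_cast at hm ⊢
    have hprev := ih (by linarith)
    obtain ⟨i, hi, hi'⟩ := exists_sq_add_int_mem_Icc y (m + 1)
    push_cast at hi hi'
    have := fract_le_one_sub_iff.1 (h i) k (by linarith [mul_le_mul_of_nonneg_left hi' hb.le])
    linarith [mul_le_mul_of_nonneg_left hi hb.le]

end LineGap

/-! ### Rigidity -/

lemma eq_zero_of_forall_sub_eq {f : ℕ → ℝ} {r C : ℝ} (hf : ∀ n, |f n| ≤ C)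
    (hr : ∀ n, f (n + 1) - f n = r) : r = 0 := by
  have hlin (n : ℕ) : f n = f 0 + n * r := by
    induction n with
    | zero => simp
    | succ n ih => push_cast; linarith [hr n]
  by_contra hne
  obtain ⟨n, hn⟩ := exists_nat_gt (2 * C / |r|)
  rw [div_lt_iff₀ (abs_pos.2 hne)] at hn
  have hnr : (n : ℝ) * |r| = |f n - f 0| := by
    rw [hlin n, add_sub_cancel_left, abs_mul, Nat.abs_cast]
  linarith [abs_sub (f n) (f 0), hf n, hf 0]

/-- The second difference of the fractional parts is at most `2 (1 - d)` in absolute value, so it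
is `c - j`; as the fractional parts are bounded, both it and the first difference vanish. -/
lemma eq_intCast_of_second_difference {x : ℕ → ℝ} {d c : ℝ} {j : ℤ}
    (hx : ∀ n, Int.fract (x n) ≤ 1 - d) (hc : ∀ n, x (n + 2) - 2 * x (n + 1) + x n = c)
    (hj : |c - j| < 2 * d - 1) : c = j ∧ ∃ N : ℤ, x 1 - x 0 = N := by
  rw [abs_lt] at hj
  have hx₀ (n) : 0 ≤ Int.fract (x n) := Int.fract_nonneg _
  have hx₁ (n) : Int.fract (x n) < 1 := Int.fract_lt_one _
  have hsplit (n) : (⌊x n⌋ : ℝ) + Int.fract (x n) = x n := Int.floor_add_fract _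
  have hfloor (n) : ⌊x (n + 2)⌋ - 2 * ⌊x (n + 1)⌋ + ⌊x n⌋ = j := by
    have hlt : ((⌊x (n + 2)⌋ - 2 * ⌊x (n + 1)⌋ + ⌊x n⌋ : ℤ) : ℝ) < (j + 1 : ℤ) := by
      push_cast
      linarith [hc n, hsplit n, hsplit (n + 1), hsplit (n + 2), hx₀ n, hx₀ (n + 2), hx (n + 1)]
    have hgt : ((j - 1 : ℤ) : ℝ) < (⌊x (n + 2)⌋ - 2 * ⌊x (n + 1)⌋ + ⌊x n⌋ : ℤ) := by
      push_cast
      linarith [hc n, hsplit n, hsplit (n + 1), hsplit (n + 2), hx₀ (n + 1), hx n, hx (n + 2)]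
    have := Int.cast_lt.1 hlt
    have := Int.cast_lt.1 hgt
    omega
  set g : ℕ → ℝ := fun n => Int.fract (x (n + 1)) - Int.fract (x n)
  have hg₁ (n) : |g n| ≤ 1 := by
    rw [abs_le]
    constructor <;> linarith [hx₀ n, hx₀ (n + 1), hx₁ n, hx₁ (n + 1)]
  have hg₂ (n) : g (n + 1) - g n = c - j := by
    have : (⌊x (n + 2)⌋ - 2 * ⌊x (n + 1)⌋ + ⌊x n⌋ : ℝ) = j := by exact_mod_cast hfloor n
    linarith [hc n, hsplit n, hsplit (n + 1), hsplit (n + 2)]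
  have hcj : c - j = 0 := eq_zero_of_forall_sub_eq hg₁ hg₂
  have hconst (n) : g n = g 0 := by
    induction n with
    | zero => rfl
    | succ n ih => linarith [hg₂ n]
  have hg₀ : g 0 = 0 := eq_zero_of_forall_sub_eq (f := fun n => Int.fract (x n)) (C := 1)
    (fun n => by rw [abs_of_nonneg (hx₀ n)]; exact (hx₁ n).le) hconst
  refine ⟨by linarith, ⌊x 1⌋ - ⌊x 0⌋, ?_⟩
  push_cast
  linarith [hsplit 0, hsplit 1]

namespace LineGap

variable {d s b y : ℝ}

lemma rigid (h : LineGap d s b y) (k j : ℤ) (hj : |2 * (b * k ^ 2) - j| < 2 * d - 1) :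
    2 * (b * k ^ 2) = j ∧ ∃ N : ℤ, b * k * (k + 2 * y) = N := by
  obtain ⟨hc, N, hN⟩ := eq_intCast_of_second_difference
    (x := fun n => s + b * (y + (k * n : ℤ)) ^ 2) (fun n => h (k * n))
    (fun n => by push_cast; ring) hj
  refine ⟨hc, N, ?_⟩
  rw [← hN]
  push_cast
  ring

lemma eq_half (h : LineGap d s b y) (hbd : b < d) (hdb : 1 - d < b) :
    b = 1 / 2 ∧ Int.fract y = 1 / 2 := by
  obtain ⟨hb, N, hN⟩ := h.rigid 1 1 (by rw [abs_lt]; push_cast; constructor <;> linarith)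
  push_cast at hb hN
  obtain rfl : b = 1 / 2 := by linarith
  exact ⟨rfl, fract_eq_half_of_add_half (N := N) (by linarith)⟩

lemma eq_sixth (h : LineGap d s b y) (hbd : 9 * b < 1 + d) (hdb : 2 < 9 * b + d) :
    b = 1 / 6 ∧ Int.fract y = 1 / 2 := by
  obtain ⟨hb, N, hN⟩ := h.rigid 3 3 (by rw [abs_lt]; push_cast; constructor <;> linarith)
  push_cast at hb hN
  obtain rfl : b = 1 / 6 := by linarith
  exact ⟨rfl, fract_eq_half_of_add_half (N := N - 1) (by push_cast; linarith)⟩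

lemma eq_quarter (h : LineGap d s b y) (hbd : 4 * b < 1 / 2 + d) (hdb : 3 / 2 < 4 * b + d) :
    b = 1 / 4 ∧ Int.fract y = 0 := by
  obtain ⟨hb, N, hN⟩ := h.rigid 2 2 (by rw [abs_lt]; push_cast; constructor <;> linarith)
  push_cast at hb hN
  obtain rfl : b = 1 / 4 := by linarith
  exact ⟨rfl, Int.fract_eq_iff.2 ⟨le_rfl, one_pos, N - 1, by push_cast; linarith⟩⟩

/-- Rigidity along steps of length two would force `b = 1 / 8`, and then both `y / 2` and
`(y + 1) / 2` to be integers. -/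
lemma le_four_mul (h : LineGap d s b y) (hdb : 1 < 4 * b + d) : d ≤ 4 * b := by
  by_contra! hbd
  have hnear : |2 * (b * (2 : ℤ) ^ 2) - (1 : ℤ)| < 2 * d - 1 := by
    rw [abs_lt]; push_cast; constructor <;> linarith
  obtain ⟨hb, N, hN⟩ := h.rigid 2 1 hnear
  obtain ⟨-, M, hM⟩ := (h.add_int 1).rigid 2 1 hnear
  push_cast at hb hN hM
  obtain rfl : b = 1 / 8 := by linarith
  have : (2 * (M - N) : ℤ) = 1 := by
    have : (2 * (M - N) : ℝ) = 1 := by linarith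
    exact_mod_cast this
  omega

end LineGap

/-! ### The ternary form -/

/-- The values of `φ - g` on the grid `(y₃, y₄, y₅) + ℤ³` leave a gap modulo one: all their
fractional parts lie in `[0, 1 - d]`. -/
def PhiGap (a A t lam h₄ h₅ d g y₃ y₄ y₅ : ℝ) : Prop :=
  ∀ i j l : ℤ, Int.fract (redPhi a A t lam h₄ h₅ (y₃ + i) (y₄ + j) (y₅ + l) - g) ≤ 1 - d

lemma three_quarters_mul_le {A t lam : ℝ} (hA : 0 < A) (hlam : |lam| ≤ 1 / 2)
    (hAC : A ≤ t + A * lam ^ 2) : 3 / 4 * A ≤ t := by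
  have : lam ^ 2 ≤ 1 / 4 := by
    rw [← sq_abs]; nlinarith [abs_nonneg lam]
  nlinarith

lemma mul_pow_le_of_det {a A t d D μ ν ρ : ℝ} (ht : 0 ≤ t) (hd : 0 < d) (hρ : 0 < ρ) (hμ : 0 ≤ μ)
    (hν : 0 ≤ ν) (hdet : d ^ 5 = 2 * a * A * t) (hda : d ≤ μ * a) (hdD : ρ * d ≤ D)
    (hDA : D ≤ ν * A) : 2 * ρ ^ 4 * t ≤ μ * ν * D ^ 3 := by
  have hD : 0 < D := (mul_pos hρ hd).trans_le hdD
  have hdD' : 2 * t * D ≤ μ * ν * d ^ 4 := by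
    refine le_of_mul_le_mul_left ?_ hd
    calc d * (2 * t * D) = 2 * t * (d * D) := by ring
      _ ≤ 2 * t * (μ * a * (ν * A)) := by gcongr; exact hd.le.trans hda
      _ = d * (μ * ν * d ^ 4) := by linear_combination -(μ * ν) * hdet
  refine le_of_mul_le_mul_right ?_ hD
  calc 2 * ρ ^ 4 * t * D = ρ ^ 4 * (2 * t * D) := by ring
    _ ≤ ρ ^ 4 * (μ * ν * d ^ 4) := by gcongr
    _ = μ * ν * (ρ * d) ^ 4 := by ring
    _ ≤ μ * ν * D ^ 4 := by gcongr
    _ = μ * ν * D ^ 3 * D := by ring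

namespace PhiGap

variable {a A t lam h₄ h₅ d g y₃ y₄ y₅ : ℝ}

lemma line (h : PhiGap a A t lam h₄ h₅ d g y₃ y₄ y₅) (j l : ℤ) :
    LineGap d (A * (y₄ + j + lam * (y₅ + l)) ^ 2 + t * (y₅ + l) ^ 2 - g) a
      (y₃ + h₄ * (y₄ + j) + h₅ * (y₅ + l)) := by
  intro i
  convert h i j l using 2
  rw [redPhi]
  ring

lemma plane (h : PhiGap a A t lam h₄ h₅ d g y₃ y₄ y₅) (ha : 0 < a) (m : ℕ) (hm : m * a < d)
    (l : ℤ) : LineGap (d + ((m : ℝ) ^ 2 - 1) * a / 4) (a / 4 - g + t * (y₅ + l) ^ 2) A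
      (y₄ + lam * (y₅ + l)) := by
  intro j
  convert (h.line j l).fract_add_quarter_le ha m hm using 2
  ring

lemma plane_three (h : PhiGap a A t lam h₄ h₅ d g y₃ y₄ y₅) (ha : 0 < a) (had : 3 * a < d) (l : ℤ) :
    LineGap (d + 2 * a) (a / 4 - g + t * (y₅ + l) ^ 2) A (y₄ + lam * (y₅ + l)) := by
  convert h.plane ha 3 (by push_cast; exact had) l using 1
  push_cast
  ring

lemma fract (h : PhiGap a A t lam h₄ h₅ d g y₃ y₄ y₅) :
    PhiGap a A t lam h₄ h₅ d g (Int.fract y₃) (Int.fract y₄) (Int.fract y₅) := fun i j l => by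
  simpa only [Int.fract, Int.cast_sub, add_sub_assoc, sub_add_eq_add_sub]
    using h (i - ⌊y₃⌋) (j - ⌊y₄⌋) (l - ⌊y₅⌋)

end PhiGap

/-! ### The cases `(m, K) = (4, 1)` and `(m, K) = (3, 1)` -/

lemma eq_half_of_planes {A t lam D s y₄ y₅ : ℝ} (hA : 0 < A) (hlam : |lam| ≤ 1 / 2)
    (hAC : A ≤ t + A * lam ^ 2) (hAD : A < D) (hDA : D ≤ 2 * A) (htD : t ≤ 4 / 5 * D ^ 3)
    (h : ∀ l : ℤ, LineGap D (s + t * (y₅ + l) ^ 2) A (y₄ + lam * (y₅ + l))) :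
    A = 1 / 2 ∧ t = 1 / 2 ∧ lam = 0 ∧ Int.fract y₄ = 1 / 2 ∧ Int.fract y₅ = 1 / 2 := by
  have hD₁ : D ≤ 1 := (h 0).le_one
  have hAt := three_quarters_mul_le hA hlam hAC
  have hD₂ : 2 / 3 < D := by
    by_contra! hD
    nlinarith [mul_self_le_mul_self (by linarith : 0 ≤ D) hD]
  have hheights : LineGap D (s + A / 4) t y₅ := fun l => by
    convert (h l).fract_add_quarter_le hA 1 (by push_cast; linarith) using 2
    · ring
    · push_cast; ring
  have hplane (l : ℤ) := (h l).eq_half hAD (by linarith)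
  obtain rfl := (hplane 0).1
  have hD₃ : D ^ 3 ≤ D := pow_le_of_le_one (by linarith) hD₁ three_ne_zero
  obtain ⟨rfl, hy₅⟩ := hheights.eq_half (by linarith) (by linarith)
  have hlam₀ : lam = 0 := by
    obtain ⟨N, hN⟩ := Int.fract_eq_fract.1 ((hplane 1).2.trans (hplane 0).2.symm)
    refine eq_zero_of_abs_le_half hlam (N := N) ?_
    push_cast at hN
    linarith
  subst hlam₀
  refine ⟨rfl, rfl, rfl, ?_, hy₅⟩
  simpa using (hplane 0).2

lemma not_phiGap_four_one {a A t lam h₄ h₅ d g y₃ y₄ y₅ : ℝ} (ha : 0 < a) (hA : 0 < A) (ht : 0 < t)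
    (hdet : d ^ 5 = 2 * a * A * t) (hlam : |lam| ≤ 1 / 2) (hAC : A ≤ t + A * lam ^ 2)
    (had : 4 * a < d) (hda : d ≤ 5 * a) (hAD : A < d + 15 / 4 * a)
    (hDA : d + 15 / 4 * a ≤ 2 * A) : ¬ PhiGap a A t lam h₄ h₅ d g y₃ y₄ y₅ := by
  intro h
  have hd : 0 < d := by linarith
  have htD := mul_pow_le_of_det (ρ := 7 / 4) ht.le hd (by norm_num) (by norm_num) zero_le_two hdet
    hda (by linarith : _ ≤ d + 15 / 4 * a) hDA
  have hplane (l : ℤ) : LineGap (d + 15 / 4 * a) (a / 4 - g + t * (y₅ + l) ^ 2) A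
      (y₄ + lam * (y₅ + l)) := by
    convert h.plane ha 4 (by push_cast; exact had) l using 1
    push_cast
    ring
  obtain ⟨rfl, rfl, -⟩ := eq_half_of_planes hA hlam hAC hAD hDA (by linarith) hplane
  have hd₄ : 1 / 10 ≤ d ^ 4 := by nlinarith
  have hd' : 5 / 9 < d := lt_of_pow_lt_pow_left₀ 4 hd.le (by linarith)
  linarith [(h.line 0 0).le_four_mul (by linarith)]

lemma LineGap.eq_sixth_of_pow_five {d s a y : ℝ} (h : LineGap d s a y) (hd : 0 < d)
    (hd₅ : d ^ 5 = a / 2) (had : 3 * a < d) (hda : d ≤ 4 * a) (hD : d + 2 * a ≤ 1) :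
    a = 1 / 6 ∧ Int.fract y = 1 / 2 := by
  have ha : 0 < a := by linarith
  have hd₄ : 1 / 8 ≤ d ^ 4 := by nlinarith
  have hd' : 0.594 < d := lt_of_pow_lt_pow_left₀ 4 hd.le (by linarith)
  suffices 0.159 ≤ a ∧ a ≤ 0.172 from h.eq_sixth (by linarith) (by linarith)
  set z := |y - round y|
  have hz₀ : 0 ≤ z := abs_nonneg _
  have hz₁ : z ≤ 1 / 2 := abs_sub_round y
  have haz : 0 ≤ a * z := by positivity
  have haz₁ : a * z ≤ a / 2 := by nlinarith
  have hgap : LineGap d s a z := h.dist_round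
  obtain ⟨k, hk, hk'⟩ := exists_int_add_mem_Ioc (s + a * z ^ 2)
  have h₂ : s + a * (2 - z) ^ 2 + d ≤ k :=
    hgap.climb_two_sub ha (by linarith) hz₀ hz₁ (by linarith) hk
  have hz₃ : 3 / 8 < z := by
    by_contra! hz₃
    have := hgap.int_add_step 2 (k := k) (by push_cast; nlinarith)
    push_cast at this
    linarith
  constructor
  · by_contra! hlow
    have h₃ := hgap.int_add_step 3 (k := k + 1) (by push_cast; linarith)
    push_cast at h₃
    have h₄ := hgap.int_sub_step 4 (k := k + 1) (by push_cast; linarith)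
    push_cast at h₄
    linarith
  · by_contra! hhigh
    have h₄ := hgap.int_add_step 4 (k := k + 3) (by push_cast; linarith)
    push_cast at h₄
    have h₅ := hgap.int_sub_step 5 (k := k + 3) (by push_cast; linarith)
    push_cast at h₅
    linarith

lemma PhiGap.exceptional_of_three_one {a A t lam h₄ h₅ d g y₃ y₄ y₅ : ℝ}
    (h : PhiGap a A t lam h₄ h₅ d g y₃ y₄ y₅) (ha : 0 < a) (hA : 0 < A) (ht : 0 < t)
    (hdet : d ^ 5 = 2 * a * A * t) (hlam : |lam| ≤ 1 / 2) (hh₄ : |h₄| ≤ 1 / 2) (hh₅ : |h₅| ≤ 1 / 2)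
    (hAC : A ≤ t + A * lam ^ 2) (had : 3 * a < d) (hda : d ≤ 4 * a) (hAD : A < d + 2 * a)
    (hDA : d + 2 * a ≤ 2 * A) :
    (a = 1 / 6 ∧ A = 1 / 2 ∧ t = 1 / 2 ∧ lam = 0 ∧ h₄ = 0 ∧ h₅ = 0) ∧
      Int.fract y₃ = 1 / 2 ∧ Int.fract y₄ = 1 / 2 ∧ Int.fract y₅ = 1 / 2 := by
  have hd : 0 < d := by linarith
  have htD := mul_pow_le_of_det (ρ := 3 / 2) ht.le hd (by norm_num) (by norm_num) zero_le_two hdet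
    hda (by linarith : _ ≤ d + 2 * a) hDA
  have hplane := h.plane_three ha had
  obtain ⟨rfl, rfl, rfl, hy₄, hy₅⟩ := eq_half_of_planes hA hlam hAC hAD hDA (by linarith) hplane
  have hline (j l : ℤ) := (h.line j l).eq_sixth_of_pow_five hd (by linarith) had hda
    (hplane 0).le_one
  have hh₄' : h₄ = 0 := by
    obtain ⟨N, hN⟩ := Int.fract_eq_fract.1 ((hline 1 0).2.trans (hline 0 0).2.symm)
    exact eq_zero_of_abs_le_half hh₄ (N := N) (by push_cast at hN; linarith)
  have hh₅' : h₅ = 0 := by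
    obtain ⟨N, hN⟩ := Int.fract_eq_fract.1 ((hline 0 1).2.trans (hline 0 0).2.symm)
    exact eq_zero_of_abs_le_half hh₅ (N := N) (by push_cast at hN; linarith)
  subst hh₄' hh₅'
  refine ⟨⟨(hline 0 0).1, rfl, rfl, rfl, rfl, rfl⟩, ?_, hy₄, hy₅⟩
  simpa using (hline 0 0).2

/-! ### The case `(m, K) = (3, 2)` -/

lemma abs_sub_round_le_of_three_mul {x ε : ℝ} {N : ℤ} (h : |3 * x - N| ≤ 3 * ε) :
    |x - round x| ≤ 1 / 3 + ε := by
  refine (round_le x ((N + 1) / 3)).trans ?_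
  have hlow : ((N - 1 : ℤ) : ℝ) ≤ (3 * ((N + 1) / 3) : ℤ) := by exact_mod_cast (by omega)
  have hup : ((3 * ((N + 1) / 3) : ℤ) : ℝ) ≤ (N + 1 : ℤ) := by exact_mod_cast (by omega)
  push_cast at hlow hup
  rw [abs_le] at h ⊢
  constructor <;> linarith

lemma exists_abs_sub_half_le {x ε : ℝ} (h : 1 / 2 - ε ≤ |x - round x|) :
    ∃ n : ℤ, |x - (n + 1 / 2)| ≤ ε := by
  have hx := abs_le.1 (abs_sub_round x)
  rcases le_total 0 (x - round x) with h₀ | h₀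
  · rw [abs_of_nonneg h₀] at h
    exact ⟨round x, abs_le.2 ⟨by linarith, by linarith⟩⟩
  · rw [abs_of_nonpos h₀] at h
    exact ⟨round x - 1, by push_cast; exact abs_le.2 ⟨by linarith, by linarith⟩⟩

namespace LineGap

lemma eq_half_or_eq_sixth_or_eq_quarter {E s t y : ℝ} (h : LineGap E s t y) (ht : 0 < t)
    (hEt : E ≤ 5 * t) (htE : t ≤ 0.607 * E ^ 3) :
    (t = 1 / 2 ∧ Int.fract y = 1 / 2) ∨ (t = 1 / 6 ∧ E ≤ 2 / 3 ∧ Int.fract y = 1 / 2) ∨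
      (t = 1 / 4 ∧ E ≤ 3 / 4 ∧ Int.fract y = 0) := by
  have hE₁ := h.le_one
  have hE : 0 < E := by
    by_contra! hE
    linarith [Odd.pow_nonpos (by decide : Odd 3) hE]
  have hE₃ : E ^ 3 ≤ E := pow_le_of_le_one hE.le hE₁ three_ne_zero
  have hlow {r c : ℝ} (hr : 0 < r) (hrt : r * E ≤ t) (hc : 0.607 * c ^ 2 < r) : c < E := by
    refine lt_of_pow_lt_pow_left₀ 2 hE.le ?_
    have : r ≤ 0.607 * E ^ 2 := le_of_mul_le_mul_right (by linarith) hE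
    linarith
  rcases lt_or_ge (1 - E) t with hsum | hsum
  · exact .inl (h.eq_half (by linarith) hsum)
  have hE₅ : 5 / 9 < E := hlow (r := 1 / 5) (by norm_num) (by linarith) (by norm_num)
  have hE₄ : E ≤ 4 * t := h.le_four_mul (by linarith)
  have hE₄' : 0.64 < E := hlow (r := 1 / 4) (by norm_num) (by linarith) (by norm_num)
  rcases lt_or_ge (3 * t) E with h₃ | h₃
  · have := (Int.fract_nonneg _).trans (h.fract_add_quarter_le ht 3 (by push_cast; exact h₃))
    push_cast at this
    obtain ⟨rfl, hy⟩ := h.eq_sixth (by linarith) (by linarith)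
    exact .inr (.inl ⟨rfl, by linarith, hy⟩)
  · have hE₃' : 0.74 < E := hlow (r := 1 / 3) (by norm_num) (by linarith) (by norm_num)
    obtain ⟨rfl, hy⟩ := h.eq_quarter (by linarith) (by linarith)
    exact .inr (.inr ⟨rfl, by linarith, hy⟩)

/-- The integer `k` bounds the values on both lines from above. Climbing on the second line up to
the distance `2 - |V' - round V'|` would exceed `k`, so the last step there is at least `D`. -/
lemma parallel {D σ δ A V V' : ℝ} (h : LineGap D σ A V) (h' : LineGap D (σ + δ) A V') (hA : 0 < A)
    (hAD : 2 * A < D) (hδ : δ < D) (hlarge : 1 < δ + D + 2 * A) :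
    6 * A * |V' - round V'| ≤ 3 * A - D ∧
      ∃ k : ℤ, σ + δ + A + D ≤ k ∧ k ≤ σ + A * |V - round V| ^ 2 + 1 := by
  have hv := abs_sub_round V
  have hv' := abs_sub_round V'
  have hv₀ := abs_nonneg (V - round V)
  have hv₀' := abs_nonneg (V' - round V')
  replace h := h.dist_round
  replace h' := h'.dist_round
  set v := |V - round V|
  set v' := |V' - round V'|
  have hquarter {z : ℝ} (hz₀ : 0 ≤ z) (hz : z ≤ 1 / 2) : A * z ^ 2 ≤ A * (1 / 2) ^ 2 := by gcongr
  have hAv := hquarter hv₀ hv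
  have hAv' := hquarter hv₀' hv'
  have hAv₀ : 0 ≤ A * v := by positivity
  have hAv₀' : 0 ≤ A * v' := by positivity
  obtain ⟨k, hk, hk'⟩ := exists_int_add_mem_Ioc (σ + A * v ^ 2)
  have h₁ := h.climb_one_add hA hAD hv₀ hv hk
  have hk₀ : σ + δ + A * v' ^ 2 < k := by linarith [mul_nonneg hA.le (sq_nonneg v)]
  have h₁' := h'.climb_one_add hA hAD hv₀' hv' hk₀
  refine ⟨?_, k, by linarith [mul_nonneg hA.le (sq_nonneg v')], hk'⟩
  by_contra! hstep
  have h₂' := h'.climb_two_sub hA hAD hv₀' hv' (by linarith) hk₀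
  linarith [mul_nonneg hA.le (sq_nonneg (1 / 2 - v'))]

end LineGap

lemma not_planes_of_sixth {A lam D s y₄ : ℝ} (hAD : 2 * A < D) (hDA : D ≤ 3 * A) (hD : 0.5199 < D)
    (hsum : D + 3 / 4 * A ≤ 2 / 3) :
    ¬ ∀ l : ℤ, LineGap D (s + 1 / 6 * (1 / 2 + l) ^ 2) A (y₄ + lam * (1 / 2 + l)) := by
  intro h
  have hA : 0 < A := by linarith
  set V : ℤ → ℝ := fun l => y₄ + lam * (1 / 2 + l) with hV
  have hparallel (l : ℤ) (hl : (1 / 2 + l : ℝ) ^ 2 = 9 / 4) :=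
    (h 0).parallel (δ := 1 / 3) (V := V 0) (V' := V l)
      (by convert h l using 1; rw [hl]; push_cast; ring) hA hAD
      (by linarith) (by linarith)
  obtain ⟨hV₁, k, hk, hk'⟩ := hparallel 1 (by norm_num)
  obtain ⟨hV₂, -⟩ := hparallel (-2) (by norm_num)
  set ζ := (3 * A - D) / (6 * A) with hζ
  have hζA : 6 * A * ζ = 3 * A - D := mul_div_cancel₀ _ (by positivity)
  have hζ' : ζ ≤ 1 / 15 := by rw [hζ, div_le_iff₀ (by positivity)]; linarith
  have hV₀ : |V 0 - round (V 0)| ≤ 1 / 3 + ζ := by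
    rw [← le_div_iff₀' (by positivity)] at hV₁ hV₂
    rw [abs_le] at hV₁ hV₂
    refine abs_sub_round_le_of_three_mul (N := 2 * round (V 1) + round (V (-2))) (abs_le.2 ?_)
    have : 3 * V 0 = 2 * V 1 + V (-2) := by simp only [hV]; push_cast; ring
    push_cast
    constructor <;> linarith
  have : A * |V 0 - round (V 0)| ^ 2 ≤ A * ((1 / 3 + ζ) * (2 / 5)) := by
    gcongr
    rw [sq]
    gcongr
    linarith
  push_cast at hk hk'
  linarith

lemma exists_abs_sub_half_le_of_two_mul {x ε : ℝ} {N : ℤ} (h : |2 * x - N| ≤ 2 * ε)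
    (hx : ε < |x - round x|) : ∃ n : ℤ, |x - (n + 1 / 2)| ≤ ε := by
  rw [abs_le] at h
  rcases N.even_or_odd' with ⟨n, rfl | rfl⟩ <;> push_cast at h
  · have : |x - n| ≤ ε := abs_le.2 ⟨by linarith, by linarith⟩
    linarith [round_le x n]
  · exact ⟨n, abs_le.2 ⟨by linarith, by linarith⟩⟩

lemma exists_of_planes_quarter {A lam D s y₄ : ℝ} (hAD : 2 * A < D) (hDA : D ≤ 3 * A)
    (hD : 0.5952 < D) (hsum : D + 3 / 4 * A ≤ 3 / 4)
    (h : ∀ l : ℤ, LineGap D (s + 1 / 4 * l ^ 2) A (y₄ + lam * l)) :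
    ∃ k n n' : ℤ, s + 1 / 4 + A + D ≤ k ∧ k ≤ s + A / 4 + 1 ∧
      |y₄ - (n + 1 / 2)| ≤ 0.0205 ∧ |y₄ + lam - n'| ≤ 0.0205 := by
  have hA : 0 < A := by linarith
  have h₀ : LineGap D s A y₄ := by simpa using h 0
  have hparallel (l : ℤ) (hl : (l : ℝ) ^ 2 = 1) := h₀.parallel (δ := 1 / 4)
    (V' := y₄ + lam * l) (by simpa [hl] using h l) hA hAD (by linarith) (by linarith)
  have hζ {v : ℝ} (hv : 6 * A * v ≤ 3 * A - D) : v ≤ 0.0205 := by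
    by_contra! hv'
    have : A * 0.0205 ≤ A * v := by gcongr
    linarith
  obtain ⟨hV₁, k, hk, hk'⟩ := hparallel 1 (by norm_num)
  obtain ⟨hV₂, -⟩ := hparallel (-1) (by norm_num)
  have hV₁' := hζ hV₁
  have hV₂' := hζ hV₂
  have hv : 0.45 < |y₄ - round y₄| := by
    by_contra! hv
    have : A * |y₄ - round y₄| ^ 2 ≤ A * 0.45 ^ 2 := by gcongr
    linarith
  have hv' : A * |y₄ - round y₄| ^ 2 ≤ A * (1 / 2) ^ 2 := by gcongr; exact abs_sub_round _
  push_cast at hV₁' hV₂'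
  set n₁ := round (y₄ + lam * 1)
  set n₂ := round (y₄ + lam * -1)
  obtain ⟨n, hn⟩ := exists_abs_sub_half_le_of_two_mul (x := y₄) (ε := 0.0205) (N := n₁ + n₂)
    (by rw [abs_le] at hV₁' hV₂' ⊢; push_cast; constructor <;> linarith) (by linarith)
  exact ⟨k, n, n₁, hk, by linarith, hn, by simpa using hV₁'⟩

lemma LineGap.exists_near_half {d s b y ε : ℝ} (h : LineGap d s b y) (hb : 0 ≤ b)
    (hε : 0 ≤ ε) {n k : ℤ} (hn : 1 ≤ n) (hk : s + b * n ^ 2 < k)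
    (hk' : k < s + b * (n - 1 / 2 + ε) ^ 2 + d) : ∃ N : ℤ, |y - (N + 1 / 2)| ≤ ε := by
  refine exists_abs_sub_half_le ?_
  by_contra! hz
  have hn' : (1 : ℝ) ≤ n := by exact_mod_cast hn
  have hz₀ := abs_nonneg (y - round y)
  have hstep := h.dist_round.int_sub_step n (k := k) (lt_of_le_of_lt (by gcongr <;> linarith) hk)
  have : b * (n - 1 / 2 + ε) ^ 2 ≤ b * (n - |y - round y|) ^ 2 := by gcongr <;> linarith
  linarith

lemma abs_sub_le_two_mul_of_near_half {x y ε : ℝ} {M N : ℤ} (hε : 4 * ε < 1)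
    (hx : |x - (M + 1 / 2)| ≤ ε) (hy : |y - (N + 1 / 2)| ≤ ε) (hxy : |x - y| ≤ 1 / 2) :
    |x - y| ≤ 2 * ε := by
  rw [abs_le] at hx hy hxy ⊢
  have hlt : M - N < 1 := by exact_mod_cast (by linarith : (M - N : ℝ) < 1)
  have hgt : -1 < M - N := by exact_mod_cast (by linarith : (-1 : ℝ) < M - N)
  obtain rfl : M = N := by omega
  constructor <;> linarith

lemma abs_slope_le_of_lines {a A d s y h₄ V : ℝ} {k n : ℤ} (ha₁ : 0.0992 < a) (ha₂ : a < 0.1017)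
    (hA₁ : 0.1984 < A) (hA₂ : A < 0.2065) (hd : 0.3968 < d) (hk₁ : s + 1.068 < k)
    (hk₂ : k < s + 1.078) (hV : |V - (n + 1 / 2)| ≤ 0.0205) (hh₄ : |h₄| ≤ 1 / 2)
    (h : ∀ j : ℤ, LineGap d (s + A * (V + j) ^ 2) a (y + h₄ * j)) : |h₄| ≤ 0.08 := by
  rw [abs_le] at hV
  have hline (j : ℤ) (hj : j = -n ∨ j = -n - 1) :
      ∃ N : ℤ, |y + h₄ * j - (N + 1 / 2)| ≤ 0.04 := by
    have hsq : 0.229 ≤ (V + j) ^ 2 ∧ (V + j) ^ 2 ≤ 0.271 := by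
      rcases hj with rfl | rfl <;> push_cast <;> constructor <;> nlinarith
    have hAsq₁ : 0.1984 * 0.229 ≤ A * (V + j) ^ 2 := by gcongr; exact hsq.1
    have hAsq₂ : A * (V + j) ^ 2 ≤ 0.2065 * 0.271 := by gcongr; exact hsq.2
    exact (h j).exists_near_half (by linarith) (by norm_num) (n := 3) (k := k) (by norm_num)
      (by push_cast; linarith) (by push_cast; linarith)
  obtain ⟨M, hM⟩ := hline (-n) (.inl rfl)
  obtain ⟨N, hN⟩ := hline (-n - 1) (.inr rfl)
  have hdiff : y + h₄ * (-n : ℤ) - (y + h₄ * (-n - 1 : ℤ)) = h₄ := by push_cast; ring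
  have := abs_sub_le_two_mul_of_near_half (by norm_num) hM hN (by rwa [hdiff])
  rw [hdiff] at this
  linarith

lemma not_lines_of_abs_slope_le {a A d s y h₄ V : ℝ} {k n : ℤ} (ha₁ : 0.0992 < a) (ha₂ : a < 0.1017)
    (hA₁ : 0.1984 < A) (hA₂ : A < 0.2065) (hd : 0.3968 < d) (hk₁ : s + 0.818 < k)
    (hk₂ : k < s + 0.828) (hV : |V - n| ≤ 0.0205) (hh₄ : |h₄| ≤ 0.08) :
    ¬ ∀ j : ℤ, LineGap d (s + A * (V + j) ^ 2) a (y + h₄ * j) := by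
  intro h
  rw [abs_le] at hV
  obtain ⟨N, hN⟩ : ∃ N : ℤ, |y + h₄ * (1 - n : ℤ) - (N + 1 / 2)| ≤ 0.07 := by
    have hsq : 0.959 ≤ (V + (1 - n : ℤ)) ^ 2 ∧ (V + (1 - n : ℤ)) ^ 2 ≤ 1.042 := by
      push_cast; constructor <;> nlinarith
    have hAsq₁ : 0.1984 * 0.959 ≤ A * (V + (1 - n : ℤ)) ^ 2 := by gcongr; exact hsq.1
    have hAsq₂ : A * (V + (1 - n : ℤ)) ^ 2 ≤ 0.2065 * 1.042 := by gcongr; exact hsq.2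
    exact (h _).exists_near_half (by linarith) (by norm_num) (n := 2) (k := k) (by norm_num)
      (by push_cast at *; linarith) (by push_cast at *; linarith)
  set x := y + h₄ * (-n : ℤ) + (2 - N : ℤ) with hx
  have hx' : 2.35 ≤ x ∧ x ≤ 2.65 := by
    rw [hx]
    rw [abs_le] at hN hh₄
    push_cast at hN ⊢
    constructor <;> linarith
  have hax₁ : 0.0992 * 2.35 ^ 2 ≤ a * x ^ 2 := by gcongr; exact hx'.1
  have hax₂ : a * x ^ 2 ≤ 0.1017 * 2.65 ^ 2 := by gcongr; exacts [by linarith, hx'.2]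
  have hsq : (V + (-n : ℤ)) ^ 2 ≤ 0.001 := by push_cast; nlinarith
  have hAsq₁ : 0 ≤ A * (V + (-n : ℤ)) ^ 2 := by positivity
  have hAsq₂ : A * (V + (-n : ℤ)) ^ 2 ≤ 0.2065 * 0.001 := by gcongr
  have := fract_le_one_sub_iff.1 (h (-n) (2 - N)) k (by linarith)
  linarith

lemma not_phiGap_of_quarter {a A lam h₄ h₅ d g y₃ y₄ : ℝ} (hda : d ≤ 4 * a)
    (hAD : 2 * A < d + 2 * a) (hDA : d + 2 * a ≤ 3 * A) (hd : 0.3968 < d)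
    (hsum : d + 2 * a + 3 / 4 * A ≤ 3 / 4) (hh₄ : |h₄| ≤ 1 / 2)
    (hplane : ∀ l : ℤ, LineGap (d + 2 * a) (a / 4 - g + 1 / 4 * l ^ 2) A (y₄ + lam * l)) :
    ¬ PhiGap a A (1 / 4) lam h₄ h₅ d g y₃ y₄ 0 := by
  intro h
  obtain ⟨k, n, n', hk, hk', hn, hn'⟩ :=
    exists_of_planes_quarter hAD hDA (by linarith) hsum hplane
  have hh₄' : |h₄| ≤ 0.08 := by
    refine abs_slope_le_of_lines (a := a) (A := A) (d := d) (s := -g) (y := y₃ + h₄ * y₄) (k := k)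
      (by linarith) (by linarith) (by linarith) (by linarith) hd (by linarith) (by linarith) hn hh₄
      fun j => ?_
    convert h.line j 0 using 1 <;> push_cast <;> ring
  refine not_lines_of_abs_slope_le (a := a) (A := A) (d := d) (s := 1 / 4 - g)
    (y := y₃ + h₄ * y₄ + h₅) (k := k) (by linarith) (by linarith) (by linarith) (by linarith) hd
    (by linarith) (by linarith) hn' hh₄' fun j => ?_
  convert h.line j 1 using 1 <;> push_cast <;> ring

lemma not_lineGap_eighth {y : ℝ} (k : ℤ) : ¬ LineGap (1 / 2) (k - 25 / 32) (1 / 8) y := by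
  intro h
  replace h := h.dist_round
  have hz := abs_sub_round y
  have hz₀ := abs_nonneg (y - round y)
  set z := |y - round y|
  have h₂ := h.climb_two_sub (by norm_num) (by norm_num) hz₀ hz (by linarith) (k := k)
    (by nlinarith)
  have hz₁ : z = 1 / 2 := by nlinarith
  have h₃ := h.int_add_step 3 (k := k + 1) (by rw [hz₁]; push_cast; linarith)
  rw [hz₁] at h₃
  push_cast at h₃
  linarith

lemma not_phiGap_of_eighth {lam h₄ h₅ g y₃ y₄ y₅ : ℝ} :
    ¬ PhiGap (1 / 8) (1 / 4) (1 / 2) lam h₄ h₅ (1 / 2) g y₃ y₄ y₅ := by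
  intro h
  set σ := 1 / 32 - g + 1 / 2 * y₅ ^ 2 with hσ
  have hplane : LineGap (3 / 4) σ (1 / 4) (y₄ + lam * y₅) := by
    convert h.plane_three (by norm_num) (by norm_num) 0 using 1 <;> norm_num [hσ]
  obtain ⟨-, hV⟩ := hplane.eq_quarter (by norm_num) (by norm_num)
  set N := ⌊y₄ + lam * y₅⌋
  have hN : y₄ + lam * y₅ = N := by rw [← Int.floor_add_fract (y₄ + lam * y₅), hV, add_zero]
  obtain ⟨k, hk, hk'⟩ := exists_int_add_mem_Ioc σ
  have hσk : σ + 1 = k := by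
    have h₀ := fract_le_one_sub_iff.1 (hplane (-N)) k
    have h₁ := fract_le_one_sub_iff.1 (hplane (1 - N)) k
    norm_num [hN] at h₀ h₁
    linarith [h₁ (by linarith [h₀ hk])]
  refine not_lineGap_eighth k (y := y₃ + h₄ * (y₄ + (1 - N : ℤ)) + h₅ * y₅) ?_
  convert h.line (1 - N) 0 using 1
  · have hV₁ : y₄ + (1 - N : ℤ) + lam * y₅ = 1 := by push_cast; linarith
    rw [← hσk, Int.cast_zero, add_zero, hV₁]
    ring
  · norm_num

lemma not_phiGap_three_two {a A t lam h₄ h₅ d g y₃ y₄ y₅ : ℝ} (ha : 0 < a) (hA : 0 < A) (ht : 0 < t)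
    (hdet : d ^ 5 = 2 * a * A * t) (hlam : |lam| ≤ 1 / 2) (hh₄ : |h₄| ≤ 1 / 2)
    (hAC : A ≤ t + A * lam ^ 2) (had : 3 * a < d) (hda : d ≤ 4 * a) (hAD : 2 * A < d + 2 * a)
    (hDA : d + 2 * a ≤ 3 * A) : ¬ PhiGap a A t lam h₄ h₅ d g y₃ y₄ y₅ := by
  intro h
  have hd : 0 < d := by linarith
  have hAt := three_quarters_mul_le hA hlam hAC
  have htd := mul_pow_le_of_det (ρ := 1) (D := d) (ν := 2) ht.le hd (by norm_num) (by norm_num)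
    zero_le_two hdet hda (by linarith) (by linarith)
  have htE := mul_pow_le_of_det (ρ := 15 / 8) (D := d + 2 * a + 3 / 4 * A) (ν := 15 / 4) ht.le hd
    (by norm_num) (by norm_num) (by norm_num) hdet hda (by linarith) (by linarith)
  have hheights : LineGap (d + 2 * a + 3 / 4 * A) (a / 4 - g + A / 4) t y₅ := fun l => by
    convert (h.plane_three ha had l).fract_add_quarter_le hA 2 (by push_cast; exact hAD) using 2
    · ring
    · push_cast; ring
  have hE : 0 < (d + 2 * a + 3 / 4 * A) ^ 3 := by positivity
  have hfract := h.fract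
  rcases hheights.eq_half_or_eq_sixth_or_eq_quarter ht (by linarith) (by linarith) with
    ⟨rfl, -⟩ | ⟨rfl, hsum, hy₅⟩ | ⟨rfl, hsum, hy₅⟩
  · have hd' : 1 / 2 ≤ d := by
      by_contra! hd'
      linarith [pow_lt_pow_left₀ hd' hd.le three_ne_zero]
    have hsum := hheights.le_one
    have hA' : A ≤ 1 / 4 := by
      by_contra! hA'
      linarith [((h.plane_three ha had 0).eq_half (by linarith) (by linarith)).1]
    obtain rfl : A = 1 / 4 := by linarith
    obtain rfl : a = 1 / 8 := by linarith
    obtain rfl : d = 1 / 2 := by linarith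
    exact not_phiGap_of_eighth h
  · have hd' : 0.3466 < d := lt_of_pow_lt_pow_left₀ 3 hd.le (by linarith)
    rw [hy₅] at hfract
    exact not_planes_of_sixth hAD hDA (by linarith) hsum (hfract.plane_three ha had)
  · have hd' : 0.3968 < d := lt_of_pow_lt_pow_left₀ 3 hd.le (by linarith)
    rw [hy₅] at hfract
    refine not_phiGap_of_quarter hda hAD hDA hd' hsum hh₄ (fun l => ?_) hfract
    simpa using hfract.plane_three ha had l

lemma PhiGap.exceptional {a A t lam h₄ h₅ d g y₃ y₄ y₅ : ℝ} {m K : ℤ}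
    (h : PhiGap a A t lam h₄ h₅ d g y₃ y₄ y₅) (ha : 0 < a) (hA : 0 < A)
    (hdet : d ^ 5 = 2 * a * A * t) (hlam : |lam| ≤ 1 / 2) (hh₄ : |h₄| ≤ 1 / 2) (hh₅ : |h₅| ≤ 1 / 2)
    (hAC : A ≤ t + A * lam ^ 2) (hm : (m : ℝ) < d / a ∧ d / a ≤ m + 1)
    (hK : (K : ℝ) < (d + ((m : ℝ) ^ 2 - 1) * a / 4) / A ∧
      (d + ((m : ℝ) ^ 2 - 1) * a / 4) / A ≤ K + 1)
    (hmK : (m = 4 ∧ K = 1) ∨ (m = 3 ∧ K = 2) ∨ (m = 3 ∧ K = 1)) :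
    (a = 1 / 6 ∧ A = 1 / 2 ∧ t = 1 / 2 ∧ lam = 0 ∧ h₄ = 0 ∧ h₅ = 0) ∧
      Int.fract y₃ = 1 / 2 ∧ Int.fract y₄ = 1 / 2 ∧ Int.fract y₅ = 1 / 2 := by
  have ht : 0 < t := by linarith [three_quarters_mul_le hA hlam hAC]
  rw [lt_div_iff₀ ha, div_le_iff₀ ha] at hm
  rw [lt_div_iff₀ hA, div_le_iff₀ hA] at hK
  obtain ⟨had, hda⟩ := hm
  obtain ⟨hAD, hDA⟩ := hK
  rcases hmK with ⟨rfl, rfl⟩ | ⟨rfl, rfl⟩ | ⟨rfl, rfl⟩ <;> push_cast at had hda hAD hDA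
  · exact absurd h (not_phiGap_four_one ha hA ht hdet hlam hAC had (by linarith) (by linarith)
      (by linarith))
  · exact absurd h (not_phiGap_three_two ha hA ht hdet hlam hh₄ hAC had (by linarith)
      (by linarith) (by linarith))
  · exact h.exceptional_of_three_one ha hA ht hdet hlam hh₄ hh₅ hAC had (by linarith)
      (by linarith) (by linarith)

/-! ### The exceptional form -/

/-- At half-integral points `24 φ` takes the values `U² + 3 V² + 3 W²` with `U, V, W` integers, and
on the layer `x₂ = 2` the values of `φ` matter modulo `2`, whence the modulus `48`. -/
lemma exists_sum_sq_emod_mem : ∀ α β γ ε : Fin 2, ∃ (u : Fin 5) (v w : Fin 2),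
    14 ≤ ((α + 2 * u) ^ 2 + 3 * (β + 2 * v) ^ 2 + 3 * (γ + 2 * w) ^ 2 + 24 * ε : ℤ) % 48 ∧
      ((α + 2 * u) ^ 2 + 3 * (β + 2 * v) ^ 2 + 3 * (γ + 2 * w) ^ 2 + 24 * ε : ℤ) % 48 ≤ 22 := by
  decide

lemma exists_eq_two_mul_add_fin_two (N : ℤ) : ∃ (M : ℤ) (α : Fin 2), N = 2 * M + α := by
  rcases N.even_or_odd' with ⟨M, rfl | rfl⟩
  exacts [⟨M, 0, by simp⟩, ⟨M, 1, by simp⟩]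

lemma exists_sum_sq_mem (U V W q : ℤ) : ∃ i j l n : ℤ,
    14 ≤ (U + 2 * i) ^ 2 + 3 * (V + 2 * j) ^ 2 + 3 * (W + 2 * l) ^ 2 + 24 * (q - 2 * n) ∧
      (U + 2 * i) ^ 2 + 3 * (V + 2 * j) ^ 2 + 3 * (W + 2 * l) ^ 2 + 24 * (q - 2 * n) ≤ 22 := by
  obtain ⟨U, α, rfl⟩ := exists_eq_two_mul_add_fin_two U
  obtain ⟨V, β, rfl⟩ := exists_eq_two_mul_add_fin_two V
  obtain ⟨W, γ, rfl⟩ := exists_eq_two_mul_add_fin_two W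
  obtain ⟨q, ε, rfl⟩ := exists_eq_two_mul_add_fin_two q
  obtain ⟨u, v, w, h⟩ := exists_sum_sq_emod_mem α β γ ε
  refine ⟨u - U, v - V, w - W, q + ((α + 2 * u) ^ 2 + 3 * (β + 2 * v) ^ 2 + 3 * (γ + 2 * w) ^ 2 +
    24 * ε : ℤ) / 48, ?_⟩
  rw [Int.emod_def] at h
  convert h using 2 <;> ring

lemma PhiGap.exists_level {d g y₃ y₄ y₅ : ℝ} (hd : 0.608 < d)
    (h : PhiGap (1 / 6) (1 / 2) (1 / 2) 0 0 0 d g y₃ y₄ y₅) (hy₃ : Int.fract y₃ = 1 / 2)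
    (hy₄ : Int.fract y₄ = 1 / 2) (hy₅ : Int.fract y₅ = 1 / 2) :
    ∃ k : ℤ, 15 / 24 + d ≤ g + k ∧ g + k ≤ 31 / 24 := by
  have hf := h.fract
  rw [hy₃, hy₄, hy₅] at hf
  obtain ⟨k, hk, hk'⟩ := exists_int_add_mem_Ioc (7 / 24 - g)
  have h₀ := fract_le_one_sub_iff.1 (hf 0 0 0) k
  have h₁ := fract_le_one_sub_iff.1 (hf 1 0 0) k
  norm_num [redPhi] at h₀ h₁
  have := h₀ (by linarith)
  have := h₁ (by linarith)
  exact ⟨k, by linarith, by linarith⟩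

/-- If the data `(g, y)` and `(g', y')` belong to the layers `x₂ = 1` and `x₂ = -1`, they are of the
form `(γ + c, z - p)` and `(γ - c, z + p)`, and `(3 g + g', (3 y - y') / 2) = (4 γ + 2 c, z - 2 p)`
belongs to the layer `x₂ = 2`. -/
lemma PhiGap.exists_mem_Ioo_double {d g g' y₃ y₄ y₅ y₃' y₄' y₅' : ℝ} (hd : 0.608 < d)
    (h : PhiGap (1 / 6) (1 / 2) (1 / 2) 0 0 0 d g y₃ y₄ y₅)
    (h' : PhiGap (1 / 6) (1 / 2) (1 / 2) 0 0 0 d g' y₃' y₄' y₅')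
    (hy : Int.fract y₃ = 1 / 2 ∧ Int.fract y₄ = 1 / 2 ∧ Int.fract y₅ = 1 / 2)
    (hy' : Int.fract y₃' = 1 / 2 ∧ Int.fract y₄' = 1 / 2 ∧ Int.fract y₅' = 1 / 2) :
    ∃ n i j l : ℤ, 2 * n + (3 * g + g') - redPhi (1 / 6) (1 / 2) (1 / 2) 0 0 0
      ((3 * y₃ - y₃') / 2 + i) ((3 * y₄ - y₄') / 2 + j) ((3 * y₅ - y₅') / 2 + l) ∈
        Set.Ioo 0 d := by
  obtain ⟨k, hk, hk'⟩ := h.exists_level hd hy.1 hy.2.1 hy.2.2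
  obtain ⟨k', hk₁, hk₁'⟩ := h'.exists_level hd hy'.1 hy'.2.1 hy'.2.2
  have hcentre {z z' : ℝ} (hz : Int.fract z = 1 / 2) (hz' : Int.fract z' = 1 / 2) :
      ∃ N : ℤ, (3 * z - z') / 2 = N / 2 := by
    refine ⟨3 * ⌊z⌋ - ⌊z'⌋ + 1, ?_⟩
    rw [← Int.self_sub_floor] at hz hz'
    push_cast
    linarith
  obtain ⟨U, hU⟩ := hcentre hy.1 hy'.1
  obtain ⟨V, hV⟩ := hcentre hy.2.1 hy'.2.1
  obtain ⟨W, hW⟩ := hcentre hy.2.2 hy'.2.2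
  obtain ⟨i, j, l, n, hlow, hup⟩ := exists_sum_sq_mem U V W (3 * k + k')
  refine ⟨n - 2, i, j, l, ?_⟩
  rw [hU, hV, hW]
  have hlow' : (14 : ℝ) ≤ (U + 2 * i) ^ 2 + 3 * (V + 2 * j) ^ 2 + 3 * (W + 2 * l) ^ 2 +
    24 * (3 * k + k' - 2 * n) := by exact_mod_cast hlow
  have hup' : (U + 2 * i) ^ 2 + 3 * (V + 2 * j) ^ 2 + 3 * (W + 2 * l) ^ 2 +
    24 * (3 * k + k' - 2 * n) ≤ (22 : ℝ) := by exact_mod_cast hup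
  rw [redPhi]
  push_cast
  constructor <;> linarith

/-! ### The layers `x₂ = 1, -1, 2` -/

lemma exists_redQ_eq_sub_redPhi {a A t lam h₄ h₅ a₂ a₃ a₄ a₅ : ℝ} (ha : a ≠ 0) (hA : A ≠ 0)
    (ht : t ≠ 0) : ∃ γ p₃ p₄ p₅ : ℝ, ∀ x₁ e x₃ x₄ x₅,
      redQ a A t lam h₄ h₅ a₂ a₃ a₄ a₅ x₁ e x₃ x₄ x₅ =
      e * x₁ + e ^ 2 * γ - redPhi a A t lam h₄ h₅ (x₃ - e * p₃) (x₄ - e * p₄) (x₅ - e * p₅) := by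
  set q₃ := a₃ / (2 * a)
  set q₄ := (a₄ - h₄ * a₃) / (2 * A)
  set p₅ := (a₅ - h₅ * a₃ - lam * (a₄ - h₄ * a₃)) / (2 * t)
  set p₄ := q₄ - lam * p₅ with hp₄
  set p₃ := q₃ - h₄ * p₄ - h₅ * p₅ with hp₃
  refine ⟨a₂ + redPhi a A t lam h₄ h₅ p₃ p₄ p₅, p₃, p₄, p₅, fun x₁ e x₃ x₄ x₅ => ?_⟩
  have h₃ : 2 * a * q₃ = a₃ := mul_div_cancel₀ _ (by positivity)
  have h₄' : 2 * A * q₄ = a₄ - h₄ * a₃ := mul_div_cancel₀ _ (by positivity)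
  have h₅' : 2 * t * p₅ = a₅ - h₅ * a₃ - lam * (a₄ - h₄ * a₃) := mul_div_cancel₀ _ (by positivity)
  rw [redQ, redPhi, redPhi, redPhi, hp₃, hp₄]
  linear_combination -e * (x₃ + h₄ * x₄ + h₅ * x₅) * h₃ - e * (x₄ + lam * x₅) * h₄' - e * x₅ * h₅'

lemma phiGap_of_forall_notMem {a A t lam h₄ h₅ d g y₃ y₄ y₅ : ℝ} (h : ∀ n i j l : ℤ,
      n + g - redPhi a A t lam h₄ h₅ (y₃ + i) (y₄ + j) (y₅ + l) ∉ Set.Ioo 0 d) :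
    PhiGap a A t lam h₄ h₅ d g y₃ y₄ y₅ := fun i j l => by
  refine fract_le_one_sub_iff.2 fun k hk => ?_
  by_contra! hkd
  exact h k i j l ⟨by linarith, by linarith⟩

lemma pow_five_eq_of_eq_rpow {d x : ℝ} (hx : 0 ≤ x) (hd : d = x ^ ((1 : ℝ) / 5)) : d ^ 5 = x := by
  rw [hd, ← Real.rpow_natCast, ← Real.rpow_mul hx]
  norm_num

/-- If no value on the layers `x₂ = 1` and `x₂ = -1` lies in `(0, d)`, then the form is the
exceptional one, and a value on the layer `x₂ = 2` does. -/
lemma exists_redQ_mem_Ioo {a A t lam h₄ h₅ a₂ a₃ a₄ a₅ d : ℝ} {m K : ℤ} (ha : 0 < a) (hA : 0 < A)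
    (hdet : d ^ 5 = 2 * a * A * t) (hlam : |lam| ≤ 1 / 2) (hh₄ : |h₄| ≤ 1 / 2) (hh₅ : |h₅| ≤ 1 / 2)
    (hAC : A ≤ t + A * lam ^ 2) (hm : (m : ℝ) < d / a ∧ d / a ≤ m + 1)
    (hK : (K : ℝ) < (d + ((m : ℝ) ^ 2 - 1) * a / 4) / A ∧
      (d + ((m : ℝ) ^ 2 - 1) * a / 4) / A ≤ K + 1)
    (hmK : (m = 4 ∧ K = 1) ∨ (m = 3 ∧ K = 2) ∨ (m = 3 ∧ K = 1)) (c₁ c₃ c₄ c₅ : ℝ) :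
    ∃ n e i j l : ℤ, redQ a A t lam h₄ h₅ a₂ a₃ a₄ a₅ (c₁ + n) e (c₃ + i) (c₄ + j) (c₅ + l) ∈
      Set.Ioo 0 d := by
  have ht : 0 < t := by linarith [three_quarters_mul_le hA hlam hAC]
  obtain ⟨γ, p₃, p₄, p₅, hQ⟩ := exists_redQ_eq_sub_redPhi (lam := lam) (h₄ := h₄) (h₅ := h₅)
    (a₂ := a₂) (a₃ := a₃) (a₄ := a₄) (a₅ := a₅) ha.ne' hA.ne' ht.ne'
  by_contra! hnot
  have h₁ : PhiGap a A t lam h₄ h₅ d (γ + c₁) (c₃ - p₃) (c₄ - p₄) (c₅ - p₅) :=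
    phiGap_of_forall_notMem fun n i j l => by
      convert hnot n 1 i j l using 1
      rw [hQ]
      push_cast
      ring_nf
  have h₂ : PhiGap a A t lam h₄ h₅ d (γ - c₁) (c₃ + p₃) (c₄ + p₄) (c₅ + p₅) :=
    phiGap_of_forall_notMem fun n i j l => by
      convert hnot (-n) (-1) i j l using 1
      rw [hQ]
      push_cast
      ring_nf
  obtain ⟨⟨rfl, rfl, rfl, rfl, rfl, rfl⟩, hy⟩ :=
    h₁.exceptional ha hA hdet hlam hh₄ hh₅ hAC hm hK hmK
  obtain ⟨-, hy'⟩ := h₂.exceptional ha hA hdet hlam hh₄ hh₅ hAC hm hK hmK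
  have hd : 0.608 < d := by
    by_contra! hd
    have hd₀ : 0 < d := (Odd.pow_pos_iff (by decide : Odd 5)).1 (by rw [hdet]; norm_num)
    have := pow_le_pow_left₀ hd₀.le hd 5
    norm_num [hdet] at this
  obtain ⟨n, i, j, l, hmem⟩ := h₁.exists_mem_Ioo_double hd h₂ hy hy'
  refine hnot n 2 i j l ?_
  convert hmem using 1
  rw [hQ]
  push_cast
  ring_nf

theorem thm4_general (a A t lam h₄ h₅ a₂ a₃ a₄ a₅ d : ℝ) (m K : ℤ) (ha : 0 < a) (hA : 0 < A)
    (hh₄ : |h₄| ≤ 1 / 2) (hh₅ : |h₅| ≤ 1 / 2) (hlam : |lam| ≤ 1 / 2) (hAC : A ≤ t + A * lam ^ 2)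
    (hd : d = (2 * a * A * t) ^ ((1 : ℝ) / 5)) (hm : (m : ℝ) < d / a ∧ d / a ≤ m + 1)
    (hK : (K : ℝ) < (d + ((m : ℝ) ^ 2 - 1) * a / 4) / A ∧
      (d + ((m : ℝ) ^ 2 - 1) * a / 4) / A ≤ K + 1)
    (hmK : (m = 4 ∧ K = 1) ∨ (m = 3 ∧ K = 2) ∨ (m = 3 ∧ K = 1))
    (c₁ c₂ c₃ c₄ c₅ : ℝ) (hc₂ : ∃ n : ℤ, (n : ℝ) = c₂) :
    ∃ x₁ x₂ x₃ x₄ x₅ : ℝ,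
      (∃ k : ℤ, x₁ - c₁ = k) ∧ (∃ k : ℤ, x₂ - c₂ = k) ∧ (∃ k : ℤ, x₃ - c₃ = k) ∧
      (∃ k : ℤ, x₄ - c₄ = k) ∧ (∃ k : ℤ, x₅ - c₅ = k) ∧
      0 < redQ a A t lam h₄ h₅ a₂ a₃ a₄ a₅ x₁ x₂ x₃ x₄ x₅ ∧
      redQ a A t lam h₄ h₅ a₂ a₃ a₄ a₅ x₁ x₂ x₃ x₄ x₅ < d := by
  have ht : 0 < t := by linarith [three_quarters_mul_le hA hlam hAC]
  have hdet := pow_five_eq_of_eq_rpow (by positivity) hd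
  obtain ⟨n₂, rfl⟩ := hc₂
  obtain ⟨n, e, i, j, l, hQ⟩ :=
    exists_redQ_mem_Ioo ha hA hdet hlam hh₄ hh₅ hAC hm hK hmK c₁ c₃ c₄ c₅
  exact ⟨c₁ + n, e, c₃ + i, c₄ + j, c₅ + l, ⟨n, add_sub_cancel_left _ _⟩,
    ⟨e - n₂, by push_cast; rfl⟩, ⟨i, add_sub_cancel_left _ _⟩, ⟨j, add_sub_cancel_left _ _⟩,
    ⟨l, add_sub_cancel_left _ _⟩, hQ⟩

theorem thm4 (a A t lam h₄ h₅ a₂ a₃ a₄ a₅ d : ℝ) (m K : ℤ)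
    (ha : 0 < a) (hA : 0 < A) (ht : 0 < t)
    (ha₂ : -1/2 < a₂ ∧ a₂ ≤ 1/2) (ha₃ : -1/2 < a₃ ∧ a₃ ≤ 1/2)
    (ha₄ : -1/2 < a₄ ∧ a₄ ≤ 1/2) (ha₅ : -1/2 < a₅ ∧ a₅ ≤ 1/2)
    (hh₄ : -1/2 < h₄ ∧ h₄ ≤ 1/2) (hh₅ : -1/2 < h₅ ∧ h₅ ≤ 1/2)
    (hlam : 0 ≤ lam ∧ lam ≤ 1/2) (hAC : A ≤ t + A * lam^2)
    (hmin_le : ∀ u v w : ℤ, ¬(u = 0 ∧ v = 0 ∧ w = 0) →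
      a ≤ redPhi a A t lam h₄ h₅ (u : ℝ) (v : ℝ) (w : ℝ))
    (hmin_eq : ∃ u v w : ℤ, ¬(u = 0 ∧ v = 0 ∧ w = 0) ∧
      redPhi a A t lam h₄ h₅ (u : ℝ) (v : ℝ) (w : ℝ) = a)
    (hd : d = (2 * a * A * t) ^ ((1 : ℝ)/5))
    (hm : (m : ℝ) < d / a ∧ d / a ≤ (m : ℝ) + 1)
    (hK : (K : ℝ) < (d + ((m : ℝ)^2 - 1) * a / 4) / A ∧
          (d + ((m : ℝ)^2 - 1) * a / 4) / A ≤ (K : ℝ) + 1)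
    (ha' : a < 1/2) (hd1 : d ≤ 1) (had : a + d ≤ 1)
    (hmK : (m = 4 ∧ K = 1) ∨ (m = 3 ∧ K = 2) ∨ (m = 3 ∧ K = 1))
    (c₁ c₂ c₃ c₄ c₅ : ℝ) (hc₂ : ∃ n : ℤ, (n : ℝ) = c₂) :
    ∃ x₁ x₂ x₃ x₄ x₅ : ℝ,
      (∃ k : ℤ, x₁ - c₁ = k) ∧ (∃ k : ℤ, x₂ - c₂ = k) ∧ (∃ k : ℤ, x₃ - c₃ = k) ∧
      (∃ k : ℤ, x₄ - c₄ = k) ∧ (∃ k : ℤ, x₅ - c₅ = k) ∧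
      0 < redQ a A t lam h₄ h₅ a₂ a₃ a₄ a₅ x₁ x₂ x₃ x₄ x₅ ∧
      redQ a A t lam h₄ h₅ a₂ a₃ a₄ a₅ x₁ x₂ x₃ x₄ x₅ < d :=
  thm4_general a A t lam h₄ h₅ a₂ a₃ a₄ a₅ d m K ha hA (abs_le.2 ⟨by linarith, hh₄.2⟩)
    (abs_le.2 ⟨by linarith, hh₅.2⟩) (abs_le.2 ⟨by linarith, hlam.2⟩) hAC hd hm hK hmK
    c₁ c₂ c₃ c₄ c₅ hc₂
end

section
/- Theorem 4′: With the reduced form Q, parameters d = (8|D|)^{1/5}, m, K as in the context, suppose the reals c_1, …, c_5 satisfy c_2 ∈ ℤ, and suppose a < 1/2, d ≤ 1, a + d ≤ 1, and (m, K) ∈ {(2,4), (2,3)}. Then there exist x_1, …, x_5 with x_i − c_i ∈ ℤ for every i such that 0 < Q(x_1,…,x_5) < d. -/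
/-!
The integer `x₂` may be fixed at will. For `x₂ = ±1`, completing squares turns the claim into the
solubility modulo one of `0 < C - φ(x₃, x₄, x₅) < d` on a translate of `ℤ³`. Write `φ` as a sum of
three squares with coefficients `a`, `A` and `t`. If `k a < d`, the parabola in `x₃` solves the
problem as soon as what remains for `x₄` and `x₅` lands, modulo one, in an interval of length
`d + (k² - 1) a / 4`. So the ternary problem reduces to a binary one with `d` replaced by this
length, and in the same way the binary problem reduces to a single parabola of curvature `t`. By an
argument of Macbeath that last problem is soluble unless `t` is one of the isolated values `1 / 2`,
`1 / 4`, `1 / 6`, and going back through the levels leaves a single critical configuration, with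
`a = 3 / 16`, `A = 1 / 6` and `t = 1 / 2`. If both `x₂ = 1` and `x₂ = -1` are critical, the
translate that belongs to `x₂ = 2` is half-integral, and there a solution is found by inspection.
-/

open Set

/-- Solubility of `0 < c - N x² + y < D` in reals `x ≡ q` and `y ≡ 0` modulo one: some value of a
parabola of curvature `N` lies in `(0, D)` modulo one. -/
def ParabolaHits (D N q c : ℝ) : Prop :=
  ∃ j n : ℤ, c - N * (j + q) ^ 2 + n ∈ Ioo 0 D

section ParabolaHits

variable {D N q c : ℝ}

lemma exists_add_intCast_mem_Ioc (x l : ℝ) : ∃ n : ℤ, x + n ∈ Ioc l (l + 1) := by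
  simpa using (existsUnique_add_zsmul_mem_Ioc one_pos x l).exists

lemma ParabolaHits.of_add_intCast {z : ℤ} (h : ParabolaHits D N q (c + z)) :
    ParabolaHits D N q c := by
  obtain ⟨j, n, h⟩ := h
  refine ⟨j, n + z, ?_⟩
  convert h using 1
  push_cast
  ring

lemma parabolaHits_add_intCast_left (z : ℤ) :
    ParabolaHits D N (q + z) c ↔ ParabolaHits D N q c := by
  refine (Equiv.addRight z).exists_congr fun j ↦ ?_
  simp [add_assoc, add_comm q]

lemma parabolaHits_neg : ParabolaHits D N (-q) c ↔ ParabolaHits D N q c := by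
  refine (Equiv.neg ℤ).exists_congr fun j ↦ ?_
  rw [show ((Equiv.neg ℤ j : ℤ) : ℝ) + q = -(j + -q) by push_cast [Equiv.neg_apply]; ring, neg_sq]

lemma le_of_not_parabolaHits (h : ¬ParabolaHits D N q c) {j n : ℤ}
    (h0 : 0 < c - N * (j + q) ^ 2 + n) : D ≤ c - N * (j + q) ^ 2 + n :=
  not_lt.1 fun hlt ↦ h ⟨j, n, h0, hlt⟩

lemma exists_parabolaHits_half_add_iff (k : ℤ) (q : ℝ) :
    ∃ e ∈ Icc (0 : ℝ) (1 / 2), ∀ D N c,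
      ParabolaHits D N (k / 2 + e) c ↔ ParabolaHits D N q c := by
  have hfloor := Int.self_sub_floor (q - k / 2)
  rcases le_or_gt (Int.fract (q - k / 2)) (1 / 2) with hle | hgt
  · refine ⟨Int.fract (q - k / 2), ⟨Int.fract_nonneg _, hle⟩, fun D N c ↦ ?_⟩
    rw [← parabolaHits_add_intCast_left ⌊q - k / 2⌋]
    congr! 1
    linarith
  · refine ⟨1 - Int.fract (q - k / 2), ⟨by linarith [Int.fract_lt_one (q - k / 2)], by linarith⟩,
      fun D N c ↦ ?_⟩
    rw [← parabolaHits_neg, ← parabolaHits_add_intCast_left (⌊q - k / 2⌋ + k + 1)]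
    congr! 1
    push_cast
    linarith

lemma parabolaHits_of_lt_of_lt (hN : 0 ≤ N) (k : ℕ) (hlow : N * ((k + 1) / 2) ^ 2 < c)
    (hupp : c < D + N * (k / 2) ^ 2) : ParabolaHits D N q c := by
  obtain ⟨e, ⟨he0, he1⟩, he⟩ := exists_parabolaHits_half_add_iff k q
  rw [← he]
  have h1 : N * (k / 2 + e) ^ 2 ≤ N * ((k + 1) / 2) ^ 2 := by gcongr; linarith
  have h2 : N * (k / 2) ^ 2 ≤ N * (k / 2 + e) ^ 2 := by gcongr; linarith
  refine ⟨0, 0, ?_, ?_⟩ <;> push_cast <;> rw [zero_add] <;> linarith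

end ParabolaHits

/-- The interval `(N / 4, N / 4 + L)` is a window if every parabola of curvature `N` whose
constant term lies in it takes a value in `(0, D)` modulo one. -/
def IsWindow (D N L : ℝ) : Prop :=
  ∀ q c : ℝ, c - N / 4 ∈ Ioo 0 L → ParabolaHits D N q c

section IsWindow

variable {D N L q c δ : ℝ}

lemma IsWindow.parabolaHits_or_sub (h : IsWindow D N L) (hδ : δ < L) (hδ' : 1 - δ < L)
    (q₁ q₂ c : ℝ) : ParabolaHits D N q₁ c ∨ ParabolaHits D N q₂ (c - δ) := by
  obtain ⟨n, hlow, hupp⟩ := exists_add_intCast_mem_Ioc c (N / 4)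
  rcases lt_or_ge (c + n) (N / 4 + L) with hlt | hge
  · exact .inl (h q₁ (c + n) ⟨by linarith, by linarith⟩).of_add_intCast
  · exact .inr ((h q₂ (c - δ + n) ⟨by linarith, by linarith⟩).of_add_intCast)

lemma IsWindow.parabolaHits (h : IsWindow D N L) (hL : 1 < L) : ParabolaHits D N q c := by
  simpa using h.parabolaHits_or_sub (δ := 0) (by linarith) (by linarith) q q c

lemma isWindow_of_mul_lt (hN : 0 ≤ N) {k : ℕ} (hk : k * N < D) :
    IsWindow D N (D + (k ^ 2 - 1) * N / 4) := by
  rintro q c ⟨hlow, hupp⟩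
  induction k with
  | zero => exact parabolaHits_of_lt_of_lt hN 0 (by norm_num; linarith) (by norm_num at *; linarith)
  | succ k ih =>
    push_cast at hk hupp
    rcases lt_or_ge c (D + N * (k / 2) ^ 2) with hlt | hge
    · exact ih (by linarith) (by linarith)
    · exact parabolaHits_of_lt_of_lt hN (k + 1) (by push_cast; linarith) (by push_cast; linarith)

/-- If `c` lies beyond the window of `isWindow_of_mul_lt` and is not hit, then it is trapped between
`D + N x²` and `N y²` for two points `x` and `y` of the progression next to distance `k / 2` from
the vertex. This pins down their offset, and the point `s` steps beyond `y` hits `(0, D) - M`. -/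
lemma isWindow_of_gap (hN : 0 ≤ N) {k s : ℕ} {M : ℤ} (hk0 : 1 ≤ k) (hk : k * N < D)
    (hM : M < s * (k + 1 + s) * N + s * (D / (k + 1)) + D)
    (hM' : (1 + s) * (k + 1 + s) * N < M + D) : IsWindow D N (D + (k ^ 2 + 2 * k) * N / 4) := by
  rintro q c ⟨hlow, hupp⟩
  by_contra hno
  obtain ⟨e, ⟨he0, he1⟩, he⟩ := exists_parabolaHits_half_add_iff k q
  rw [← he, Int.cast_natCast] at hno
  have hk1 : (1 : ℝ) ≤ k := mod_cast hk0
  have hs : (0 : ℝ) ≤ s := s.cast_nonneg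
  have above : D + N * (k / 2 + e) ^ 2 ≤ c := by
    have hc : D + (k ^ 2 - 1) * N / 4 + N / 4 ≤ c := by
      by_contra! hlt
      exact hno (isWindow_of_mul_lt hN hk _ _ ⟨hlow, by linarith⟩)
    have hsq : N * (k / 2 + e) ^ 2 ≤ N * (k ^ 2 / 4 + k) := by gcongr; nlinarith
    have := le_of_not_parabolaHits hno (j := 0) (n := 0) (by push_cast; rw [zero_add]; linarith)
    push_cast at this
    rw [zero_add] at this
    linarith
  have below : c ≤ N * (k / 2 + 1 - e) ^ 2 := by
    by_contra! hlt
    have hsq : N * ((k + 1) / 2) ^ 2 ≤ N * (k / 2 + 1 - e) ^ 2 := by gcongr; linarith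
    have := le_of_not_parabolaHits hno (j := -(k + 1)) (n := 0) (by push_cast; linarith)
    push_cast at this
    linarith
  have hoffset : 2 * (N * e) ≤ N - D / (k + 1) := by
    rw [le_sub_comm, div_le_iff₀ (by positivity)]
    linarith
  have hs_offset := mul_le_mul_of_nonneg_left hoffset hs
  have hks : 0 ≤ N * e * (k + 1 + s) := by positivity
  refine hno ⟨-(k + 1 + s), M, ?_, ?_⟩ <;> push_cast <;> linarith

lemma parabolaHits_of_gap (hN : 0 ≤ N) {k s : ℕ} {M : ℤ} (hk0 : 1 ≤ k) (hk : k * N < D)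
    (hM : M < s * (k + 1 + s) * N + s * (D / (k + 1)) + D)
    (hM' : (1 + s) * (k + 1 + s) * N < M + D) (hL : 1 < D + (k ^ 2 + 2 * k) * N / 4) :
    ParabolaHits D N q c :=
  (isWindow_of_gap hN hk0 hk hM hM').parabolaHits hL

end IsWindow

section Macbeath

variable {D N q c δ L : ℝ}

lemma exists_nat_sub_sq_mem_Ioo (hδ : 0 ≤ δ) (hL : 0 ≤ L) (hpos : 0 < δ + L)
    (hD : δ + 1 / 2 < D) (hL2 : L ≤ 1 / 2) (c : ℝ) :
    ∃ (i : ℕ) (n : ℤ), c - L * i - δ * i ^ 2 + n ∈ Ioo 0 D := by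
  by_contra! hno
  obtain ⟨n, hn0, hn1⟩ := exists_add_intCast_mem_Ioc c 0
  have hjump : ∀ i : ℕ, 0 < c - L * i - δ * i ^ 2 + n → D ≤ c - L * i - δ * i ^ 2 + n :=
    fun i h0 ↦ not_lt.1 fun hlt ↦ hno i n ⟨h0, hlt⟩
  have hstay : ∀ i : ℕ, D ≤ c - L * i - δ * i ^ 2 + n := by
    intro i
    induction i with
    | zero => exact hjump 0 (by push_cast; linarith)
    | succ i ih =>
      refine hjump (i + 1) ?_
      rcases Nat.eq_zero_or_pos i with rfl | hi
      · push_cast at *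
        linarith
      · have hi1 : (1 : ℝ) ≤ i := mod_cast hi
        have hLi : L ≤ L * i := le_mul_of_one_le_right hL hi1
        have hδi : δ * (2 * i) ≤ δ * (i ^ 2 + 1) := by gcongr; nlinarith [sq_nonneg ((i : ℝ) - 1)]
        push_cast
        linarith
  obtain ⟨i, hi⟩ := exists_nat_gt (1 / (δ + L))
  rw [div_lt_iff₀ hpos] at hi
  have hsq : δ * (i : ℝ) ≤ δ * i ^ 2 := by gcongr; exact mod_cast Nat.le_self_pow two_ne_zero i
  linarith [hstay i]

lemma exists_int_sub_sq_mem_Ioo (hD : |δ| + 1 / 2 < D) (hL : |L| ≤ 1 / 2)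
    (hne : δ ≠ 0 ∨ L ≠ 0) (c : ℝ) :
    ∃ i n : ℤ, c - L * i - δ * i ^ 2 + n ∈ Ioo 0 D := by
  have hpos : 0 < |δ| + |L| := by
    rcases hne with h | h <;> have := abs_pos.2 h <;> positivity
  have hfall : ∀ c, ∃ i n : ℤ, c - L * i - |δ| * i ^ 2 + n ∈ Ioo 0 D := by
    intro c
    obtain ⟨i, n, h⟩ := exists_nat_sub_sq_mem_Ioo (abs_nonneg δ) (abs_nonneg L) hpos hD hL c
    rcases abs_choice L with hL | hL
    · exact ⟨i, n, by rw [hL] at h; exact mod_cast h⟩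
    · exact ⟨-i, n, by rw [hL] at h; push_cast; convert h using 1; ring⟩
  rcases abs_choice δ with hδ | hδ
  · simpa only [hδ] using hfall c
  · obtain ⟨i, n, h0, h1⟩ := hfall (D - c)
    rw [hδ] at h0 h1
    exact ⟨-i, -n, by push_cast; constructor <;> linarith⟩

/-- Macbeath's argument: along the points `q + k i` the parabola is, modulo one, a sequence whose
second difference is close to zero, so it cannot jump over `(0, D)` unless it is constant. -/
lemma mul_sq_eq_and_exists_of_not_parabolaHits (k h : ℤ) (hkh : |N * k ^ 2 - h / 2| + 1 / 2 < D)
    (hno : ¬ParabolaHits D N q c) :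
    N * k ^ 2 = h / 2 ∧ ∃ z : ℤ, 2 * N * k * q = z + h / 2 := by
  set X := 2 * N * k * q - h / 2 with hX
  by_contra hcon
  have hne : N * k ^ 2 - h / 2 ≠ 0 ∨ X - round X ≠ 0 := by
    by_contra! hzero
    exact hcon ⟨by linarith, round X, by linarith⟩
  obtain ⟨i, n, hin⟩ := exists_int_sub_sq_mem_Ioo hkh (abs_sub_round X) hne (c - N * q ^ 2)
  obtain ⟨y, hy⟩ := Int.even_mul_succ_self i
  have hy' : (i : ℝ) * (i + 1) = y + y := mod_cast hy
  refine hno ⟨k * i, n + round X * i + h * y, ?_⟩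
  convert hin using 1
  push_cast
  linear_combination i * hX - (h / 2 : ℝ) * hy'

end Macbeath

section Isolated

variable {D N T r b q c : ℝ} {n : ℕ}

lemma lt_of_le_mul_pow (hD : 0 < D) (hr : 0 ≤ r) (hDN : D ≤ r * N) (hN : N ≤ T * D ^ (n + 1))
    (hb : r * T * b ^ n < 1) : b < D := by
  by_contra! hDb
  have hone : 1 ≤ r * T * D ^ n := by
    refine le_of_mul_le_mul_left ?_ hD
    calc D * 1 ≤ r * (T * D ^ (n + 1)) := by rw [mul_one]; exact hDN.trans (by gcongr)
      _ = D * (r * T * D ^ n) := by ring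
  have hrT : 0 < r * T := pos_of_mul_pos_left (by linarith) (by positivity : 0 ≤ D ^ n)
  have : r * T * D ^ n ≤ r * T * b ^ n := by gcongr
  linarith

lemma eq_half_of_not_parabolaHits (hD : 0 < D) (hDN : D ≤ 2 * N) (hN : N ≤ 0.7282 * D ^ 3)
    (hD1 : D ≤ 1) (hno : ¬ParabolaHits D N q c) : N = 1 / 2 ∧ ∃ z : ℤ, q = z + 1 / 2 := by
  have hlow : 0.828 < D := lt_of_le_mul_pow hD zero_le_two hDN hN (by norm_num)
  have hD3 : D ^ 3 ≤ 1 := pow_le_one₀ hD.le hD1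
  have habs : |N * (1 : ℤ) ^ 2 - (1 : ℤ) / 2| < D - 1 / 2 := by
    push_cast
    rw [abs_lt]
    constructor <;> linarith
  obtain ⟨hN2, z, hz⟩ := mul_sq_eq_and_exists_of_not_parabolaHits 1 1 (by linarith) hno
  push_cast at hN2 hz
  obtain rfl : N = 1 / 2 := by linarith
  exact ⟨rfl, z, by linarith⟩

lemma eq_quarter_of_not_parabolaHits (hDN : 2 * N < D) (hDN' : D ≤ 3 * N)
    (hN : N ≤ 0.7282 * D ^ 3) (hno : ¬ParabolaHits D N q c) :
    N = 1 / 4 ∧ ∃ z : ℤ, q = z := by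
  have hN0 : 0 < N := by linarith
  have hD : 0 < D := by linarith
  have hlow : 0.676 < D := lt_of_le_mul_pow hD zero_le_three hDN' hN (by norm_num)
  have hsum : D + 3 * N / 4 ≤ 1 := by
    by_contra! hlt
    exact hno ((isWindow_of_mul_lt hN0.le (k := 2) (mod_cast hDN)).parabolaHits
      (by norm_num; linarith))
  have h4N : 4 * N < D + 1 / 2 := by
    by_contra! hle
    have hD3 : D ^ 3 ≤ 0.7632 ^ 3 := by gcongr; linarith
    exact hno (parabolaHits_of_gap hN0.le (k := 2) (s := 1) (M := 2) one_le_two (mod_cast hDN)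
      (by norm_num; linarith) (by norm_num; linarith) (by norm_num; linarith))
  have habs : |N * (2 : ℤ) ^ 2 - (2 : ℤ) / 2| < D - 1 / 2 := by
    push_cast
    rw [abs_lt]
    constructor <;> linarith
  obtain ⟨hN4, z, hz⟩ := mul_sq_eq_and_exists_of_not_parabolaHits 2 2 (by linarith) hno
  push_cast at hN4 hz
  obtain rfl : N = 1 / 4 := by linarith
  exact ⟨rfl, z + 1, by push_cast; linarith⟩

lemma eq_sixth_of_not_parabolaHits (hDN : 3 * N < D) (hDN' : D ≤ 4 * N) (hN : N ≤ 0.82 * D ^ 3)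
    (hlow : 0.585 < D) (hno : ¬ParabolaHits D N q c) :
    N = 1 / 6 ∧ ∃ z : ℤ, q = z + 1 / 2 := by
  have hN0 : 0 ≤ N := by linarith
  have hsum : D + 2 * N ≤ 1 := by
    by_contra! hlt
    exact hno ((isWindow_of_mul_lt hN0 (k := 3) (mod_cast hDN)).parabolaHits
      (by norm_num; linarith))
  have h10N : 1 + D ≤ 10 * N := by
    by_contra! hlt
    exact hno (parabolaHits_of_gap hN0 (k := 3) (s := 1) (M := 1) (by norm_num) (mod_cast hDN)
      (by norm_num; linarith) (by norm_num; linarith) (by norm_num; linarith))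
  have h9N : 9 * N < 1 + D := by
    by_contra! hle
    have hlow' : 0.6 < D := by
      by_contra! hD6
      have hD3 : D * D ^ 2 ≤ D * 0.6 ^ 2 := by gcongr
      linarith
    exact hno (parabolaHits_of_gap hN0 (k := 3) (s := 2) (M := 3) (by norm_num) (mod_cast hDN)
      (by norm_num; linarith) (by norm_num; linarith) (by norm_num; linarith))
  have habs : |N * (3 : ℤ) ^ 2 - (3 : ℤ) / 2| < D - 1 / 2 := by
    push_cast
    rw [abs_lt]
    constructor <;> linarith
  obtain ⟨hN6, z, hz⟩ := mul_sq_eq_and_exists_of_not_parabolaHits 3 3 (by linarith) hno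
  push_cast at hN6 hz
  obtain rfl : N = 1 / 6 := by linarith
  exact ⟨rfl, z + 1, by push_cast; linarith⟩

lemma exists_nat_mul_lt_and_le (hN : 0 < N) (hD : 0 < D) :
    ∃ k : ℕ, k * N < D ∧ D ≤ (k + 1) * N := by
  obtain ⟨k, hk⟩ := Nat.exists_eq_succ_of_ne_zero (Nat.ceil_pos.2 (div_pos hD hN)).ne'
  obtain ⟨hlt, hle⟩ := (Nat.ceil_eq_iff k.succ_ne_zero).1 hk
  rw [Nat.succ_sub_one, lt_div_iff₀ hN] at hlt
  rw [Nat.cast_succ, div_le_iff₀ hN] at hle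
  exact ⟨k, hlt, hle⟩

lemma parabolaHits_of_le_mul_cube (hD : 0 < D) {k : ℕ} (hk : 1 ≤ k) (hkN : k * N < D)
    (hkN' : D ≤ (k + 1) * N) (hN : N ≤ T * D ^ 3) (hT : 16 * T * (k + 1) < (k + 3) ^ 2) :
    ParabolaHits D N q c := by
  have hk1 : (1 : ℝ) ≤ k := mod_cast hk
  have hlow : 4 / (k + 3) < D := by
    refine lt_of_le_mul_pow hD (by positivity) hkN' hN ?_
    rw [div_pow, mul_div_assoc', div_lt_one (by positivity)]
    linarith
  rw [div_lt_iff₀ (by positivity)] at hlow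
  have hN0 : 0 ≤ N := (pos_of_mul_pos_right (hD.trans_le hkN') (by positivity)).le
  have := mul_le_mul_of_nonneg_left hkN' (sub_nonneg.2 hk1)
  exact (isWindow_of_mul_lt hN0 hkN).parabolaHits (by linarith)

lemma parabolaHits_of_four_mul_lt (hN0 : 0 < N) (hDN : 4 * N < D) (hN : N ≤ 0.7282 * D ^ 3) :
    ParabolaHits D N q c := by
  have hD : 0 < D := by linarith
  obtain ⟨k, hk, hk'⟩ := exists_nat_mul_lt_and_le hN0 hD
  have hk4 : 4 ≤ k := by
    have : (4 : ℝ) < k + 1 := lt_of_mul_lt_mul_right (hDN.trans_le hk') hN0.le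
    exact Nat.lt_succ_iff.1 (mod_cast this)
  rcases le_or_gt 7 k with hk7 | hk7
  · have : (7 : ℝ) ≤ k := mod_cast hk7
    exact parabolaHits_of_le_mul_cube hD (by omega) hk hk' hN (by nlinarith)
  by_contra hno
  have hsum : D + (k ^ 2 - 1) * N / 4 ≤ 1 := by
    by_contra! hlt
    exact hno ((isWindow_of_mul_lt hN0.le hk).parabolaHits hlt)
  suffices (1 : ℝ) < (k + 2) * N + D / (k + 1) + D ∧ 2 * (k + 2) * N < 1 + D ∧
      1 < D + (k ^ 2 + 2 * k) * N / 4 by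
    obtain ⟨hM, hM', hL⟩ := this
    exact hno (parabolaHits_of_gap hN0.le (s := 1) (M := 1) (by omega) hk
      (by push_cast; linarith) (by push_cast; linarith) hL)
  interval_cases k
  · have hlow : 0.52401 < D := lt_of_le_mul_pow hD (by positivity) hk' hN (by norm_num)
    norm_num at *
    refine ⟨?_, ?_, ?_⟩ <;> linarith
  · have hlow : 0.478 < D := lt_of_le_mul_pow hD (by positivity) hk' hN (by norm_num)
    norm_num at *
    refine ⟨?_, ?_, ?_⟩ <;> linarith
  · have hlow : 0.4428 < D := lt_of_le_mul_pow hD (by positivity) hk' hN (by norm_num)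
    norm_num at *
    refine ⟨?_, ?_, ?_⟩ <;> linarith

lemma isolated_of_not_parabolaHits (hN0 : 0 < N) (hD : 0 < D) (hD1 : D ≤ 1)
    (hN : N ≤ 0.7282 * D ^ 3) (hno : ¬ParabolaHits D N q c) :
    (N = 1 / 2 ∧ ∃ z : ℤ, q = z + 1 / 2) ∨ (N = 1 / 4 ∧ ∃ z : ℤ, q = z) ∨
      (N = 1 / 6 ∧ ∃ z : ℤ, q = z + 1 / 2) := by
  rcases le_or_gt D (2 * N) with h2 | h2
  · exact .inl (eq_half_of_not_parabolaHits hD h2 hN hD1 hno)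
  rcases le_or_gt D (3 * N) with h3 | h3
  · exact .inr (.inl (eq_quarter_of_not_parabolaHits h2 h3 hN hno))
  rcases le_or_gt D (4 * N) with h4 | h4
  · have hlow : 0.585 < D := lt_of_le_mul_pow hD (by positivity) h4 hN (by norm_num)
    have : 0 ≤ D ^ 3 := by positivity
    exact .inr (.inr (eq_sixth_of_not_parabolaHits h3 h4 (by linarith) hlow hno))
  · exact absurd (parabolaHits_of_four_mul_lt hN0 h4 hN) hno

lemma isolated_of_not_parabolaHits_of_le (hN0 : 0 < N) (hD : 0 < D) (hD1 : D ≤ 1)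
    (hN : N ≤ 0.5733 * D ^ 3) (hno : ¬ParabolaHits D N q c) :
    (N = 1 / 2 ∧ ∃ z : ℤ, q = z + 1 / 2) ∨ (N = 1 / 6 ∧ ∃ z : ℤ, q = z + 1 / 2) := by
  have : 0 < D ^ 3 := by positivity
  rcases isolated_of_not_parabolaHits hN0 hD hD1 (by linarith) hno with h | ⟨rfl, -⟩ | h
  · exact .inl h
  · have hlow : 3 / 4 < D := lt_of_pow_lt_pow_left₀ 3 hD.le (by linarith)
    exact absurd ((isWindow_of_mul_lt hN0.le (k := 3) (by norm_num; linarith)).parabolaHits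
      (by norm_num; linarith)) hno
  · exact .inr h

end Isolated


/-- Solubility of `0 < C - A (x + lam y)² - t y² + z < D` in reals `x ≡ Q`, `y ≡ R` and `z ≡ 0`
modulo one. -/
def BinaryHits (D A t lam Q R C : ℝ) : Prop :=
  ∃ w : ℤ, ParabolaHits D A (Q + lam * (w + R)) (C - t * (w + R) ^ 2)

section BinaryHits

variable {D A t lam Q R C δ : ℝ}

lemma IsWindow.binaryHits {L : ℝ} (hW : IsWindow D A L) (h : ParabolaHits L t R (C - A / 4)) :
    BinaryHits D A t lam Q R C := by
  obtain ⟨w, n, h0, hL⟩ := h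
  exact ⟨w, (hW _ (C - t * (w + R) ^ 2 + n) ⟨by linarith, by linarith⟩).of_add_intCast⟩

lemma IsWindow.not_parabolaHits_and_le_one {L : ℝ} (hW : IsWindow D A L)
    (hno : ¬BinaryHits D A t lam Q R C) : ¬ParabolaHits L t R (C - A / 4) ∧ L ≤ 1 :=
  ⟨fun h ↦ hno (hW.binaryHits h), not_lt.1 fun h ↦ hno ⟨0, hW.parabolaHits h⟩⟩

lemma binaryHits_of_forall_or (h : ∀ q₁ q₂ c, ParabolaHits D A q₁ c ∨ ParabolaHits D A q₂ (c - δ))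
    (w₁ w₂ : ℤ) (hw : t * (w₂ + R) ^ 2 = t * (w₁ + R) ^ 2 + δ) : BinaryHits D A t lam Q R C := by
  rcases h (Q + lam * (w₁ + R)) (Q + lam * (w₂ + R)) (C - t * (w₁ + R) ^ 2) with h | h
  · exact ⟨w₁, h⟩
  · exact ⟨w₂, by rwa [hw, ← sub_sub]⟩

lemma parabolaHits_or_sub_of_three_mul_lt (hDA : 3 * A < D) (hDA' : D ≤ 4 * A) (hlow : 2 / 5 < D)
    (hδ : δ ≤ 1 / 2) (hδ' : 4 - 5 * δ < 6 * D) (q₁ q₂ c : ℝ) :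
    ParabolaHits D A q₁ c ∨ ParabolaHits D A q₂ (c - δ) := by
  have hA : 0 ≤ A := by linarith
  rcases lt_or_ge (1 - δ) (D + 2 * A) with hlt | hge
  · exact (isWindow_of_mul_lt hA (k := 3) (mod_cast hDA)).parabolaHits_or_sub
      (by norm_num; linarith) (by norm_num; linarith) q₁ q₂ c
  · exact (isWindow_of_gap hA (k := 3) (s := 1) (M := 1) (by norm_num) (mod_cast hDA)
      (by norm_num; linarith) (by norm_num; linarith)).parabolaHits_or_sub
      (by norm_num; linarith) (by norm_num; linarith) q₁ q₂ c

lemma parabolaHits_or_sub_third_of_four_mul_lt (hDA : 4 * A < D) (hDA' : D ≤ 5 * A)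
    (hlow : 0.378 < D) (q₁ q₂ c : ℝ) :
    ParabolaHits D A q₁ c ∨ ParabolaHits D A q₂ (c - 1 / 3) := by
  have hA : 0 ≤ A := by linarith
  have hW := isWindow_of_mul_lt hA (k := 4) (mod_cast hDA)
  norm_num at hW
  rcases lt_or_ge (2 / 3) (D + 15 * A / 4) with hlt | hge
  · exact hW.parabolaHits_or_sub (by linarith) (by linarith) q₁ q₂ c
  obtain ⟨n, hlow, hupp⟩ := exists_add_intCast_mem_Ioc c (A / 4)
  rcases lt_or_ge (c + n) (D + 4 * A) with h1 | h1
  · exact .inl (hW q₁ (c + n) ⟨by linarith, by linarith⟩).of_add_intCast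
  rcases lt_or_ge (c + n) (D + 4 * A + 1 / 3) with h2 | h2
  · exact .inr (hW q₂ (c - 1 / 3 + n) ⟨by linarith, by linarith⟩).of_add_intCast
  · exact .inl (parabolaHits_of_lt_of_lt hA 6 (c := c + n)
      (by norm_num; linarith) (by norm_num; linarith)).of_add_intCast

lemma le_mul_cube_of_mul_le {D' r s T : ℝ} (hA : 0 < A) (hD : 0 ≤ D) (hD' : 0 ≤ D') (hT : 0 ≤ T)
    (hAt : A * t ≤ T * D ^ 4) (hr : D ≤ r * D') (hs : D' ≤ s * A) :
    t ≤ T * r ^ 4 * s * D' ^ 3 := by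
  refine le_of_mul_le_mul_left ?_ hA
  calc A * t ≤ T * (r * D') ^ 4 := hAt.trans (by gcongr)
    _ = T * r ^ 4 * D' ^ 3 * D' := by ring
    _ ≤ T * r ^ 4 * D' ^ 3 * (s * A) := by gcongr
    _ = A * (T * r ^ 4 * s * D' ^ 3) := by ring

lemma binaryHits_of_four_mul_lt (hA : 0 < A) (ht : 0 < t) (hAt : A * t ≤ 0.6144 * D ^ 4)
    (hDA : 4 * A < D) (hDA' : D ≤ 5 * A) : BinaryHits D A t lam Q R C := by
  by_contra hno
  have hD : 0 < D := by linarith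
  have hW := isWindow_of_mul_lt hA.le (k := 4) (mod_cast hDA)
  norm_num at hW
  obtain ⟨hno', hL⟩ := hW.not_parabolaHits_and_le_one hno
  have ht' := le_mul_cube_of_mul_le (D' := D + 15 * A / 4) (r := 4 / 7) (s := 35 / 4) hA hD.le
    (by positivity) (by norm_num) hAt (by linarith) (by linarith)
  have : 0 ≤ (D + 15 * A / 4) ^ 3 := by positivity
  rcases isolated_of_not_parabolaHits_of_le ht (by positivity) hL (by linarith) hno' with
    ⟨rfl, -⟩ | ⟨rfl, z, rfl⟩
  · have hlow : 0.545 < D := lt_of_le_mul_pow (T := 1.2288) (n := 3) hD (by norm_num) hDA'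
      (by linarith) (by norm_num)
    exact hno ⟨0, parabolaHits_of_gap hA.le (k := 4) (s := 1) (M := 1) (by norm_num) (mod_cast hDA)
      (by norm_num; linarith) (by norm_num; linarith) (by norm_num; linarith)⟩
  · have hlow : 0.378 < D := lt_of_le_mul_pow (T := 3.6864) (n := 3) hD (by norm_num) hDA'
      (by linarith) (by norm_num)
    exact hno (binaryHits_of_forall_or (parabolaHits_or_sub_third_of_four_mul_lt hDA hDA' hlow)
      (-z) (1 - z) (by push_cast; ring))

lemma eq_half_and_eq_sixth_of_not_binaryHits (hA : 0 < A) (ht : 0 < t)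
    (hAt : A * t ≤ 0.6144 * D ^ 4) (hDA : 3 * A < D) (hDA' : D ≤ 4 * A)
    (hno : ¬BinaryHits D A t lam Q R C) :
    t = 1 / 2 ∧ A = 1 / 6 ∧ (∃ z : ℤ, R = z + 1 / 2) ∧
      ∀ w : ℤ, ∃ z : ℤ, Q + lam * (w + R) = z + 1 / 2 := by
  have hD : 0 < D := by linarith
  have hW := isWindow_of_mul_lt hA.le (k := 3) (mod_cast hDA)
  norm_num at hW
  obtain ⟨hno', hL⟩ := hW.not_parabolaHits_and_le_one hno
  have ht' := le_mul_cube_of_mul_le (D' := D + 8 * A / 4) (r := 2 / 3) (s := 6) hA hD.le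
    (by positivity) (by norm_num) hAt (by linarith) (by linarith)
  have : 0 ≤ (D + 8 * A / 4) ^ 3 := by positivity
  rcases isolated_of_not_parabolaHits ht (by positivity) hL (by linarith) hno' with
    ⟨rfl, hR⟩ | ⟨rfl, z, rfl⟩ | ⟨rfl, z, rfl⟩
  · have hlow : 0.585 < D := lt_of_le_mul_pow (T := 1.2288) (n := 3) hD (by norm_num) hDA'
      (by linarith) (by norm_num)
    have hD4 : D ^ 3 * D ≤ D ^ 3 * (2 / 3) := by gcongr; linarith
    have hw (w : ℤ) := eq_sixth_of_not_parabolaHits hDA hDA' (by linarith) hlow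
      fun h ↦ hno ⟨w, h⟩
    exact ⟨rfl, (hw 0).1, hR, fun w ↦ (hw w).2⟩
  · have hlow : 0.466 < D := lt_of_le_mul_pow (T := 2.4576) (n := 3) hD (by norm_num) hDA'
      (by linarith) (by norm_num)
    exact absurd (binaryHits_of_forall_or (δ := 1 / 4) (parabolaHits_or_sub_of_three_mul_lt hDA
      hDA' (by linarith) (by norm_num) (by linarith)) (-z) (1 - z) (by push_cast; ring)) hno
  · have hlow : 0.407 < D := lt_of_le_mul_pow (T := 3.6864) (n := 3) hD (by norm_num) hDA'
      (by linarith) (by norm_num)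
    exact absurd (binaryHits_of_forall_or (δ := 1 / 3) (parabolaHits_or_sub_of_three_mul_lt hDA
      hDA' (by linarith) (by norm_num) (by linarith)) (-z) (1 - z) (by push_cast; ring)) hno

end BinaryHits

/-- Solubility of `0 < C - φ(x₃, x₄, x₅) + y < d` in reals `x₃ ≡ P`, `x₄ ≡ Q`, `x₅ ≡ R` and `y ≡ 0`
modulo one, where `φ` is the ternary form `redPhi`. -/
def TernaryHits (d a A t lam h₄ h₅ P Q R C : ℝ) : Prop :=
  ∃ u v w n : ℤ, C + n - redPhi a A t lam h₄ h₅ (u + P) (v + Q) (w + R) ∈ Ioo 0 d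

section TernaryHits

variable {d a A t lam h₄ h₅ P Q R C : ℝ}

lemma ParabolaHits.ternaryHits {v w : ℤ}
    (h : ParabolaHits d a (P + h₄ * (v + Q) + h₅ * (w + R))
      (C - A * (v + Q + lam * (w + R)) ^ 2 - t * (w + R) ^ 2)) :
    TernaryHits d a A t lam h₄ h₅ P Q R C := by
  obtain ⟨u, n, h⟩ := h
  refine ⟨u, v, w, n, ?_⟩
  convert h using 1
  rw [redPhi]
  ring

lemma IsWindow.ternaryHits {L : ℝ} (hW : IsWindow d a L)
    (h : BinaryHits L A t lam Q R (C - a / 4)) : TernaryHits d a A t lam h₄ h₅ P Q R C := by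
  obtain ⟨w, v, n, h0, hL⟩ := h
  refine (hW _ (C - A * (v + Q + lam * (w + R)) ^ 2 - t * (w + R) ^ 2 + n)
    ⟨?_, ?_⟩).of_add_intCast.ternaryHits <;> linarith

lemma mul_le_of_pow_five_eq (ha : 0 < a) (hd : 0 ≤ d) (h5 : d ^ 5 = 2 * a * A * t)
    (hda : d ≤ 3 * a) : A * t ≤ 0.6144 * (d + 3 * a / 4) ^ 4 := by
  refine le_of_mul_le_mul_left ?_ ha
  have hd4 : d ^ 4 ≤ (0.8 * (d + 3 * a / 4)) ^ 4 := by gcongr; linarith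
  calc a * (A * t) = d ^ 4 * d / 2 := by linear_combination -h5 / 2
    _ ≤ (0.8 * (d + 3 * a / 4)) ^ 4 * (3 * a) / 2 := by gcongr
    _ = a * (0.6144 * (d + 3 * a / 4) ^ 4) := by ring

lemma eq_zero_of_abs_intCast_lt_one {z : ℤ} (hz : |(z : ℝ)| < 1) : z = 0 :=
  Int.abs_lt_one_iff.1 (mod_cast hz)

lemma eq_half_and_eq_sixth_of_not_ternaryHits (ha : 0 < a) (hA : 0 < A) (ht : 0 < t)
    (hlam : |lam| ≤ 1 / 2) (h5 : d ^ 5 = 2 * a * A * t) (hda : 2 * a < d) (hda' : d ≤ 3 * a)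
    (hAd : 3 * A < d + 3 * a / 4) (hAd' : d + 3 * a / 4 ≤ 5 * A)
    (hno : ¬TernaryHits d a A t lam h₄ h₅ P Q R C) :
    t = 1 / 2 ∧ A = 1 / 6 ∧ lam = 0 ∧ (∃ z : ℤ, Q = z + 1 / 2) ∧ (∃ z : ℤ, R = z + 1 / 2) ∧
      d + 3 * a / 4 ≤ 2 / 3 := by
  have hW := isWindow_of_mul_lt ha.le (k := 2) (mod_cast hda)
  norm_num at hW
  have hno' : ¬BinaryHits (d + 3 * a / 4) A t lam Q R (C - a / 4) := fun h ↦ hno (hW.ternaryHits h)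
  have hAt := mul_le_of_pow_five_eq ha (by linarith) h5 hda'
  rcases lt_or_ge (4 * A) (d + 3 * a / 4) with h4 | h4
  · exact absurd (binaryHits_of_four_mul_lt hA ht hAt h4 hAd') hno'
  obtain ⟨rfl, rfl, hR, hQ⟩ := eq_half_and_eq_sixth_of_not_binaryHits hA ht hAt hAd h4 hno'
  obtain ⟨z₀, hz₀⟩ := hQ 0
  obtain ⟨z₁, hz₁⟩ := hQ 1
  push_cast at hz₀ hz₁
  have hlam_eq : lam = (z₁ - z₀ : ℤ) := by push_cast; linarith
  obtain rfl : lam = 0 := by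
    rw [hlam_eq] at hlam ⊢
    exact mod_cast eq_zero_of_abs_intCast_lt_one (hlam.trans_lt (by norm_num))
  exact ⟨rfl, rfl, rfl, ⟨z₀, by linarith⟩, hR, by linarith⟩

end TernaryHits

section Critical

variable {d a q c P C h h₄ h₅ : ℝ}

lemma parabolaHits_abs_sub_intCast {D N : ℝ} (z : ℤ) :
    ParabolaHits D N |q - z| c ↔ ParabolaHits D N q c := by
  rw [← parabolaHits_add_intCast_left (-z) (q := q), Int.cast_neg, ← sub_eq_add_neg]
  rcases abs_choice (q - z) with hz | hz
  · rw [hz]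
  · rw [hz, parabolaHits_neg]

lemma exists_eq_intCast_of_forall_abs_sub_lt {x : ℝ}
    (hx : ∀ n : ℕ, ∃ z : ℤ, |x + n * h - z| < 1 / 6) : ∃ z : ℤ, h = z := by
  choose z hz using hx
  simp only [abs_lt] at hz
  have hadd (n : ℕ) : z (n + 1) - z n - (z 1 - z 0) = 0 := by
    have h0 := hz 0
    have h1 := hz 1
    have hn := hz n
    have hn1 := hz (n + 1)
    push_cast at h0 h1 hn1
    refine eq_zero_of_abs_intCast_lt_one ?_
    push_cast
    rw [abs_lt]
    constructor <;> linarith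
  have hmul (n : ℕ) : (z n : ℝ) = z 0 + n * (z 1 - z 0) := by
    induction n with
    | zero => simp
    | succ n ih =>
      have : (z (n + 1) - z n - (z 1 - z 0) : ℝ) = 0 := mod_cast hadd n
      push_cast
      linarith
  refine ⟨z 1 - z 0, ?_⟩
  by_contra hne
  obtain ⟨n, hn⟩ := exists_nat_gt (1 / 3 / |h - (z 1 - z 0 : ℤ)|)
  rw [div_lt_iff₀ (abs_pos.2 (sub_ne_zero.2 hne)), ← Nat.abs_cast, ← abs_mul] at hn
  refine hn.not_gt ?_
  have h0 := hz 0
  have hn := hz n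
  rw [hmul] at hn
  push_cast at h0 ⊢
  rw [abs_lt]
  constructor <;> linarith

lemma lt_and_lt_of_eq_six_mul_pow_five (hd : 0 < d) (had : a = 6 * d ^ 5) (hda : d ≤ 3 * a)
    (hsum : d + 3 * a / 4 ≤ 2 / 3) : 0.485 < d ∧ a < 0.2092 := by
  refine ⟨lt_of_le_mul_pow hd zero_le_three hda had.le (by norm_num), ?_⟩
  by_contra! ha
  have : d ^ 5 ≤ 0.5098 ^ 5 := by gcongr; linarith
  linarith

lemma offset_lt_of_not_parabolaHits (hlow : 0.485 < d) (had : a = 6 * d ^ 5) (hda : 2 * a < d)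
    (hda' : d ≤ 3 * a) (hc : d + a ≤ c) (hc' : c ≤ a / 4 + 2 / 3) (hno : ¬ParabolaHits d a q c) :
    1 / 2 ≤ d ∧ |q - round q| < 1 / 12 := by
  have he := abs_sub_round q
  rw [← parabolaHits_abs_sub_intCast (round q)] at hno
  set e := |q - round q|
  have : 0 ≤ e := abs_nonneg _
  have ha : 0 < a := by linarith
  have hae : a * e ≤ a * (1 / 2) := by gcongr
  have hae2 : a * e ^ 2 ≤ a * (1 / 2) ^ 2 := by gcongr
  have hae0 : 0 ≤ a * e := by positivity
  have hae20 : 0 ≤ a * e ^ 2 := by positivity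
  have above_one : d + a * (1 + e) ^ 2 ≤ c := by
    have := le_of_not_parabolaHits hno (j := 1) (n := 0) (by push_cast; linarith)
    push_cast at this
    linarith
  have below_two : c ≤ a * (2 - e) ^ 2 := by
    by_contra! hlt
    have := le_of_not_parabolaHits hno (j := -2) (n := 0) (by push_cast; linarith)
    push_cast at this
    linarith
  have below_three : c + 1 ≤ a * (3 - e) ^ 2 := by
    by_contra! hlt
    have := le_of_not_parabolaHits hno (j := -3) (n := 1) (by push_cast; linarith)
    push_cast at this
    linarith
  have hd2 : 1 / 2 ≤ d := by
    by_contra! hlt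
    have : d * d ^ 4 ≤ d * (1 / 2) ^ 4 := by gcongr
    linarith
  have : 6 * (1 / 2) ^ 5 ≤ a := by rw [had]; gcongr
  refine ⟨hd2, ?_⟩
  by_contra! hlt
  have : a * (1 / 12) ≤ a * e := by gcongr
  linarith

lemma eq_zero_and_eq_or_eq_of_forall_exists_abs_sub_lt (hh₄ : |h₄| ≤ 1 / 2) (hh₅ : |h₅| ≤ 1 / 2)
    (hdrift : ∀ k w : ℤ, ∃ z : ℤ, |P + h₄ * (3 * k + 3 / 2) + h₅ * (w + 1 / 2) - z| < 1 / 12) :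
    h₅ = 0 ∧ (h₄ = 0 ∨ h₄ = 1 / 3 ∨ h₄ = -1 / 3) := by
  obtain ⟨z₅, rfl⟩ : ∃ z : ℤ, h₅ = z :=
    exists_eq_intCast_of_forall_abs_sub_lt (x := P + h₄ * (3 / 2) + h₅ / 2) fun n ↦ by
      obtain ⟨z, hz⟩ := hdrift 0 n
      refine ⟨z, ?_⟩
      rw [abs_lt] at hz ⊢
      push_cast at hz
      constructor <;> linarith
  obtain ⟨z₄, hz₄⟩ : ∃ z : ℤ, 3 * h₄ = z :=
    exists_eq_intCast_of_forall_abs_sub_lt (x := P + h₄ * (3 / 2) + z₅ / 2) fun n ↦ by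
      obtain ⟨z, hz⟩ := hdrift n 0
      refine ⟨z, ?_⟩
      rw [abs_lt] at hz ⊢
      push_cast at hz
      constructor <;> linarith
  have hz₄_lt : |z₄| < 2 := by
    rw [← Int.cast_lt (R := ℝ), Int.cast_abs, ← hz₄, abs_mul, abs_of_pos three_pos]
    push_cast
    linarith
  refine ⟨mod_cast eq_zero_of_abs_intCast_lt_one (hh₅.trans_lt (by norm_num)), ?_⟩
  obtain ⟨hlow, hupp⟩ := abs_lt.1 hz₄_lt
  interval_cases z₄ <;> push_cast at hz₄
  · exact .inr (.inr (by linarith))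
  · exact .inl (by linarith)
  · exact .inr (.inl (by linarith))

lemma parabolaHits_of_abs_sub_intCast_lt {z : ℤ} (hd : 1 / 2 ≤ d) (ha : 3 / 16 ≤ a)
    (ha' : a < 0.2092) (hc : d + a + 1 / 3 ≤ c) (hc' : c ≤ a / 4 + 1) (hz : |q - z| < 1 / 12) :
    ParabolaHits d a q c := by
  rw [← parabolaHits_abs_sub_intCast z]
  set e := |q - z|
  have : 0 ≤ a := by linarith
  have : 0 ≤ e := abs_nonneg _
  have hlow : a * 2 ^ 2 ≤ a * (2 + e) ^ 2 := by gcongr; linarith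
  have hupp : a * (2 + e) ^ 2 ≤ a * (2 + 1 / 12) ^ 2 := by gcongr
  refine ⟨2, 0, ?_, ?_⟩ <;> push_cast <;> linarith

lemma eq_of_not_parabolaHits_add_sixth_of_not_parabolaHits_sub_sixth {z : ℤ} (hd : 1 / 2 ≤ d)
    (ha : 3 / 16 ≤ a) (ha' : a < 0.2092) (hc : d + a + 1 / 3 ≤ c) (hc' : c ≤ a / 4 + 1)
    (hz : |P + 1 / 2 - z| < 1 / 12) (hadd : ¬ParabolaHits d a (P + 1 / 6) c)
    (hsub : ¬ParabolaHits d a (P - 1 / 6) c) :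
    d = 1 / 2 ∧ a = 3 / 16 ∧ P + 1 / 2 = z ∧ c = 49 / 48 := by
  have hno : ¬ParabolaHits d a (|P + 1 / 2 - z| - 1 / 3) c := by
    rcases abs_choice (P + 1 / 2 - z) with h | h
    · rw [← parabolaHits_add_intCast_left (-z)] at hadd
      convert hadd using 2
      push_cast
      linarith
    · rw [← parabolaHits_add_intCast_left (1 - z), ← parabolaHits_neg] at hsub
      convert hsub using 2
      push_cast
      linarith
  have he0 := abs_nonneg (P + 1 / 2 - z)
  rw [← sub_eq_zero (a := P + 1 / 2), ← abs_eq_zero]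
  set e := |P + 1 / 2 - z|
  have hae : a * e ≤ a * (1 / 12) := by gcongr
  have hae2 : a * e ^ 2 ≤ a * (1 / 12) ^ 2 := by gcongr
  have hae0 : 3 / 16 * e ≤ a * e := by gcongr
  have : 0 ≤ a * e ^ 2 := by positivity
  have below_two : c ≤ a * (7 / 3 - e) ^ 2 := by
    by_contra! hlt
    have := le_of_not_parabolaHits hno (j := -2) (n := 0) (by push_cast; linarith)
    push_cast at this
    linarith
  have above_four : d + a * (11 / 3 + e) ^ 2 ≤ c + 2 := by
    have := le_of_not_parabolaHits hno (j := 4) (n := 2) (by push_cast; linarith)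
    push_cast at this
    linarith
  have he : e = 0 := by linarith
  rw [he] at below_two above_four
  refine ⟨?_, ?_, he, ?_⟩ <;> linarith

lemma not_parabolaHits_of_forall_not_parabolaHits
    (hno : ∀ v w : ℤ, ¬ParabolaHits d a (P + h₄ * (v + 1 / 2) + h₅ * (w + 1 / 2))
      (C - (v + 1 / 2) ^ 2 / 6 - (w + 1 / 2) ^ 2 / 2)) (k w : ℤ) :
    ¬ParabolaHits d a (P + h₄ * (3 * k + 3 / 2) + h₅ * (w + 1 / 2)) (C - 1 / 2) := by
  obtain ⟨y, hy⟩ := Int.even_mul_succ_self k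
  obtain ⟨x, hx⟩ := Int.even_mul_succ_self w
  have hy' : (k : ℝ) * (k + 1) = y + y := mod_cast hy
  have hx' : (w : ℝ) * (w + 1) = x + x := mod_cast hx
  refine fun h ↦ hno (3 * k + 1) w (ParabolaHits.of_add_intCast (z := 3 * y + x) ?_)
  convert h using 1 <;> push_cast
  · ring
  · linear_combination (-3 / 2) * hy' - hx' / 2

lemma le_and_exists_abs_sub_lt_of_forall_not_parabolaHits (hlow : 0.485 < d)
    (had : a = 6 * d ^ 5) (hda : 2 * a < d) (hda' : d ≤ 3 * a)
    (hC : C - 1 / 6 ∈ Ioc (a / 4) (a / 4 + 1))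
    (hno : ∀ v w : ℤ, ¬ParabolaHits d a (P + h₄ * (v + 1 / 2) + h₅ * (w + 1 / 2))
      (C - (v + 1 / 2) ^ 2 / 6 - (w + 1 / 2) ^ 2 / 2)) :
    d + a ≤ C - 1 / 2 ∧ 1 / 2 ≤ d ∧ ∀ k w : ℤ, ∃ z : ℤ,
      |P + h₄ * (3 * k + 3 / 2) + h₅ * (w + 1 / 2) - z| < 1 / 12 := by
  obtain ⟨hC0, hC1⟩ := hC
  have hW := isWindow_of_mul_lt (N := a) (by linarith) (k := 2) (mod_cast hda)
  norm_num at hW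
  have hfar := not_parabolaHits_of_forall_not_parabolaHits hno
  have hC2 : d + a ≤ C - 1 / 6 := by
    by_contra! hlt
    refine hno 0 0 (hW _ _ ⟨?_, ?_⟩) <;> push_cast <;> linarith
  have hC3 : d + a ≤ C - 1 / 2 := by
    by_contra! hlt
    refine hfar 0 0 (hW _ _ ⟨?_, ?_⟩) <;> linarith
  have hoffset (k w : ℤ) :=
    offset_lt_of_not_parabolaHits hlow had hda hda' hC3 (by linarith) (hfar k w)
  exact ⟨hC3, (hoffset 0 0).1, fun k w ↦ ⟨_, (hoffset k w).2⟩⟩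

lemma eq_of_forall_not_parabolaHits (hd : 0 < d) (had : a = 6 * d ^ 5) (hda : 2 * a < d)
    (hda' : d ≤ 3 * a) (hsum : d + 3 * a / 4 ≤ 2 / 3) (hh₄ : |h₄| ≤ 1 / 2) (hh₅ : |h₅| ≤ 1 / 2)
    (hC : C - 1 / 6 ∈ Ioc (a / 4) (a / 4 + 1))
    (hno : ∀ v w : ℤ, ¬ParabolaHits d a (P + h₄ * (v + 1 / 2) + h₅ * (w + 1 / 2))
      (C - (v + 1 / 2) ^ 2 / 6 - (w + 1 / 2) ^ 2 / 2)) :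
    d = 1 / 2 ∧ a = 3 / 16 ∧ h₅ = 0 ∧ (h₄ = 1 / 3 ∨ h₄ = -1 / 3) ∧ (∃ z : ℤ, P = z + 1 / 2) ∧
      C = 19 / 16 := by
  obtain ⟨hlow, ha_lt⟩ := lt_and_lt_of_eq_six_mul_pow_five hd had hda' hsum
  obtain ⟨hC3, hd2, hdrift⟩ :=
    le_and_exists_abs_sub_lt_of_forall_not_parabolaHits hlow had hda hda' hC hno
  have ha : 3 / 16 ≤ a := by
    have : 6 * (1 / 2) ^ 5 ≤ a := by rw [had]; gcongr
    linarith
  obtain ⟨rfl, hh₄⟩ := eq_zero_and_eq_or_eq_of_forall_exists_abs_sub_lt hh₄ hh₅ hdrift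
  obtain ⟨z, hz⟩ := hdrift 0 0
  have h0 : ¬ParabolaHits d a (P + h₄ / 2) (C - 1 / 6) := by
    convert hno 0 0 using 1
    norm_num
    ring_nf
  have h1 : ¬ParabolaHits d a (P - h₄ / 2) (C - 1 / 6) := by
    convert hno (-1) 0 using 1
    norm_num
    ring_nf
  have hsixth {z : ℤ} := eq_of_not_parabolaHits_add_sixth_of_not_parabolaHits_sub_sixth (P := P)
    (z := z) hd2 ha ha_lt (by linarith : d + a + 1 / 3 ≤ C - 1 / 6) (by linarith [hC.2])
  rcases hh₄ with rfl | rfl | rfl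
  · refine absurd (parabolaHits_of_abs_sub_intCast_lt (z := z) hd2 ha ha_lt ?_ ?_ ?_) h0
    · linarith
    · linarith [hC.2]
    · convert hz using 2
      ring
  · obtain ⟨hd, ha, hP, hC⟩ := hsixth (z := z) (by convert hz using 2; push_cast; ring)
      (by convert h0 using 2; norm_num) (by convert h1 using 2; norm_num)
    exact ⟨hd, ha, rfl, .inl rfl, ⟨z - 1, by push_cast; linarith⟩, by linarith⟩
  · obtain ⟨hd, ha, hP, hC⟩ := hsixth (z := z + 1) (by convert hz using 2; push_cast; ring)
      (by convert h1 using 2; ring) (by convert h0 using 2; ring)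
    exact ⟨hd, ha, rfl, .inr rfl, ⟨z, by push_cast at hP; linarith⟩, by linarith⟩

end Critical

/-- The one configuration in which the ternary problem `TernaryHits` has no solution. The form
`16 φ` is then `3 x₃² ± 2 x₃ x₄ + 3 x₄² + 8 x₅²`. -/
structure IsCritical (d a A t lam h₄ h₅ P Q R C : ℝ) : Prop where
  d_eq : d = 1 / 2
  a_eq : a = 3 / 16
  A_eq : A = 1 / 6
  t_eq : t = 1 / 2
  lam_eq : lam = 0
  h₅_eq : h₅ = 0
  h₄_eq : h₄ = 1 / 3 ∨ h₄ = -1 / 3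
  P_half : ∃ z : ℤ, P = z + 1 / 2
  Q_half : ∃ z : ℤ, Q = z + 1 / 2
  R_half : ∃ z : ℤ, R = z + 1 / 2
  C_eq : ∃ z : ℤ, C = z + 3 / 16

section IsCritical

variable {d a A t lam h₄ h₅ P Q R C : ℝ}

lemma isCritical_of_not_ternaryHits (ha : 0 < a) (hA : 0 < A) (ht : 0 < t) (hlam : |lam| ≤ 1 / 2)
    (hh₄ : |h₄| ≤ 1 / 2) (hh₅ : |h₅| ≤ 1 / 2) (h5 : d ^ 5 = 2 * a * A * t) (hda : 2 * a < d)
    (hda' : d ≤ 3 * a) (hAd : 3 * A < d + 3 * a / 4) (hAd' : d + 3 * a / 4 ≤ 5 * A)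
    (hno : ¬TernaryHits d a A t lam h₄ h₅ P Q R C) : IsCritical d a A t lam h₄ h₅ P Q R C := by
  obtain ⟨rfl, rfl, rfl, ⟨y, rfl⟩, ⟨x, rfl⟩, hsum⟩ :=
    eq_half_and_eq_sixth_of_not_ternaryHits ha hA ht hlam h5 hda hda' hAd hAd' hno
  obtain ⟨n, hn⟩ := exists_add_intCast_mem_Ioc (C - 1 / 6) (a / 4)
  have hfibre (v w : ℤ) : ¬ParabolaHits d a (P + h₄ * (v + 1 / 2) + h₅ * (w + 1 / 2))
      (C + n - (v + 1 / 2) ^ 2 / 6 - (w + 1 / 2) ^ 2 / 2) := by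
    refine fun h ↦ hno (ParabolaHits.ternaryHits (v := v - y) (w := w - x)
      (ParabolaHits.of_add_intCast (z := n) ?_))
    convert h using 1 <;> push_cast <;> ring
  obtain ⟨hd, ha, hh₅, hh₄, hP, hC⟩ := eq_of_forall_not_parabolaHits (by linarith) (by linarith)
    hda hda' hsum hh₄ hh₅ (by rwa [add_sub_right_comm]) hfibre
  exact ⟨hd, ha, rfl, rfl, rfl, hh₅, hh₄, hP, ⟨y, rfl⟩, ⟨x, rfl⟩, 1 - n, by push_cast; linarith⟩

end IsCritical

section Quinary

variable {a A t lam h₄ h₅ d : ℝ}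

lemma exists_redQ_eq (ha : a ≠ 0) (hA : A ≠ 0) (ht : t ≠ 0) (lam h₄ h₅ a₂ a₃ a₄ a₅ : ℝ) :
    ∃ s₃ s₄ s₅ F : ℝ, ∀ x₁ x₂ x₃ x₄ x₅, redQ a A t lam h₄ h₅ a₂ a₃ a₄ a₅ x₁ x₂ x₃ x₄ x₅ =
      x₂ * x₁ + x₂ ^ 2 * F -
        redPhi a A t lam h₄ h₅ (x₃ - x₂ * s₃) (x₄ - x₂ * s₄) (x₅ - x₂ * s₅) := by
  set b₄ := a₄ - a₃ * h₄ with hb₄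
  set s₅ := (a₅ - a₃ * h₅ - lam * b₄) / (2 * t) with hs₅
  set s₄ := b₄ / (2 * A) - lam * s₅ with hs₄
  refine ⟨a₃ / (2 * a) - h₄ * s₄ - h₅ * s₅, s₄, s₅,
    a₂ + redPhi a A t lam h₄ h₅ (a₃ / (2 * a) - h₄ * s₄ - h₅ * s₅) s₄ s₅,
    fun x₁ x₂ x₃ x₄ x₅ ↦ ?_⟩
  simp only [redQ, redPhi, hs₄, hs₅, hb₄]
  field_simp
  ring

lemma exists_ternary_mem_Ioo (p q r E : ℤ) :
    ∃ u v w k : ℤ, 3 * (p + 2 * u) ^ 2 + 2 * (p + 2 * u) * (q + 2 * v) + 3 * (q + 2 * v) ^ 2 +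
      8 * (r + 2 * w) ^ 2 - 64 * (E + 2 * k) ∈ Ioo 16 48 := by
  have hres : ∀ p ∈ Finset.Ico (0 : ℤ) 2, ∀ q ∈ Finset.Ico (0 : ℤ) 2, ∀ r ∈ Finset.Ico (0 : ℤ) 2,
      ∀ E ∈ Finset.Ico (0 : ℤ) 2, ∃ u ∈ Finset.Icc (-3 : ℤ) 0, ∃ v ∈ Finset.Icc (-1 : ℤ) 1,
      ∃ w ∈ Finset.Icc (-2 : ℤ) 0, 3 * (p + 2 * u) ^ 2 + 2 * (p + 2 * u) * (q + 2 * v) +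
        3 * (q + 2 * v) ^ 2 + 8 * (r + 2 * w) ^ 2 - 64 * E ∈ Ioo 16 48 := by
    simp only [mem_Ioo]
    decide
  have hmod (n : ℤ) : n % 2 ∈ Finset.Ico (0 : ℤ) 2 :=
    Finset.mem_Ico.2 ⟨Int.emod_nonneg n two_ne_zero, Int.emod_lt_of_pos n two_pos⟩
  obtain ⟨u, -, v, -, w, -, h⟩ := hres _ (hmod p) _ (hmod q) _ (hmod r) _ (hmod E)
  have hsplit (n x : ℤ) : n + 2 * (x - n / 2) = n % 2 + 2 * x := by omega
  refine ⟨u - p / 2, v - q / 2, w - r / 2, 0 - E / 2, ?_⟩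
  simpa only [hsplit, mul_zero, add_zero] using h

lemma exists_redPhi_mem_Ioo (hh₄ : h₄ = 1 / 3 ∨ h₄ = -1 / 3) (p q r E : ℤ) :
    ∃ u v w k : ℤ, E + 3 / 4 + 2 * k -
      redPhi (3 / 16) (1 / 6) (1 / 2) 0 h₄ 0 (u + p / 2) (v + q / 2) (w + r / 2) ∈
        Ioo 0 (1 / 2) := by
  simp only [redPhi]
  rcases hh₄ with rfl | rfl
  · obtain ⟨u, v, w, k, hlow, hupp⟩ := exists_ternary_mem_Ioo p q r E
    rify at hlow hupp
    exact ⟨u, v, w, k, by linarith, by linarith⟩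
  · obtain ⟨u, v, w, k, hlow, hupp⟩ := exists_ternary_mem_Ioo p (-q) r E
    rify at hlow hupp
    exact ⟨u, -v, w, k, by push_cast; linarith, by push_cast; linarith⟩

lemma exists_two_mul_of_isCritical {c₁ c₃ c₄ c₅ s₃ s₄ s₅ F : ℝ}
    (hpos : IsCritical d a A t lam h₄ h₅ (c₃ - s₃) (c₄ - s₄) (c₅ - s₅) (c₁ + F))
    (hneg : IsCritical d a A t lam h₄ h₅ (c₃ + s₃) (c₄ + s₄) (c₅ + s₅) (-c₁ + F)) :
    ∃ u v w k : ℤ, 2 * (c₁ + k) + 2 ^ 2 * F - redPhi a A t lam h₄ h₅ (u + (c₃ - 2 * s₃))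
      (v + (c₄ - 2 * s₄)) (w + (c₅ - 2 * s₅)) ∈ Ioo 0 d := by
  obtain ⟨rfl, rfl, rfl, rfl, rfl, rfl, hh₄, ⟨p, hp⟩, ⟨q, hq⟩, ⟨r, hr⟩, ⟨z, hz⟩⟩ := hpos
  obtain ⟨-, -, -, -, -, -, -, ⟨p', hp'⟩, ⟨q', hq'⟩, ⟨r', hr'⟩, ⟨z', hz'⟩⟩ := hneg
  obtain ⟨u, v, w, k, h⟩ := exists_redPhi_mem_Ioo hh₄ (3 * p - p' + 1) (3 * q - q' + 1)
    (3 * r - r' + 1) (3 * z + z')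
  refine ⟨u, v, w, k, ?_⟩
  convert h using 2
  · push_cast
    linarith
  · congr 1 <;> push_cast <;> linarith

theorem thm4prime_general (ha : 0 < a) (hA : 0 < A) (ht : 0 < t) (hh₄ : |h₄| ≤ 1 / 2)
    (hh₅ : |h₅| ≤ 1 / 2) (hlam : |lam| ≤ 1 / 2) (hd : d ^ 5 = 2 * a * A * t) (hda : 2 * a < d)
    (hda' : d ≤ 3 * a) (hAd : 3 * A < d + 3 * a / 4) (hAd' : d + 3 * a / 4 ≤ 5 * A)
    (a₂ a₃ a₄ a₅ c₁ c₂ c₃ c₄ c₅ : ℝ) (hc₂ : ∃ n : ℤ, (n : ℝ) = c₂) :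
    ∃ x₁ x₂ x₃ x₄ x₅ : ℝ,
      (∃ k : ℤ, x₁ - c₁ = k) ∧ (∃ k : ℤ, x₂ - c₂ = k) ∧ (∃ k : ℤ, x₃ - c₃ = k) ∧
      (∃ k : ℤ, x₄ - c₄ = k) ∧ (∃ k : ℤ, x₅ - c₅ = k) ∧
      0 < redQ a A t lam h₄ h₅ a₂ a₃ a₄ a₅ x₁ x₂ x₃ x₄ x₅ ∧
      redQ a A t lam h₄ h₅ a₂ a₃ a₄ a₅ x₁ x₂ x₃ x₄ x₅ < d := by
  obtain ⟨n, rfl⟩ := hc₂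
  obtain ⟨s₃, s₄, s₅, F, hQ⟩ := exists_redQ_eq ha.ne' hA.ne' ht.ne' lam h₄ h₅ a₂ a₃ a₄ a₅
  suffices ∃ e u v w k : ℤ, e * (c₁ + k) + e ^ 2 * F - redPhi a A t lam h₄ h₅
      (u + (c₃ - e * s₃)) (v + (c₄ - e * s₄)) (w + (c₅ - e * s₅)) ∈ Ioo 0 d by
    obtain ⟨e, u, v, w, k, h⟩ := this
    refine ⟨c₁ + k, e, u + c₃, v + c₄, w + c₅, ⟨k, by ring⟩, ⟨e - n, by push_cast; ring⟩,
      ⟨u, by ring⟩, ⟨v, by ring⟩, ⟨w, by ring⟩, ?_⟩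
    rw [← mem_Ioo]
    simpa only [hQ, add_sub_assoc] using h
  by_contra hno
  have hcrit (e : ℤ) (he : e ^ 2 = 1) :
      IsCritical d a A t lam h₄ h₅ (c₃ - e * s₃) (c₄ - e * s₄) (c₅ - e * s₅) (e * c₁ + F) := by
    refine isCritical_of_not_ternaryHits ha hA ht hlam hh₄ hh₅ hd hda hda' hAd hAd' ?_
    rintro ⟨u, v, w, k, h⟩
    refine hno ⟨e, u, v, w, e * k, ?_⟩
    have he' : (e : ℝ) ^ 2 = 1 := mod_cast he
    convert h using 2
    push_cast
    linear_combination (F + k) * he'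
  obtain ⟨u, v, w, k, h⟩ := exists_two_mul_of_isCritical (by simpa using hcrit 1 rfl)
    (by simpa using hcrit (-1) rfl)
  exact hno ⟨2, u, v, w, k, mod_cast h⟩

end Quinary

theorem thm4prime (a A t lam h₄ h₅ a₂ a₃ a₄ a₅ d : ℝ) (m K : ℤ)
    (ha : 0 < a) (hA : 0 < A) (ht : 0 < t)
    (ha₂ : -1/2 < a₂ ∧ a₂ ≤ 1/2) (ha₃ : -1/2 < a₃ ∧ a₃ ≤ 1/2)
    (ha₄ : -1/2 < a₄ ∧ a₄ ≤ 1/2) (ha₅ : -1/2 < a₅ ∧ a₅ ≤ 1/2)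
    (hh₄ : -1/2 < h₄ ∧ h₄ ≤ 1/2) (hh₅ : -1/2 < h₅ ∧ h₅ ≤ 1/2)
    (hlam : 0 ≤ lam ∧ lam ≤ 1/2) (hAC : A ≤ t + A * lam^2)
    (hmin_le : ∀ u v w : ℤ, ¬(u = 0 ∧ v = 0 ∧ w = 0) →
      a ≤ redPhi a A t lam h₄ h₅ (u : ℝ) (v : ℝ) (w : ℝ))
    (hmin_eq : ∃ u v w : ℤ, ¬(u = 0 ∧ v = 0 ∧ w = 0) ∧
      redPhi a A t lam h₄ h₅ (u : ℝ) (v : ℝ) (w : ℝ) = a)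
    (hd : d = (2 * a * A * t) ^ ((1 : ℝ)/5))
    (hm : (m : ℝ) < d / a ∧ d / a ≤ (m : ℝ) + 1)
    (hK : (K : ℝ) < (d + ((m : ℝ)^2 - 1) * a / 4) / A ∧
          (d + ((m : ℝ)^2 - 1) * a / 4) / A ≤ (K : ℝ) + 1)
    (ha' : a < 1/2) (hd1 : d ≤ 1) (had : a + d ≤ 1)
    (hmK : (m = 2 ∧ K = 4) ∨ (m = 2 ∧ K = 3))
    (c₁ c₂ c₃ c₄ c₅ : ℝ) (hc₂ : ∃ n : ℤ, (n : ℝ) = c₂) :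
    ∃ x₁ x₂ x₃ x₄ x₅ : ℝ,
      (∃ k : ℤ, x₁ - c₁ = k) ∧ (∃ k : ℤ, x₂ - c₂ = k) ∧ (∃ k : ℤ, x₃ - c₃ = k) ∧
      (∃ k : ℤ, x₄ - c₄ = k) ∧ (∃ k : ℤ, x₅ - c₅ = k) ∧
      0 < redQ a A t lam h₄ h₅ a₂ a₃ a₄ a₅ x₁ x₂ x₃ x₄ x₅ ∧
      redQ a A t lam h₄ h₅ a₂ a₃ a₄ a₅ x₁ x₂ x₃ x₄ x₅ < d := by
  obtain ⟨rfl, hK34⟩ : m = 2 ∧ (K = 4 ∨ K = 3) := by tauto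
  rw [lt_div_iff₀ ha, div_le_iff₀ ha] at hm
  rw [lt_div_iff₀ hA, div_le_iff₀ hA] at hK
  obtain ⟨hm_lt, hm_le⟩ := hm
  obtain ⟨hK_lt, hK_le⟩ := hK
  push_cast at hm_lt hm_le hK_lt hK_le
  have hKA : 3 * A < d + 3 * a / 4 ∧ d + 3 * a / 4 ≤ 5 * A := by
    rcases hK34 with rfl | rfl <;> push_cast at hK_lt hK_le <;> constructor <;> linarith
  have hd5 : d ^ 5 = 2 * a * A * t := by
    rw [hd, ← Real.rpow_mul_natCast (by positivity)]
    norm_num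
  exact thm4prime_general ha hA ht (abs_le.2 ⟨by linarith, hh₄.2⟩) (abs_le.2 ⟨by linarith, hh₅.2⟩)
    (abs_le.2 ⟨by linarith, hlam.2⟩) hd5 hm_lt (by linarith) hKA.1 hKA.2 a₂ a₃ a₄ a₅
    c₁ c₂ c₃ c₄ c₅ hc₂
end
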